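/- arXiv:2103.02865 — 4 statements merged into one kernel-verified Lean document; each statement's English description precedes it below -/
import Mathlib

section
/- Fix n ≥ 1 and let f : Sⁿ → ℝ be a continuous nonnegative antipodally symmetric function. Then ∫_{Sⁿ} fⁿ dσ ≥ (σ(Sⁿ)/πⁿ)·L(f)ⁿ; equivalently, the volume (1/2)∫_{Sⁿ} fⁿ dσ of real projective n-space ℝPⁿ with the conformal metric f²·g₀ is at least (σ(Sⁿ)/(2πⁿ)) times the n-th power of its systole L(f), which is the systolic ratio of the round metric on ℝPⁿ. (Generalized Pu inequality for ℝPⁿ.) -/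
open MeasureTheory Set

noncomputable section

/-- A function `γ : ℝ → ℝ^{n+1}` is piecewise `C¹` on `[0,1]`: there is a partition
`0 = u₀ ≤ u₁ ≤ ⋯ ≤ u_k = 1` such that `γ` is `C¹` on each subinterval. -/
def IsPiecewiseC1 (n : ℕ) (γ : ℝ → EuclideanSpace ℝ (Fin (n + 1))) : Prop :=
  ∃ (k : ℕ) (u : Fin (k + 1) → ℝ), u 0 = 0 ∧ u (Fin.last k) = 1 ∧ Monotone u ∧
    ∀ i : Fin k, ContDiffOn ℝ 1 γ (Set.Icc (u i.castSucc) (u i.succ))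

/-- A piecewise `C¹` path on `[0,1]` lying on the unit sphere `Sⁿ ⊆ ℝ^{n+1}`. -/
def IsSpherePath (n : ℕ) (γ : ℝ → EuclideanSpace ℝ (Fin (n + 1))) : Prop :=
  IsPiecewiseC1 n γ ∧
    ∀ t ∈ Set.Icc (0 : ℝ) 1, γ t ∈ Metric.sphere (0 : EuclideanSpace ℝ (Fin (n + 1))) 1

/-- The `f`-length of a path `γ` on the sphere: `∫₀¹ f(γ(t)) ‖γ'(t)‖ dt`. -/
def fLength (n : ℕ) (f : EuclideanSpace ℝ (Fin (n + 1)) → ℝ)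
    (γ : ℝ → EuclideanSpace ℝ (Fin (n + 1))) : ℝ :=
  ∫ t in Set.Icc (0 : ℝ) 1, f (γ t) * ‖deriv γ t‖

/-- The systole `L(f)`: the infimum of `f`-lengths of piecewise `C¹` paths on the sphere
joining a pair of antipodal points. -/
def systole (n : ℕ) (f : EuclideanSpace ℝ (Fin (n + 1)) → ℝ) : ℝ :=
  sInf { l | ∃ γ : ℝ → EuclideanSpace ℝ (Fin (n + 1)),
    IsSpherePath n γ ∧ γ 1 = -γ 0 ∧ l = fLength n f γ }


/-- The orthogonal group (as unitary operators) of a finite dimensional space is compact. -/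
lemma pu_compact (E : Type*) [NormedAddCommGroup E] [InnerProductSpace ℝ E]
    [FiniteDimensional ℝ E] : CompactSpace (unitary (E →L[ℝ] E)) := by
  have : ProperSpace (E →L[ℝ] E) := FiniteDimensional.proper ℝ _
  refine (isCompact_iff_compactSpace (s := (unitary (E →L[ℝ] E) : Set (E →L[ℝ] E)))).1 ?_
  refine Metric.isCompact_of_isClosed_isBounded isClosed_unitary ?_
  refine (Metric.isBounded_closedBall (x := (0 : E →L[ℝ] E)) (r := 1)).subset ?_
  intro u hu
  rw [mem_closedBall_zero_iff]
  refine ContinuousLinearMap.opNorm_le_bound _ zero_le_one fun x => ?_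
  have := (Unitary.linearIsometryEquiv (⟨u, hu⟩ : unitary (E →L[ℝ] E))).norm_map x
  rw [one_mul]
  exact this.le

/-- The orthogonal group of `E`. -/
abbrev PuG (E : Type*) [NormedAddCommGroup E] [InnerProductSpace ℝ E]
    [FiniteDimensional ℝ E] : Type _ := unitary (E →L[ℝ] E)

set_option maxHeartbeats 400000 in
/-- Averaging over the orthogonal group. -/
lemma pu_average {E : Type*} [NormedAddCommGroup E] [InnerProductSpace ℝ E]
    [FiniteDimensional ℝ E] [MeasurableSpace E] [BorelSpace E]
    (F : BoundedContinuousFunction E ℝ) (d : ℝ) (c : ℝ → E) (hc : Continuous c)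
    (hcS : ∀ t, ‖c t‖ = 1)
    (hfin : μH[d] (Metric.sphere (0 : E) 1) ≠ ⊤) (a : ℝ)
    (hL : ∀ g : E ≃ₗᵢ[ℝ] E, a ≤ ∫ t in Icc (0 : ℝ) 1, F (g (c t))) :
    (μH[d] (Metric.sphere (0 : E) 1)).toReal * a ≤
      ∫ x in Metric.sphere (0 : E) 1, F x ∂μH[d] := by
  have := pu_compact E
  have : ProperSpace E := FiniteDimensional.proper ℝ _
  have : ProperSpace (E →L[ℝ] E) := FiniteDimensional.proper ℝ _
  let : MeasurableSpace (PuG E) := borel (PuG E)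
  have : BorelSpace (PuG E) := ⟨rfl⟩
  have : SecondCountableTopology (E →L[ℝ] E) := inferInstance
  have : SecondCountableTopology (PuG E) := TopologicalSpace.Subtype.secondCountableTopology _
  obtain ⟨m, hm1, hm2⟩ : ∃ m : Measure (PuG E), IsProbabilityMeasure m ∧ m.IsMulLeftInvariant := by
    refine ⟨Measure.haarMeasure ⊤, ⟨?_⟩, inferInstance⟩
    have := Measure.haarMeasure_self (K₀ := (⊤ : TopologicalSpace.PositiveCompacts (PuG E)))
    simpa using this
  set S := Metric.sphere (0 : E) 1 with hS
  have : Fact (μH[d] S < ⊤) := ⟨hfin.lt_top⟩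
  have hact : Continuous fun p : PuG E × E => F (((p.1⁻¹ : PuG E) : E →L[ℝ] E) p.2) := by
    refine F.continuous.comp ?_
    exact (continuous_subtype_val.comp (continuous_inv.comp continuous_fst)).clm_apply
      continuous_snd
  obtain ⟨A, hA⟩ : ∃ A : E → ℝ, ∀ x, A x = ∫ g, F (((g⁻¹ : PuG E) : E →L[ℝ] E) x) ∂m :=
    ⟨_, fun _ => rfl⟩
  have hAinv : ∀ (h : PuG E) (x : E), A ((h : E →L[ℝ] E) x) = A x := by
    intro h x
    have := integral_mul_left_eq_self (μ := m)
      (fun g : PuG E => F (((g⁻¹ : PuG E) : E →L[ℝ] E) x)) h⁻¹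
    rw [hA, hA, ← this]
    simp [mul_inv_rev]
  have hAconst : ∀ x y : E, ‖x‖ = 1 → ‖y‖ = 1 → A x = A y := by
    intro x y hx hy
    have h1 := Submodule.reflection_sub (v := x) (w := y) (by rw [hx, hy])
    have h2 := hAinv (Unitary.linearIsometryEquiv.symm (Submodule.reflection (ℝ ∙ (x - y))ᗮ)) x
    rw [← h2]
    exact congrArg A h1
  have hσ : ∀ g : PuG E, ∫ x in S, F ((g : E →L[ℝ] E) x) ∂μH[d] = ∫ x in S, F x ∂μH[d] := by
    intro g
    let e : E ≃ₗᵢ[ℝ] E := Unitary.linearIsometryEquiv g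
    have hp := e.toIsometryEquiv.measurePreserving_hausdorffMeasure d
    have hemb : MeasurableEmbedding e.toIsometryEquiv :=
      e.toHomeomorph.measurableEmbedding
    have := hp.setIntegral_preimage_emb hemb (fun x => F x) S
    rw [← this]
    have hpre : e.toIsometryEquiv ⁻¹' S = S := by
      ext x
      simp [hS]
    rw [hpre]
    rfl
  -- the value of the constant
  have hint1 : Integrable (fun p : PuG E × E => F (((p.1⁻¹ : PuG E) : E →L[ℝ] E) p.2))
      (m.prod (μH[d].restrict S)) :=
    Integrable.of_bound hact.aestronglyMeasurable ‖F‖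
      (Filter.Eventually.of_forall fun p => F.norm_coe_le_norm _)
  have hcact : Continuous fun p : PuG E × ℝ => F (((p.1⁻¹ : PuG E) : E →L[ℝ] E) (c p.2)) :=
    F.continuous.comp ((continuous_subtype_val.comp
      (continuous_inv.comp continuous_fst)).clm_apply (hc.comp continuous_snd))
  have hint2 : Integrable (fun p : PuG E × ℝ => F (((p.1⁻¹ : PuG E) : E →L[ℝ] E) (c p.2)))
      (m.prod (volume.restrict (Icc (0:ℝ) 1))) :=
    Integrable.of_bound hcact.aestronglyMeasurable ‖F‖
      (Filter.Eventually.of_forall fun p => F.norm_coe_le_norm _)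
  have hswap1 := integral_integral_swap
    (f := fun (g : PuG E) (x : E) => F (((g⁻¹ : PuG E) : E →L[ℝ] E) x)) hint1
  have hswap2 := integral_integral_swap
    (f := fun (g : PuG E) (t : ℝ) => F (((g⁻¹ : PuG E) : E →L[ℝ] E) (c t))) hint2
  have e1 : ∫ x in S, A x ∂μH[d] = ∫ x in S, F x ∂μH[d] := by
    simp_rw [hA]
    rw [← hswap1]
    simp_rw [hσ]
    simp
  have e2 : ∫ x in S, A x ∂μH[d] = (μH[d] S).toReal * A (c 0) := by
    rw [setIntegral_congr_fun (g := fun _ => A (c 0)) Metric.isClosed_sphere.measurableSet]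
    · simp [Measure.real, hS]
    · intro x hx
      exact hAconst _ _ (by simpa [hS] using hx) (hcS 0)
  have e3 : ∫ t in Icc (0:ℝ) 1, A (c t) = A (c 0) := by
    simp_rw [fun t => hAconst (c t) (c 0) (hcS t) (hcS 0)]
    simp
  have e4 : a ≤ ∫ t in Icc (0:ℝ) 1, A (c t) := by
    simp_rw [hA]
    rw [← hswap2]
    calc a = ∫ _ : PuG E, a ∂m := by simp
      _ ≤ _ := by
        refine integral_mono (integrable_const _) hint2.integral_prod_left fun g => ?_
        exact hL (Unitary.linearIsometryEquiv g⁻¹)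
  rw [← e1, e2, ← e3]
  exact mul_le_mul_of_nonneg_left e4 ENNReal.toReal_nonneg

/-- The half great circle. -/
def puCircle (n : ℕ) (hn : 1 ≤ n) (t : ℝ) : EuclideanSpace ℝ (Fin (n + 1)) :=
  Real.cos (Real.pi * t) • EuclideanSpace.single 0 (1 : ℝ) +
    Real.sin (Real.pi * t) • EuclideanSpace.single ⟨1, by omega⟩ (1 : ℝ)

lemma pu_norm (n : ℕ) (hn : 1 ≤ n) (a b : ℝ) :
    ‖a • (EuclideanSpace.single 0 (1 : ℝ) : EuclideanSpace ℝ (Fin (n + 1))) +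
      b • EuclideanSpace.single ⟨1, by omega⟩ (1 : ℝ)‖ ^ 2 = a ^ 2 + b ^ 2 := by
  rw [norm_add_sq_real]
  simp [norm_smul, inner_smul_left, inner_smul_right, EuclideanSpace.inner_single_left]

lemma puCircle_norm (n : ℕ) (hn : 1 ≤ n) (t : ℝ) : ‖puCircle n hn t‖ = 1 := by
  have := pu_norm n hn (Real.cos (Real.pi * t)) (Real.sin (Real.pi * t))
  rw [Real.cos_sq_add_sin_sq] at this
  exact (pow_eq_one_iff_of_nonneg (norm_nonneg _) two_ne_zero).1 this

lemma puCircle_contDiff (n : ℕ) (hn : 1 ≤ n) : ContDiff ℝ 1 (puCircle n hn) := by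
  unfold puCircle
  fun_prop

lemma puCircle_deriv (n : ℕ) (hn : 1 ≤ n)
    (g : EuclideanSpace ℝ (Fin (n + 1)) ≃ₗᵢ[ℝ] EuclideanSpace ℝ (Fin (n + 1))) (t : ℝ) :
    ‖deriv (fun t => g (puCircle n hn t)) t‖ = Real.pi := by
  have hl : HasDerivAt (fun t : ℝ => Real.pi * t) Real.pi t := by
    simpa using (hasDerivAt_id t).const_mul Real.pi
  have h : HasDerivAt (puCircle n hn)
      ((-Real.sin (Real.pi * t) * Real.pi) • EuclideanSpace.single 0 (1 : ℝ) +
        (Real.cos (Real.pi * t) * Real.pi) • EuclideanSpace.single ⟨1, by omega⟩ (1 : ℝ)) t :=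
    (hl.cos.smul_const _).add (hl.sin.smul_const _)
  have h2 := (g.toContinuousLinearEquiv.toContinuousLinearMap.hasFDerivAt
    (x := puCircle n hn t)).comp_hasDerivAt t h
  have h3 : deriv (fun t => g (puCircle n hn t)) t = _ := h2.deriv
  rw [h3]
  have h4 := pu_norm n hn (-Real.sin (Real.pi * t) * Real.pi) (Real.cos (Real.pi * t) * Real.pi)
  refine (sq_eq_sq₀ (norm_nonneg _) Real.pi_pos.le).1 ?_
  refine Eq.trans ?_ (h4.trans ?_)
  · congr 1
    exact g.norm_map _
  · linear_combination Real.pi ^ 2 * Real.sin_sq_add_cos_sq (Real.pi * t)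

lemma pu_fLength_nonneg (n : ℕ) (f : EuclideanSpace ℝ (Fin (n + 1)) → ℝ)
    (hpos : ∀ x ∈ Metric.sphere (0 : EuclideanSpace ℝ (Fin (n + 1))) 1, 0 ≤ f x)
    (γ : ℝ → EuclideanSpace ℝ (Fin (n + 1))) (hγ : IsSpherePath n γ) :
    0 ≤ fLength n f γ :=
  setIntegral_nonneg measurableSet_Icc fun t ht =>
    mul_nonneg (hpos _ (hγ.2 t ht)) (norm_nonneg _)

lemma pu_systole_le (n : ℕ) (hn : 1 ≤ n) (f : EuclideanSpace ℝ (Fin (n + 1)) → ℝ)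
    (hpos : ∀ x ∈ Metric.sphere (0 : EuclideanSpace ℝ (Fin (n + 1))) 1, 0 ≤ f x)
    (g : EuclideanSpace ℝ (Fin (n + 1)) ≃ₗᵢ[ℝ] EuclideanSpace ℝ (Fin (n + 1))) :
    systole n f ≤ (∫ t in Icc (0 : ℝ) 1, f (g (puCircle n hn t))) * Real.pi := by
  refine csInf_le ⟨0, ?_⟩ ⟨fun t => g (puCircle n hn t), ⟨?_, ?_⟩, ?_, ?_⟩
  · rintro l ⟨γ, h, -, rfl⟩
    exact pu_fLength_nonneg n f hpos γ h
  · refine ⟨1, fun i => (i : ℝ), by simp, by simp, ?_, ?_⟩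
    · intro i j hij
      have : (i : ℕ) ≤ (j : ℕ) := hij
      simpa using this
    · intro i
      exact (g.contDiff.comp (puCircle_contDiff n hn)).contDiffOn
  · intro t _
    simp [puCircle_norm]
  · simp [puCircle]
  · unfold fLength
    simp_rw [puCircle_deriv]
    rw [integral_mul_const]

/-- **Generalized Pu inequality for `ℝPⁿ`.**  For every `n ≥ 1` and every continuous
nonnegative antipodally symmetric `f : Sⁿ → ℝ` one has
`∫_{Sⁿ} fⁿ dσ ≥ (σ(Sⁿ)/πⁿ)·L(f)ⁿ`, where `σ` is the `n`-dimensional surface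
(Hausdorff) measure on the unit sphere `Sⁿ ⊆ ℝ^{n+1}`. -/
theorem generalized_pu_inequality (n : ℕ) (hn : 1 ≤ n)
    (f : EuclideanSpace ℝ (Fin (n + 1)) → ℝ)
    (hcont : ContinuousOn f (Metric.sphere (0 : EuclideanSpace ℝ (Fin (n + 1))) 1))
    (hpos : ∀ x ∈ Metric.sphere (0 : EuclideanSpace ℝ (Fin (n + 1))) 1, 0 ≤ f x)
    (hsym : ∀ x ∈ Metric.sphere (0 : EuclideanSpace ℝ (Fin (n + 1))) 1, f (-x) = f x) :
    (μH[(n : ℝ)] (Metric.sphere (0 : EuclideanSpace ℝ (Fin (n + 1))) 1)).toReal /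
        Real.pi ^ n * systole n f ^ n ≤
      ∫ x in Metric.sphere (0 : EuclideanSpace ℝ (Fin (n + 1))) 1, f x ^ n ∂μH[(n : ℝ)] := by
  set S := Metric.sphere (0 : EuclideanSpace ℝ (Fin (n + 1))) 1 with hS
  have hSm : MeasurableSet S := Metric.isClosed_sphere.measurableSet
  have hrhs : 0 ≤ ∫ x in S, f x ^ n ∂μH[(n : ℝ)] :=
    setIntegral_nonneg hSm fun x hx => pow_nonneg (hpos x hx) n
  by_cases h0 : (μH[(n : ℝ)] S).toReal = 0
  · rw [h0]
    simpa using hrhs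
  obtain ⟨hz, hfin⟩ := (not_or.1 (mt (ENNReal.toReal_eq_zero_iff _).2 h0))
  have hσpos : 0 < (μH[(n : ℝ)] S).toReal := lt_of_le_of_ne ENNReal.toReal_nonneg (Ne.symm h0)
  have : Fact (μH[(n : ℝ)] S < ⊤) := ⟨lt_top_iff_ne_top.2 hfin⟩
  have : CompactSpace S := isCompact_iff_compactSpace.1 (isCompact_sphere _ _)
  obtain ⟨F, -, hF⟩ := BoundedContinuousFunction.exists_extension_norm_eq_of_isClosedEmbedding
    (BoundedContinuousFunction.mkOfCompact ⟨S.domRestrict f, hcont.domRestrict⟩)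
    (Metric.isClosed_sphere (x := (0 : EuclideanSpace ℝ (Fin (n + 1)))) (ε := 1)
      ).isClosedEmbedding_subtypeVal
  have hFf : ∀ x ∈ S, F x = f x := fun x hx => congrFun hF ⟨x, hx⟩
  have hsys0 : 0 ≤ systole n f := by
    refine Real.sInf_nonneg ?_
    rintro l ⟨γ, h, -, rfl⟩
    exact pu_fLength_nonneg n f hpos γ h
  have hkey := pu_average F (n : ℝ) (puCircle n hn) (puCircle_contDiff n hn).continuous
    (puCircle_norm n hn) hfin (systole n f / Real.pi) (by
      intro g
      rw [div_le_iff₀ Real.pi_pos]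
      refine (pu_systole_le n hn f hpos g).trans_eq ?_
      congr 2
      ext t
      exact (hFf _ (by simp [hS, puCircle_norm])).symm)
  have hFint : IntegrableOn (fun x => F x) S μH[(n : ℝ)] :=
    Integrable.of_bound F.continuous.aestronglyMeasurable ‖F‖
      (Filter.Eventually.of_forall fun p => F.norm_coe_le_norm _)
  have hFint2 : IntegrableOn ((fun y : ℝ => y ^ n) ∘ (fun x => F x)) S μH[(n : ℝ)] :=
    Integrable.of_bound (F.continuous.pow n).aestronglyMeasurable (‖F‖ ^ n)
      (Filter.Eventually.of_forall fun p => by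
        simp only [Function.comp, norm_pow]
        exact pow_le_pow_left₀ (norm_nonneg _) (F.norm_coe_le_norm _) n)
  have hJ := (convexOn_pow (𝕜 := ℝ) n).map_set_average_le (continuous_pow n).continuousOn
    isClosed_Ici hz hfin (f := fun x => F x)
    ((ae_restrict_iff' hSm).2 (Filter.Eventually.of_forall fun x hx => by
      rw [mem_Ici, hFf x hx]; exact hpos x hx)) hFint hFint2
  rw [setAverage_eq, setAverage_eq] at hJ
  simp only [smul_eq_mul, Measure.real] at hJ
  have hrw : ∫ x in S, f x ^ n ∂μH[(n : ℝ)] = ∫ x in S, F x ^ n ∂μH[(n : ℝ)] :=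
    setIntegral_congr_fun hSm fun x hx => by simp only [hFf x hx]
  rw [hrw]
  have h1 : systole n f / Real.pi ≤
      (μH[(n : ℝ)] S).toReal⁻¹ * ∫ x in S, F x ∂μH[(n : ℝ)] := by
    rw [inv_mul_eq_div, le_div_iff₀ hσpos, mul_comm]
    exact hkey
  have h2 := (pow_le_pow_left₀ (div_nonneg hsys0 Real.pi_pos.le) h1 n).trans hJ
  rw [inv_mul_eq_div, le_div_iff₀ hσpos, div_pow] at h2
  refine le_trans (le_of_eq ?_) h2
  ring
end
end

section
/- Let γ : [0,1] → ℝ³ be a Lipschitz closed curve (γ(0) = γ(1)) such that the convex hull of the image of γ contains a closed Euclidean ball of radius r > 0. Then the length of γ (its total variation) satisfies length(γ) ≥ 2πr. (A closed space curve whose convex hull contains a ball of radius r has length at least the circumference 2πr; this is the inequality 2πr ≤ L used for the systolic geodesic on a convex surface with inradius r.) -/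
open Set

noncomputable section

lemma aux_integral (a b : ℝ) :
    ∫ θ in (0:ℝ)..Real.pi, |a * Real.cos θ + b * Real.sin θ| = 2 * Real.sqrt (a ^ 2 + b ^ 2) := by
  set z : ℂ := ⟨b, a⟩ with hz
  have hb : b = ‖z‖ * Real.cos z.arg := by rw [Complex.norm_mul_cos_arg]
  have ha : a = ‖z‖ * Real.sin z.arg := by rw [Complex.norm_mul_sin_arg]
  have hn : ‖z‖ = Real.sqrt (a ^ 2 + b ^ 2) := by
    rw [Complex.norm_def, Complex.normSq_apply]
    congr 1
    simp only [hz]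
    ring
  have h1 : ∀ θ : ℝ, |a * Real.cos θ + b * Real.sin θ| = ‖z‖ * |Real.sin (θ + z.arg)| := by
    intro θ
    have h0 : ‖z‖ * |Real.sin (θ + z.arg)| = |‖z‖ * Real.sin (θ + z.arg)| := by
      rw [abs_mul, abs_of_nonneg (norm_nonneg z)]
    rw [h0, Real.sin_add]
    congr 1
    calc a * Real.cos θ + b * Real.sin θ
        = (‖z‖ * Real.sin z.arg) * Real.cos θ + (‖z‖ * Real.cos z.arg) * Real.sin θ := by
          rw [← ha, ← hb]
      _ = _ := by ring
  simp only [h1]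
  rw [intervalIntegral.integral_const_mul,
    intervalIntegral.integral_comp_add_right (fun x => |Real.sin x|)]
  have hp : Function.Periodic (fun x : ℝ => |Real.sin x|) Real.pi := by
    intro x
    simp [Real.sin_add_pi]
  have h2 := hp.intervalIntegral_add_eq (0 + z.arg) 0
  rw [show Real.pi + z.arg = 0 + z.arg + Real.pi by ring, h2, zero_add]
  have h3 : ∫ x in (0:ℝ)..Real.pi, |Real.sin x| = ∫ x in (0:ℝ)..Real.pi, Real.sin x := by
    apply intervalIntegral.integral_congr
    intro x hx
    rw [Set.uIcc_of_le Real.pi_pos.le] at hx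
    exact abs_of_nonneg (Real.sin_nonneg_of_mem_Icc hx)
  rw [h3, integral_sin, ← hn]
  simp
  ring

lemma aux_closed (x : ℕ → ℝ) (N : ℕ) (h : x 0 = x N) (j k : ℕ) (hj : j ≤ N) (hk : k ≤ N) :
    2 * |x j - x k| ≤ ∑ i ∈ Finset.range N, |x (i + 1) - x i| := by
  wlog hjk : j ≤ k generalizing j k
  · rw [abs_sub_comm]
    exact this k j hk hj (by omega)
  have e := dist_le_Ico_sum_dist x (Nat.zero_le j)
  have e2 := dist_le_Ico_sum_dist x hjk
  have e3 := dist_le_Ico_sum_dist x hk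
  have s1 := Finset.sum_Ico_consecutive (fun i => dist (x i) (x (i+1))) (Nat.zero_le j) hjk
  have s2 := Finset.sum_Ico_consecutive (fun i => dist (x i) (x (i+1))) (Nat.zero_le k) hk
  have s3 : ∑ i ∈ Finset.range N, |x (i + 1) - x i|
      = ∑ i ∈ Finset.Ico 0 N, dist (x i) (x (i+1)) := by
    rw [Finset.range_eq_Ico]
    refine Finset.sum_congr rfl fun i _ => ?_
    rw [Real.dist_eq, abs_sub_comm]
  rw [s3]
  have t := dist_triangle (x j) (x 0) (x k)
  rw [h] at t e
  rw [dist_comm (x N) (x k), dist_comm (x j) (x N)] at t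
  rw [← Real.dist_eq]
  linarith

/-- The linear functional in horizontal direction `θ`. -/
def horiz (θ : ℝ) (v : EuclideanSpace ℝ (Fin 3)) : ℝ := v 0 * Real.cos θ + v 1 * Real.sin θ

lemma sqrt_le_norm (v : EuclideanSpace ℝ (Fin 3)) : Real.sqrt (v 0 ^ 2 + v 1 ^ 2) ≤ ‖v‖ := by
  rw [EuclideanSpace.norm_eq]
  apply Real.sqrt_le_sqrt
  simp only [Fin.sum_univ_three, Real.norm_eq_abs, sq_abs]
  nlinarith [sq_nonneg (v 2)]

lemma horiz_le (θ : ℝ) (v : EuclideanSpace ℝ (Fin 3)) : |horiz θ v| ≤ ‖v‖ := by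
  refine le_trans ?_ (sqrt_le_norm v)
  apply Real.abs_le_sqrt
  unfold horiz
  nlinarith [sq_nonneg (v 0 * Real.sin θ - v 1 * Real.cos θ), Real.sin_sq_add_cos_sq θ]

lemma horiz_sub (θ : ℝ) (v w : EuclideanSpace ℝ (Fin 3)) :
    horiz θ (v - w) = horiz θ v - horiz θ w := by
  simp [horiz]
  ring

lemma exists_point (γ : ℝ → EuclideanSpace ℝ (Fin 3))
    (r : ℝ) (hr : 0 < r) (c : EuclideanSpace ℝ (Fin 3))
    (hball : Metric.closedBall c r ⊆ convexHull ℝ (γ '' Set.Icc 0 1)) (θ : ℝ) :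
    ∃ t ∈ Set.Icc (0:ℝ) 1, horiz θ c + r ≤ horiz θ (γ t) := by
  by_contra! hcon
  have hl : IsLinearMap ℝ (horiz θ) := by
    constructor
    · intro x y
      simp [horiz]
      ring
    · intro a x
      simp [horiz]
      ring
  have hsub : convexHull ℝ (γ '' Set.Icc 0 1) ⊆ {w | horiz θ w < horiz θ c + r} := by
    apply convexHull_min
    · rintro _ ⟨t, ht, rfl⟩
      exact hcon t ht
    · exact convex_halfSpace_lt hl _
  set u : EuclideanSpace ℝ (Fin 3) := !₂[r * Real.cos θ, r * Real.sin θ, 0] with hu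
  have hun : ‖u‖ ≤ r := by
    rw [EuclideanSpace.norm_eq]
    apply Real.sqrt_le_iff.2 ⟨hr.le, ?_⟩
    simp only [Fin.sum_univ_three, Real.norm_eq_abs, sq_abs, hu]
    simp
    nlinarith [Real.sin_sq_add_cos_sq θ]
  have hm : c + u ∈ Metric.closedBall c r := by
    simpa [Metric.mem_closedBall, dist_eq_norm] using hun
  have h := hsub (hball hm)
  simp only [Set.mem_ofPred_eq, hl.map_add] at h
  have : horiz θ u = r := by
    simp [horiz, hu]
    nlinarith [Real.sin_sq_add_cos_sq θ]
  linarith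

lemma key (γ : ℝ → EuclideanSpace ℝ (Fin 3)) (C : NNReal)
    (hlip : LipschitzOnWith C γ (Set.Icc 0 1))
    (hclosed : γ 0 = γ 1)
    (r : ℝ) (hr : 0 < r) (c : EuclideanSpace ℝ (Fin 3))
    (hball : Metric.closedBall c r ⊆ convexHull ℝ (γ '' Set.Icc 0 1)) (N : ℕ) (hN : 0 < N) :
    2 * Real.pi * (r - C / N) ≤
      ∑ i ∈ Finset.range N, dist (γ ((i + 1 : ℕ) / N)) (γ ((i : ℕ) / N)) := by
  have hN' : (0:ℝ) < N := by exact_mod_cast hN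
  have grid : ∀ θ : ℝ, ∃ j ≤ N, horiz θ c + (r - C / N) ≤ horiz θ (γ ((j : ℕ) / N)) := by
    intro θ
    obtain ⟨t, ht, h⟩ := exists_point γ r hr c hball θ
    have h0 : 0 ≤ t * N := mul_nonneg ht.1 hN'.le
    have f1 := Nat.floor_le h0
    have f2 := Nat.lt_floor_add_one (t * N)
    have hjN : ⌊t * N⌋₊ ≤ N := by
      have : (⌊t * N⌋₊ : ℝ) ≤ N := by nlinarith [ht.2]
      exact_mod_cast this
    refine ⟨⌊t * N⌋₊, hjN, ?_⟩
    set j := ⌊t * N⌋₊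
    have hmem : (j : ℝ) / N ∈ Set.Icc (0:ℝ) 1 :=
      ⟨by positivity, (div_le_one hN').2 (by exact_mod_cast hjN)⟩
    have hd := hlip.dist_le_mul t ht _ hmem
    have hd2 : dist t ((j:ℝ) / N) ≤ 1 / N := by
      rw [Real.dist_eq, show t - (j:ℝ) / N = (t * N - j) / N by field_simp, abs_div,
        abs_of_pos hN', abs_of_nonneg (by linarith)]
      gcongr
      linarith
    have hd3 : (C:ℝ) * dist t ((j:ℝ) / N) ≤ C / N := by
      calc (C:ℝ) * dist t ((j:ℝ) / N) ≤ C * (1 / N) := by gcongr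
        _ = C / N := by ring
    have h4 := (le_abs_self _).trans (horiz_le θ (γ t - γ ((j:ℝ) / N)))
    rw [horiz_sub, ← dist_eq_norm] at h4
    linarith
  have point : ∀ θ : ℝ, 4 * (r - C / N) ≤
      ∑ i ∈ Finset.range N, |horiz θ (γ ((i + 1 : ℕ) / N) - γ ((i : ℕ) / N))| := by
    intro θ
    obtain ⟨j, hj, h1⟩ := grid θ
    obtain ⟨k, hk, h2⟩ := grid (θ + Real.pi)
    have hneg : ∀ v, horiz (θ + Real.pi) v = - horiz θ v := by
      intro v
      simp [horiz]
      ring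
    rw [hneg, hneg] at h2
    have := aux_closed (fun i => horiz θ (γ ((i : ℕ) / N))) N
      (by simp [hN'.ne', hclosed]) j k hj hk
    simp only [horiz_sub]
    have h5 := le_abs_self (horiz θ (γ ((j : ℕ) / N)) - horiz θ (γ ((k : ℕ) / N)))
    beta_reduce at this
    linarith
  have hcont : ∀ v, Continuous fun θ => |horiz θ v| := by
    intro v
    unfold horiz
    fun_prop
  have hint := intervalIntegral.integral_mono (μ := MeasureTheory.volume) (Real.pi_pos.le)
    (continuous_const.intervalIntegrable 0 Real.pi)
    ((continuous_finsetSum (Finset.range N) fun i _ =>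
      hcont (γ ((i + 1 : ℕ) / N) - γ ((i : ℕ) / N))).intervalIntegrable 0 Real.pi) point
  rw [intervalIntegral.integral_finsetSum fun i _ => (hcont _).intervalIntegrable _ _] at hint
  simp only [horiz, aux_integral, intervalIntegral.integral_const, smul_eq_mul] at hint
  rw [← Finset.mul_sum] at hint
  have hs := Finset.sum_le_sum (s := Finset.range N) fun i _ =>
    sqrt_le_norm (γ ((i + 1 : ℕ) / N) - γ ((i : ℕ) / N))
  simp only [dist_eq_norm]
  linarith

theorem length_ge_two_pi_r_of_ball_subset_convexHull
    (γ : ℝ → EuclideanSpace ℝ (Fin 3)) (C : NNReal)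
    (hlip : LipschitzOnWith C γ (Set.Icc 0 1))
    (hclosed : γ 0 = γ 1)
    (r : ℝ) (hr : 0 < r) (c : EuclideanSpace ℝ (Fin 3))
    (hball : Metric.closedBall c r ⊆ convexHull ℝ (γ '' Set.Icc 0 1)) :
    ENNReal.ofReal (2 * Real.pi * r) ≤ eVariationOn γ (Set.Icc 0 1) := by
  have hb : ∀ n : ℕ, ENNReal.ofReal (2 * Real.pi * (r - C / ((n + 1 : ℕ) : ℝ))) ≤
      eVariationOn γ (Set.Icc 0 1) := by
    intro n
    have hN' : (0:ℝ) < ((n + 1 : ℕ) : ℝ) := by positivity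
    refine (ENNReal.ofReal_le_ofReal
      (key γ C hlip hclosed r hr c hball (n + 1) n.succ_pos)).trans ?_
    rw [ENNReal.ofReal_sum_of_nonneg fun i _ => dist_nonneg]
    simp only [← edist_dist]
    apply eVariationOn.sum_le_of_monotoneOn_Iic (u := fun i : ℕ => (i : ℝ) / ((n + 1 : ℕ) : ℝ))
    · intro a _ b _ hab
      simp only
      gcongr
    · intro i hi
      exact ⟨by positivity, (div_le_one hN').2 (by exact_mod_cast hi)⟩
  refine le_of_tendsto' (x := Filter.atTop) ?_ hb
  apply ENNReal.tendsto_ofReal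
  have h0 : Filter.Tendsto (fun n : ℕ => (C:ℝ) / ((n + 1 : ℕ) : ℝ)) Filter.atTop (nhds 0) :=
    (tendsto_const_div_atTop_nhds_zero_nat (C:ℝ)).comp (Filter.tendsto_add_atTop_nat 1)
  simpa using (h0.const_sub r).const_mul (2 * Real.pi)
end
end

section
/- Let K ⊆ ℝ² be a compact convex set with nonempty interior, with area A, boundary length L, circumradius R and inradius r. Then Bonnesen's inequality holds: L² − 4πA ≥ π²(R − r)². -/
open Set MeasureTheory

noncomputable section

/-- The inradius of a set `K ⊆ ℝ²`: the supremum of radii `ρ ≥ 0` of closed balls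
contained in `K`. -/
def inradius (K : Set (EuclideanSpace ℝ (Fin 2))) : ℝ :=
  sSup { ρ : ℝ | 0 ≤ ρ ∧ ∃ c : EuclideanSpace ℝ (Fin 2), Metric.closedBall c ρ ⊆ K }

/-- The circumradius of a set `K ⊆ ℝ²`: the infimum of radii `ρ ≥ 0` of closed balls
containing `K`. -/
def circumradius (K : Set (EuclideanSpace ℝ (Fin 2))) : ℝ :=
  sInf { ρ : ℝ | 0 ≤ ρ ∧ ∃ c : EuclideanSpace ℝ (Fin 2), K ⊆ Metric.closedBall c ρ }

/-- Component of a vector in direction `θ`. -/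
def ip (v : EuclideanSpace ℝ (Fin 2)) (θ : ℝ) : ℝ := v 0 * Real.cos θ + v 1 * Real.sin θ

/-- Support function of `K` with respect to the origin `c`. -/
def hs (K : Set (EuclideanSpace ℝ (Fin 2))) (c : EuclideanSpace ℝ (Fin 2)) (θ : ℝ) : ℝ :=
  sSup ((fun x => ip (x - c) θ) '' K)

theorem norm_sq_two (v : EuclideanSpace ℝ (Fin 2)) : ‖v‖ ^ 2 = v 0 ^ 2 + v 1 ^ 2 := by
  rw [EuclideanSpace.norm_sq_eq]; simp

theorem abs_ip_le (v : EuclideanSpace ℝ (Fin 2)) (θ : ℝ) : |ip v θ| ≤ ‖v‖ := by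
  apply abs_le_of_sq_le_sq _ (norm_nonneg v)
  rw [norm_sq_two, ip]
  nlinarith [sq_nonneg (v 0 * Real.sin θ - v 1 * Real.cos θ), Real.sin_sq_add_cos_sq θ]

theorem ip_le (v : EuclideanSpace ℝ (Fin 2)) (θ : ℝ) : ip v θ ≤ ‖v‖ :=
  (le_abs_self _).trans (abs_ip_le v θ)

theorem ip_sub (v w : EuclideanSpace ℝ (Fin 2)) (θ : ℝ) : ip (v - w) θ = ip v θ - ip w θ := by
  simp [ip]; ring

theorem ip_polar (v : EuclideanSpace ℝ (Fin 2)) :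
    ∃ α : ℝ, ∀ θ, ip v θ = ‖v‖ * Real.cos (θ - α) := by
  have h := norm_sq_two v
  refine ⟨Complex.arg ⟨v 0, v 1⟩, fun θ => ?_⟩
  have hn : ‖(⟨v 0, v 1⟩ : ℂ)‖ = ‖v‖ := by
    rw [← abs_of_nonneg (norm_nonneg v), ← abs_of_nonneg (norm_nonneg (_ : ℂ)), ← sq_eq_sq_iff_abs_eq_abs,
      h, Complex.sq_norm, Complex.normSq_apply]
    ring
  have h1 := Complex.norm_mul_cos_arg (⟨v 0, v 1⟩ : ℂ)
  have h2 := Complex.norm_mul_sin_arg (⟨v 0, v 1⟩ : ℂ)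
  rw [hn] at h1 h2
  simp only at h1 h2
  rw [Real.cos_sub, ip]
  linear_combination -Real.cos θ * h1 - Real.sin θ * h2

theorem ip_continuous_left (θ : ℝ) : Continuous (fun v => ip v θ) := by
  unfold ip; fun_prop

theorem ip_continuous_right (v) : Continuous (fun θ => ip v θ) := by
  unfold ip; fun_prop

theorem abs_cos_sub_cos (θ φ : ℝ) : |Real.cos θ - Real.cos φ| ≤ |θ - φ| := by
  exact Real.abs_cos_sub_cos_le θ φ

theorem abs_sin_sub_sin (θ φ : ℝ) : |Real.sin θ - Real.sin φ| ≤ |θ - φ| := by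
  exact Real.abs_sin_sub_sin_le θ φ

theorem abs_coord_le (v : EuclideanSpace ℝ (Fin 2)) (i : Fin 2) : |v i| ≤ ‖v‖ := by
  have := PiLp.norm_apply_le v i
  simpa using this

theorem abs_ip_sub_le (v : EuclideanSpace ℝ (Fin 2)) (θ φ : ℝ) :
    |ip v θ - ip v φ| ≤ 2 * ‖v‖ * |θ - φ| := by
  have e : ip v θ - ip v φ = v 0 * (Real.cos θ - Real.cos φ) + v 1 * (Real.sin θ - Real.sin φ) := by
    simp [ip]; ring
  rw [e]
  refine (abs_add_le _ _).trans ?_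
  rw [abs_mul, abs_mul]
  have := mul_le_mul (abs_coord_le v 0) (abs_cos_sub_cos θ φ) (abs_nonneg _) (norm_nonneg _)
  have := mul_le_mul (abs_coord_le v 1) (abs_sin_sub_sin θ φ) (abs_nonneg _) (norm_nonneg _)
  linarith

section
variable {K : Set (EuclideanSpace ℝ (Fin 2))}

theorem ipc_cont (c : EuclideanSpace ℝ (Fin 2)) (θ : ℝ) : Continuous (fun x => ip (x - c) θ) :=
  (ip_continuous_left θ).comp (continuous_id.sub continuous_const)

theorem le_hs (hK : IsCompact K) (c : EuclideanSpace ℝ (Fin 2)) {x} (hx : x ∈ K) (θ : ℝ) : ip (x - c) θ ≤ hs K c θ := by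
  apply le_csSup
  · exact (hK.image (ipc_cont c θ)).bddAbove
  · exact ⟨x, hx, rfl⟩

theorem hs_attained (hK : IsCompact K) (hne : K.Nonempty)
    (c : EuclideanSpace ℝ (Fin 2)) (θ : ℝ) : ∃ p ∈ K, hs K c θ = ip (p - c) θ := by
  obtain ⟨p, hp, hp'⟩ := (hK.image (ipc_cont c θ)).sSup_mem (hne.image _)
  exact ⟨p, hp, hp'.symm⟩

theorem hs_bound (hK : IsCompact K) (hne : K.Nonempty)
    (c : EuclideanSpace ℝ (Fin 2)) : ∃ M : ℝ, 0 < M ∧ (∀ θ, |hs K c θ| ≤ M) ∧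
    ∀ θ φ, |hs K c θ - hs K c φ| ≤ M * |θ - φ| := by
  obtain ⟨M, hM⟩ := (hK.image (continuous_id.sub (continuous_const (y := c)))).isBounded.exists_norm_le
  have hM' : ∀ x ∈ K, ‖x - c‖ ≤ M := fun x hx => hM _ ⟨x, hx, rfl⟩
  have hM0 : 0 ≤ M := by
    obtain ⟨x, hx⟩ := hne
    exact (norm_nonneg _).trans (hM' x hx)
  have key : ∀ θ φ, hs K c θ - hs K c φ ≤ 2 * M * |θ - φ| := by
    intro θ φ
    obtain ⟨p, hp, hp'⟩ := hs_attained hK hne c θ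
    have h1 := le_hs hK c hp φ
    have h2 := (le_abs_self _).trans (abs_ip_sub_le (p - c) θ φ)
    have h3 := mul_le_mul_of_nonneg_right (hM' p hp) (abs_nonneg (θ - φ))
    rw [hp']; linarith
  refine ⟨2 * M + 1, by linarith, fun θ => ?_, fun θ φ => ?_⟩
  · obtain ⟨p, hp, hp'⟩ := hs_attained hK hne c θ
    rw [hp']
    linarith [abs_ip_le (p - c) θ, hM' p hp]
  · have h4 := abs_nonneg (θ - φ)
    rw [abs_le]
    constructor
    · have := key φ θ
      rw [abs_sub_comm φ θ] at this
      linarith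
    · linarith [key θ φ]

theorem hs_continuous (hK : IsCompact K) (hne : K.Nonempty)
    (c : EuclideanSpace ℝ (Fin 2)) : Continuous (hs K c) := by
  obtain ⟨M, hM, -, h⟩ := hs_bound hK hne c
  have : LipschitzWith ⟨M, hM.le⟩ (hs K c) := by
    apply LipschitzWith.of_dist_le_mul
    intro x y
    rw [Real.dist_eq, Real.dist_eq]
    exact h x y
  exact this.continuous

theorem hs_periodic (c : EuclideanSpace ℝ (Fin 2)) : Function.Periodic (hs K c) (2 * Real.pi) := by
  intro θ
  simp [hs, ip]
end

/-! ### Length -/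

theorem integral_abs_cos : ∫ θ in (0:ℝ)..(2 * Real.pi), |Real.cos θ| = 4 := by
  have hper : Function.Periodic (fun θ => |Real.cos θ|) (2 * Real.pi) := by
    intro θ; simp
  have h := hper.intervalIntegral_add_eq 0 (-(Real.pi / 2))
  rw [zero_add] at h
  rw [h]
  have hc : Continuous (fun θ => |Real.cos θ|) := by fun_prop
  rw [← intervalIntegral.integral_add_adjacent_intervals (b := Real.pi / 2)
    (hc.intervalIntegrable _ _) (hc.intervalIntegrable _ _)]
  have e1 : ∫ θ in (-(Real.pi / 2))..(Real.pi / 2), |Real.cos θ| = ∫ θ in (-(Real.pi / 2))..(Real.pi / 2), Real.cos θ := by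
    apply intervalIntegral.integral_congr
    intro θ hθ
    rw [uIcc_of_le (by linarith [Real.pi_pos])] at hθ
    exact abs_of_nonneg (Real.cos_nonneg_of_mem_Icc hθ)
  have e2 : ∫ θ in (Real.pi / 2)..(-(Real.pi / 2) + 2 * Real.pi), |Real.cos θ| =
      ∫ θ in (Real.pi / 2)..(-(Real.pi / 2) + 2 * Real.pi), -Real.cos θ := by
    apply intervalIntegral.integral_congr
    intro θ hθ
    rw [uIcc_of_le (by linarith [Real.pi_pos])] at hθ
    exact abs_of_nonpos (Real.cos_nonpos_of_pi_div_two_le_of_le hθ.1 (by linarith [hθ.2]))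
  rw [e1, e2, intervalIntegral.integral_neg, integral_cos, integral_cos]
  simp
  norm_num

theorem integral_abs_ip (v) : ∫ θ in (0:ℝ)..(2 * Real.pi), |ip v θ| = 4 * ‖v‖ := by
  obtain ⟨α, hα⟩ := ip_polar v
  simp_rw [hα, abs_mul, abs_norm]
  rw [intervalIntegral.integral_const_mul, intervalIntegral.integral_comp_sub_right (fun x => |Real.cos x|)]
  have hper : Function.Periodic (fun θ => |Real.cos θ|) (2 * Real.pi) := by
    intro θ; simp
  have h := hper.intervalIntegral_add_eq (0 - α) 0
  rw [show 2 * Real.pi - α = 0 - α + 2 * Real.pi by ring, h, zero_add, integral_abs_cos]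
  ring

/-- A closed tour passes at least twice over the range. -/
theorem closed_tour (a : ℕ → ℝ) (n : ℕ) (h0 : a 0 = a n) (i j : ℕ) (hi : i ≤ n) (hj : j ≤ n) :
    2 * (a i - a j) ≤ ∑ k ∈ Finset.range n, |a (k+1) - a k| := by
  have key : ∀ i j, i ≤ j → |a j - a i| ≤ ∑ k ∈ Finset.Ico i j, |a (k+1) - a k| := by
    intro i j hij
    have := dist_le_Ico_sum_dist a hij
    simp only [Real.dist_eq] at this
    rw [abs_sub_comm]
    refine this.trans (le_of_eq ?_)
    apply Finset.sum_congr rfl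
    intro k _
    rw [abs_sub_comm]
  have split : ∀ i j, i ≤ j → j ≤ n → |a i - a 0| + |a j - a i| + |a n - a j| ≤
      ∑ k ∈ Finset.range n, |a (k+1) - a k| := by
    intro i j hij hjn
    rw [Finset.range_eq_Ico, ← Finset.sum_Ico_consecutive _ (Nat.zero_le i) (hij.trans hjn),
      ← Finset.sum_Ico_consecutive _ hij hjn]
    linarith [key 0 i (Nat.zero_le _), key i j hij, key j n hjn]
  rcases le_total i j with h | h
  · have := split i j h hj
    linarith [le_abs_self (a i - a 0), neg_le_abs (a j - a i), le_abs_self (a n - a j)]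
  · have := split j i h hi
    linarith [neg_le_abs (a j - a 0), le_abs_self (a i - a j), neg_le_abs (a n - a i)]

/-- Unit vector of angle `θ`. -/
def uv (θ : ℝ) : EuclideanSpace ℝ (Fin 2) := !₂[Real.cos θ, Real.sin θ]

theorem uv_zero (θ : ℝ) : uv θ 0 = Real.cos θ := by simp [uv]
theorem uv_one (θ : ℝ) : uv θ 1 = Real.sin θ := by simp [uv]

theorem norm_uv (θ : ℝ) : ‖uv θ‖ = 1 := by
  have h := norm_sq_two (uv θ)
  rw [uv_zero, uv_one, Real.cos_sq_add_sin_sq] at h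
  have := norm_nonneg (uv θ)
  nlinarith

theorem ip_uv (θ φ : ℝ) : ip (uv θ) φ = Real.cos (θ - φ) := by
  rw [ip, uv_zero, uv_one, Real.cos_sub]

theorem ip_add (v w : EuclideanSpace ℝ (Fin 2)) (θ : ℝ) : ip (v + w) θ = ip v θ + ip w θ := by
  simp [ip]; ring

theorem ip_smul (t : ℝ) (w : EuclideanSpace ℝ (Fin 2)) (θ : ℝ) : ip (t • w) θ = t * ip w θ := by
  simp [ip]; ring

theorem extremal_mem_frontier {K : Set (EuclideanSpace ℝ (Fin 2))} {p : EuclideanSpace ℝ (Fin 2)}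
    (hp : p ∈ K) {θ : ℝ} (hmax : ∀ x ∈ K, ip x θ ≤ ip p θ) : p ∈ frontier K := by
  refine ⟨subset_closure hp, fun hi => ?_⟩
  obtain ⟨ε, hε, hb⟩ := Metric.mem_nhds_iff.1 (mem_interior_iff_mem_nhds.1 hi)
  have hq : p + (ε / 2) • uv θ ∈ K := by
    apply hb
    rw [Metric.mem_ball, dist_eq_norm, add_sub_cancel_left, norm_smul, norm_uv, Real.norm_eq_abs,
      abs_of_pos (by linarith)]
    linarith
  have := hmax _ hq
  rw [ip_add, ip_smul, ip_uv, sub_self, Real.cos_zero] at this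
  linarith

theorem ip_add_pi (v) (θ : ℝ) : ip v (θ + Real.pi) = - ip v θ := by
  simp [ip]; ring

theorem length_ge {K : Set (EuclideanSpace ℝ (Fin 2))}
    (hcomp : IsCompact K) (hne : K.Nonempty)
    (γ : ℝ → EuclideanSpace ℝ (Fin 2))
    (hγcont : ContinuousOn γ (Set.Icc 0 1))
    (hγclosed : γ 0 = γ 1)
    (hγimg : γ '' Set.Icc 0 1 = frontier K)
    (hfin : eVariationOn γ (Set.Icc 0 1) ≠ ⊤) (c : EuclideanSpace ℝ (Fin 2)) :
    ∫ θ in (0:ℝ)..(2 * Real.pi), hs K c θ ≤ (eVariationOn γ (Set.Icc 0 1)).toReal := by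
  set L := (eVariationOn γ (Set.Icc 0 1)).toReal with hL
  have hpi := Real.pi_pos
  have hcont := hs_continuous hcomp hne c
  have hper := hs_periodic (K := K) c
  have hcont2 : Continuous (fun θ => hs K c (θ + Real.pi)) := by fun_prop
  have key : ∀ ε > 0, ∫ θ in (0:ℝ)..(2 * Real.pi), hs K c θ ≤ L + ε * (2 * Real.pi) := by
    intro ε hε
    have huc := isCompact_Icc.uniformContinuousOn_of_continuous hγcont
    rw [Metric.uniformContinuousOn_iff] at huc
    obtain ⟨δ, hδ, huc⟩ := huc ε hε
    obtain ⟨n, hn⟩ := exists_nat_one_div_lt hδ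
    set N : ℕ := n + 1 with hN
    have hN0 : (0:ℝ) < N := by rw [hN]; positivity
    have hN1 : 1 / (N:ℝ) < δ := by rw [hN]; push_cast; exact hn
    let t : ℕ → ℝ := fun k => (k:ℝ) / N
    have ht0 : t 0 = 0 := by simp [t]
    have htN : t N = 1 := by simp [t, hN0.ne']
    have htm : Monotone t := fun a b hab => by
      simp only [t]; gcongr
    have htmem : ∀ i ∈ Icc 0 N, t i ∈ Icc (0:ℝ) 1 := fun i hi =>
      ⟨ht0 ▸ htm hi.1, htN ▸ htm hi.2⟩
    have hsum : ∑ i ∈ Finset.range N, ‖γ (t (i+1)) - γ (t i)‖ ≤ L := by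
      have h := eVariationOn.sum_le_of_monotoneOn_Icc (f := γ) (s := Icc (0:ℝ) 1) (m := 0) (n := N)
        (htm.monotoneOn _) htmem
      have h2 := ENNReal.toReal_mono hfin h
      rw [ENNReal.toReal_sum (fun a _ => edist_ne_top _ _)] at h2
      simpa [← Finset.range_eq_Ico, edist_dist, ENNReal.toReal_ofReal dist_nonneg, dist_eq_norm] using h2
    have near : ∀ p ∈ frontier K, ∃ k ≤ N, ‖p - γ (t k)‖ ≤ ε := by
      intro p hp
      rw [← hγimg] at hp
      obtain ⟨s, hs, rfl⟩ := hp
      refine ⟨⌊s * N⌋₊, ?_, ?_⟩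
      · apply Nat.floor_le_of_le
        nlinarith [hs.2]
      · have hk : ⌊s * N⌋₊ ≤ N := by
          apply Nat.floor_le_of_le
          nlinarith [hs.2]
        rw [← dist_eq_norm]
        refine (huc s hs _ (htmem _ ⟨Nat.zero_le _, hk⟩) ?_).le
        have h1 := Nat.floor_le (show 0 ≤ s * N from mul_nonneg hs.1 hN0.le)
        have h2 := Nat.lt_floor_add_one (s * N)
        rw [Real.dist_eq]
        have e : s - t ⌊s * N⌋₊ = (s * N - ⌊s * N⌋₊) / N := by
          simp only [t]; field_simp
        rw [e, abs_of_nonneg (div_nonneg (by linarith) hN0.le)]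
        refine lt_of_le_of_lt ?_ hN1
        gcongr
        linarith
    have pt : ∀ θ, 2 * (hs K c θ + hs K c (θ + Real.pi)) - 4 * ε ≤
        ∑ i ∈ Finset.range N, |ip (γ (t (i+1)) - γ (t i)) θ| := by
      intro θ
      obtain ⟨p, hp, hp'⟩ := hs_attained hcomp hne c θ
      obtain ⟨q, hq, hq'⟩ := hs_attained hcomp hne c (θ + Real.pi)
      have hpf : p ∈ frontier K := by
        apply extremal_mem_frontier hp (θ := θ)
        intro x hx
        have := le_hs hcomp c hx θ
        rw [hp', ip_sub, ip_sub] at this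
        linarith
      have hqf : q ∈ frontier K := by
        apply extremal_mem_frontier hq (θ := θ + Real.pi)
        intro x hx
        have := le_hs hcomp c hx (θ + Real.pi)
        rw [hq', ip_sub, ip_sub] at this
        linarith
      obtain ⟨i, hi, hip⟩ := near p hpf
      obtain ⟨j, hj, hjq⟩ := near q hqf
      have h1 := closed_tour (fun k => ip (γ (t k)) θ) N (by simp only [ht0, htN, hγclosed]) i j hi hj
      simp only [← ip_sub] at h1
      refine le_trans ?_ h1
      have h2 := (ip_le (p - γ (t i)) θ).trans hip
      have h3 := (ip_le (q - γ (t j)) (θ + Real.pi)).trans hjq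
      rw [hp', hq', ip_add_pi]
      rw [ip_add_pi] at h3
      simp only [ip_sub] at *
      linarith
    have hint : ∫ θ in (0:ℝ)..(2 * Real.pi), (2 * (hs K c θ + hs K c (θ + Real.pi)) - 4 * ε) ≤
        ∫ θ in (0:ℝ)..(2 * Real.pi), ∑ i ∈ Finset.range N, |ip (γ (t (i+1)) - γ (t i)) θ| := by
      apply intervalIntegral.integral_mono (by positivity)
      · apply Continuous.intervalIntegrable
        fun_prop
      · apply Continuous.intervalIntegrable
        exact continuous_finsetSum _ (fun i _ => (ip_continuous_right _).abs)
      · exact pt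
    rw [intervalIntegral.integral_finsetSum (fun i _ => ((ip_continuous_right _).abs).intervalIntegrable _ _)] at hint
    simp_rw [integral_abs_ip] at hint
    rw [← Finset.mul_sum, intervalIntegral.integral_sub (Continuous.intervalIntegrable (by fun_prop) _ _) (by simp),
      intervalIntegral.integral_const_mul, intervalIntegral.integral_add (hcont.intervalIntegrable _ _) (hcont2.intervalIntegrable _ _),
      intervalIntegral.integral_comp_add_right (hs K c)] at hint
    have e := hper.intervalIntegral_add_eq (0 + Real.pi) 0
    rw [show 2 * Real.pi + Real.pi = 0 + Real.pi + 2 * Real.pi by ring, e, zero_add] at hint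
    simp only [intervalIntegral.integral_const, smul_eq_mul, sub_zero] at hint
    linarith
  apply le_of_forall_pos_le_add
  intro ε hε
  have := key (ε / (2 * Real.pi)) (by positivity)
  rwa [div_mul_cancel₀ _ (by positivity)] at this

theorem eq_of_ip_eq {p q : EuclideanSpace ℝ (Fin 2)} {θ : ℝ} (h1 : ip p θ = ip q θ)
    (h2 : ip p (θ + Real.pi / 2) = ip q (θ + Real.pi / 2)) : p = q := by
  simp only [ip, Real.cos_add_pi_div_two, Real.sin_add_pi_div_two] at h1 h2
  have := Real.sin_sq_add_cos_sq θ
  ext i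
  fin_cases i
  · show p 0 = q 0
    linear_combination Real.cos θ * h1 - Real.sin θ * h2 - (p 0 - q 0) * this
  · show p 1 = q 1
    linear_combination Real.sin θ * h1 + Real.cos θ * h2 - (p 1 - q 1) * this

section
variable {K : Set (EuclideanSpace ℝ (Fin 2))}

theorem frontier_line_aux (hconv : Convex ℝ K) {z p q : EuclideanSpace ℝ (Fin 2)} {θ : ℝ}
    (hz : z ∈ interior K) (hp : p ∈ K) (hq : q ∉ interior K)
    (hzp : ip z θ = ip p θ) (hzq : ip z θ = ip q θ)
    {a b d : ℝ} (hab : a < b) (hbd : b < d)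
    (h : (a = ip z (θ + Real.pi / 2) ∧ b = ip q (θ + Real.pi / 2) ∧ d = ip p (θ + Real.pi / 2)) ∨
      (a = - ip z (θ + Real.pi / 2) ∧ b = - ip q (θ + Real.pi / 2) ∧ d = - ip p (θ + Real.pi / 2))) :
    False := by
  apply hq
  apply hconv.openSegment_interior_self_subset_interior hz hp
  have hda : 0 < d - a := by linarith
  refine ⟨(d - b) / (d - a), (b - a) / (d - a), div_pos (by linarith) hda, div_pos (by linarith) hda,
    by field_simp; ring, ?_⟩
  apply eq_of_ip_eq (θ := θ)
  · rw [ip_add, ip_smul, ip_smul, ← hzp, ← hzq]; field_simp; ring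
  · rw [ip_add, ip_smul, ip_smul]
    rcases h with ⟨h1, h2, h3⟩ | ⟨h1, h2, h3⟩
    · rw [← h1, ← h2, ← h3]; field_simp; ring
    · rw [← neg_eq_iff_eq_neg] at h1 h2 h3
      rw [← h1, ← h2, ← h3]; field_simp; ring

theorem frontier_line (hcl : IsClosed K) (hconv : Convex ℝ K) {z : EuclideanSpace ℝ (Fin 2)} {θ : ℝ}
    (hz : z ∈ interior K) {p q r : EuclideanSpace ℝ (Fin 2)}
    (hp : p ∈ frontier K) (hq : q ∈ frontier K) (hr : r ∈ frontier K)
    (hzp : ip z θ = ip p θ) (hzq : ip z θ = ip q θ) (hzr : ip z θ = ip r θ)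
    (hpq : p ≠ q) (hpr : p ≠ r) (hqr : q ≠ r) : False := by
  have hmem : ∀ {x}, x ∈ frontier K → x ∈ K ∧ x ∉ interior K := fun hx =>
    ⟨hcl.frontier_subset hx, hx.2⟩
  have hne : ∀ {x}, x ∈ frontier K → ip z θ = ip x θ →
      ip z (θ + Real.pi / 2) < ip x (θ + Real.pi / 2) ∨ ip x (θ + Real.pi / 2) < ip z (θ + Real.pi / 2) := by
    intro x hx hzx
    apply lt_or_gt_of_ne
    intro h
    exact hx.2 (eq_of_ip_eq hzx h ▸ hz)
  have up : ∀ {x y}, x ∈ frontier K → y ∈ frontier K → ip z θ = ip x θ → ip z θ = ip y θ → x ≠ y →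
      ip z (θ + Real.pi / 2) < ip x (θ + Real.pi / 2) → ip z (θ + Real.pi / 2) < ip y (θ + Real.pi / 2) → False := by
    intro x y hx hy hzx hzy hxy h1 h2
    rcases lt_trichotomy (ip x (θ + Real.pi / 2)) (ip y (θ + Real.pi / 2)) with h | h | h
    · exact frontier_line_aux hconv hz (hmem hy).1 (hmem hx).2 hzy hzx h1 h (Or.inl ⟨rfl, rfl, rfl⟩)
    · exact hxy (eq_of_ip_eq (hzx.symm.trans hzy) h)
    · exact frontier_line_aux hconv hz (hmem hx).1 (hmem hy).2 hzx hzy h2 h (Or.inl ⟨rfl, rfl, rfl⟩)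
  have down : ∀ {x y}, x ∈ frontier K → y ∈ frontier K → ip z θ = ip x θ → ip z θ = ip y θ → x ≠ y →
      ip x (θ + Real.pi / 2) < ip z (θ + Real.pi / 2) → ip y (θ + Real.pi / 2) < ip z (θ + Real.pi / 2) → False := by
    intro x y hx hy hzx hzy hxy h1 h2
    rcases lt_trichotomy (ip x (θ + Real.pi / 2)) (ip y (θ + Real.pi / 2)) with h | h | h
    · exact frontier_line_aux hconv hz (hmem hx).1 (hmem hy).2 hzx hzy (neg_lt_neg h2) (neg_lt_neg h) (Or.inr ⟨rfl, rfl, rfl⟩)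
    · exact hxy (eq_of_ip_eq (hzx.symm.trans hzy) h)
    · exact frontier_line_aux hconv hz (hmem hy).1 (hmem hx).2 hzy hzx (neg_lt_neg h1) (neg_lt_neg h) (Or.inr ⟨rfl, rfl, rfl⟩)
  rcases hne hp hzp with h1 | h1 <;> rcases hne hq hzq with h2 | h2 <;> rcases hne hr hzr with h3 | h3
  · exact up hp hq hzp hzq hpq h1 h2
  · exact up hp hq hzp hzq hpq h1 h2
  · exact up hp hr hzp hzr hpr h1 h3
  · exact down hq hr hzq hzr hqr h2 h3
  · exact up hq hr hzq hzr hqr h2 h3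
  · exact down hp hr hzp hzr hpr h1 h3
  · exact down hp hq hzp hzq hpq h1 h2
  · exact down hp hq hzp hzq hpq h1 h2

theorem exists_interior_level (hcl : IsClosed K) (hconv : Convex ℝ K) (hint : (interior K).Nonempty)
    {θ y : ℝ} {p q : EuclideanSpace ℝ (Fin 2)} (hp : p ∈ K) (hq : q ∈ K) (h1 : ip p θ < y) (h2 : y < ip q θ) :
    ∃ z ∈ interior K, ip z θ = y := by
  have hcl' := hconv.closure_interior_eq_closure_of_nonempty_interior hint
  rw [hcl.closure_eq] at hcl'
  have hc := ip_continuous_left θ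
  obtain ⟨p', hp1, hp2⟩ := mem_closure_iff.1 (hcl'.symm ▸ hp) _ (isOpen_lt hc continuous_const) h1
  obtain ⟨q', hq1, hq2⟩ := mem_closure_iff.1 (hcl'.symm ▸ hq) _ (isOpen_lt continuous_const hc) h2
  obtain ⟨z, hz, hz'⟩ := hconv.interior.isPreconnected.intermediate_value hp2 hq2 hc.continuousOn
    (show y ∈ Icc _ _ from ⟨le_of_lt hp1, le_of_lt hq1⟩)
  exact ⟨z, hz, hz'⟩

theorem comp_var_le (hcomp : IsCompact K) (hconv : Convex ℝ K) (hint : (interior K).Nonempty)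
    (γ : ℝ → EuclideanSpace ℝ (Fin 2))
    (hγcont : ContinuousOn γ (Set.Icc 0 1))
    (hγinj : Set.InjOn γ (Set.Ico 0 1))
    (hγimg : γ '' Set.Icc 0 1 = frontier K) (θ : ℝ) :
    ∃ C : ENNReal, C ≠ ⊤ ∧ ∀ (n : ℕ) (u : ℕ → ℝ), Monotone u → (∀ i, u i ∈ Icc (0:ℝ) 1) →
      ∑ k ∈ Finset.range n, ENNReal.ofReal |ip (γ (u (k+1))) θ - ip (γ (u k)) θ| ≤ C := by
  classical
  have hne : K.Nonempty := hint.mono interior_subset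
  have hcl := hcomp.isClosed
  obtain ⟨p, hp, hpmin⟩ := hcomp.exists_isMinOn hne (ip_continuous_left θ).continuousOn
  obtain ⟨q, hq, hqmax⟩ := hcomp.exists_isMaxOn hne (ip_continuous_left θ).continuousOn
  have hfr : ∀ t ∈ Icc (0:ℝ) 1, γ t ∈ frontier K := fun t ht => hγimg ▸ ⟨t, ht, rfl⟩
  have hlo : ∀ t ∈ Icc (0:ℝ) 1, ip p θ ≤ ip (γ t) θ := fun t ht =>
    hpmin (hcl.frontier_subset (hfr t ht))
  have hhi : ∀ t ∈ Icc (0:ℝ) 1, ip (γ t) θ ≤ ip q θ := fun t ht =>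
    hqmax (hcl.frontier_subset (hfr t ht))
  refine ⟨∫⁻ y, (Icc (ip p θ) (ip q θ)).indicator (fun _ => 2) y, ?_, ?_⟩
  · rw [lintegral_indicator measurableSet_Icc, lintegral_const, Measure.restrict_apply_univ, Real.volume_Icc]
    exact ENNReal.mul_ne_top (by simp) (by simp)
  intro n u hu hmem
  set f : ℝ → ℝ := fun t => ip (γ t) θ with hf
  have hfc : ContinuousOn f (Icc 0 1) := (ip_continuous_left θ).comp_continuousOn hγcont
  have e : ∀ k, ENNReal.ofReal |f (u (k+1)) - f (u k)| =
      ∫⁻ y, (uIoc (f (u k)) (f (u (k+1)))).indicator (fun _ => (1:ENNReal)) y := by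
    intro k
    rw [lintegral_indicator measurableSet_uIoc, lintegral_const, Measure.restrict_apply_univ, Real.volume_uIoc, one_mul]
  change ∑ k ∈ Finset.range n, ENNReal.ofReal |f (u (k+1)) - f (u k)| ≤ _
  simp_rw [e]
  rw [← lintegral_finsetSum _ (fun k _ => measurable_const.indicator measurableSet_uIoc)]
  apply lintegral_mono_ae
  have hnull : volume (((Finset.range (n+1)).image (fun k => f (u k)) ∪ {ip p θ, ip q θ} : Finset ℝ) : Set ℝ) = 0 :=
    (Finset.finite_toSet _).measure_zero _
  filter_upwards [measure_eq_zero_iff_ae_notMem.1 hnull] with y hy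
  simp only [Finset.coe_union, mem_union, not_or, Finset.coe_image, Finset.coe_insert, Finset.coe_singleton, Set.mem_insert_iff, Set.mem_singleton_iff] at hy
  obtain ⟨hy1, hy2, hy3⟩ := hy
  have hy1 : ∀ k ≤ n, f (u k) ≠ y := fun k hk h => hy1 ⟨k, by simp; omega, h⟩
  by_cases hyI : y ∈ Icc (ip p θ) (ip q θ)
  · rw [indicator_of_mem hyI]
    obtain ⟨z, hz, hzy⟩ := exists_interior_level hcl hconv hint hp hq (lt_of_le_of_ne hyI.1 (Ne.symm hy2))
      (lt_of_le_of_ne hyI.2 hy3)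
    have hcard : ((Finset.range n).filter (fun k => y ∈ uIoc (f (u k)) (f (u (k+1))))).card ≤ 2 := by
      by_contra hcon
      push Not at hcon
      have hex : ∀ k, k < n → y ∈ uIoc (f (u k)) (f (u (k+1))) → ∃ t, u k < t ∧ t < u (k+1) ∧ f t = y := by
        intro k hk hyk
        have hle := hu (Nat.le_succ k)
        have hsub : uIcc (u k) (u (k+1)) ⊆ Icc 0 1 := by
          rw [uIcc_of_le hle]
          exact Icc_subset_Icc (hmem k).1 (hmem (k+1)).2
        obtain ⟨t, ht, hty⟩ := intermediate_value_uIcc (hfc.mono hsub) (uIoc_subset_uIcc hyk)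
        rw [uIcc_of_le hle] at ht
        refine ⟨t, lt_of_le_of_ne ht.1 ?_, lt_of_le_of_ne ht.2 ?_, hty⟩
        · rintro rfl; exact hy1 k hk.le hty
        · rintro rfl; exact hy1 (k+1) hk hty
      obtain ⟨a, ha, b, hb, d, hd, hab, had, hbd⟩ := Finset.two_lt_card.1 hcon
      simp only [Finset.mem_filter, Finset.mem_range] at ha hb hd
      obtain ⟨ta, ha1, ha2, ha3⟩ := hex a ha.1 ha.2
      obtain ⟨tb, hb1, hb2, hb3⟩ := hex b hb.1 hb.2
      obtain ⟨td, hd1, hd2, hd3⟩ := hex d hd.1 hd.2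
      have hIco : ∀ {k t}, u k < t → t < u (k+1) → t ∈ Ico (0:ℝ) 1 := fun h1 h2 =>
        ⟨(hmem _).1.trans h1.le, h2.trans_le (hmem _).2⟩
      have hdist : ∀ {k l s t}, k ≠ l → u k < s → s < u (k+1) → u l < t → t < u (l+1) → s ≠ t := by
        rintro k l s t hkl h1 h2 h3 h4 rfl
        rcases lt_or_gt_of_ne hkl with h | h
        · exact absurd (hu (show k + 1 ≤ l from h)) (by linarith)
        · exact absurd (hu (show l + 1 ≤ k from h)) (by linarith)
      have hγne : ∀ {k l s t}, k ≠ l → u k < s → s < u (k+1) → u l < t → t < u (l+1) → γ s ≠ γ t := by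
        intro k l s t hkl h1 h2 h3 h4 h
        exact hdist hkl h1 h2 h3 h4 (hγinj (hIco h1 h2) (hIco h3 h4) h)
      exact frontier_line hcl hconv hz (hfr ta (Ico_subset_Icc_self (hIco ha1 ha2)))
        (hfr tb (Ico_subset_Icc_self (hIco hb1 hb2))) (hfr td (Ico_subset_Icc_self (hIco hd1 hd2)))
        (hzy.trans ha3.symm) (hzy.trans hb3.symm) (hzy.trans hd3.symm)
        (hγne hab ha1 ha2 hb1 hb2) (hγne had ha1 ha2 hd1 hd2) (hγne hbd hb1 hb2 hd1 hd2)
    simp only [indicator_apply]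
    rw [Finset.sum_boole]
    exact_mod_cast hcard
  · rw [indicator_of_notMem hyI]
    apply le_of_eq
    apply Finset.sum_eq_zero
    intro k _
    apply indicator_of_notMem
    intro h
    apply hyI
    have h' := uIoc_subset_uIcc h
    exact (uIcc_subset_Icc ⟨hlo _ (hmem k), hhi _ (hmem k)⟩ ⟨hlo _ (hmem (k+1)), hhi _ (hmem (k+1))⟩) h'

theorem var_ne_top (hcomp : IsCompact K) (hconv : Convex ℝ K) (hint : (interior K).Nonempty)
    (γ : ℝ → EuclideanSpace ℝ (Fin 2))
    (hγcont : ContinuousOn γ (Set.Icc 0 1))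
    (hγinj : Set.InjOn γ (Set.Ico 0 1))
    (hγimg : γ '' Set.Icc 0 1 = frontier K) : eVariationOn γ (Set.Icc 0 1) ≠ ⊤ := by
  obtain ⟨C, hC, h1⟩ := comp_var_le hcomp hconv hint γ hγcont hγinj hγimg 0
  obtain ⟨D, hD, h2⟩ := comp_var_le hcomp hconv hint γ hγcont hγinj hγimg (Real.pi / 2)
  refine ne_top_of_le_ne_top (ENNReal.add_ne_top.2 ⟨hC, hD⟩) ?_
  refine iSup_le ?_
  rintro ⟨n, u, hu, hmem⟩
  refine le_trans ?_ (add_le_add (h1 n u hu hmem) (h2 n u hu hmem))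
  rw [← Finset.sum_add_distrib]
  apply Finset.sum_le_sum
  intro k _
  rw [edist_dist, ← ENNReal.ofReal_add (abs_nonneg _) (abs_nonneg _), dist_eq_norm]
  apply ENNReal.ofReal_le_ofReal
  simp only
  set v := γ (u (k+1)) - γ (u k) with hv
  rw [← ip_sub, ← ip_sub, ← hv]
  apply abs_le_of_sq_le_sq' _ (by positivity) |>.2
  rw [norm_sq_two]
  simp only [ip, Real.cos_zero, Real.sin_zero, Real.cos_pi_div_two, Real.sin_pi_div_two, mul_one, mul_zero, add_zero, zero_add]
  have := mul_nonneg (abs_nonneg (v 0)) (abs_nonneg (v 1))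
  nlinarith [sq_abs (v 0), sq_abs (v 1)]
end

theorem periodic_gap {f : ℝ → ℝ} (hf : Continuous f) (hper : Function.Periodic f (2 * Real.pi)) {a : ℝ}
    (h : ∀ θ, a < f θ) : ∃ b > a, ∀ θ, b ≤ f θ := by
  have hpi := Real.pi_pos
  obtain ⟨x, hx, hmin⟩ := (isCompact_Icc (a := (0:ℝ)) (b := 0 + 2 * Real.pi)).exists_isMinOn
    ⟨0, by constructor <;> linarith⟩ hf.continuousOn
  refine ⟨f x, h x, fun θ => ?_⟩
  obtain ⟨y, hy, hy'⟩ := hper.exists_mem_Ico (by positivity) θ 0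
  rw [hy']
  exact hmin (Ico_subset_Icc_self hy)

theorem shift_gap {f : ℝ → ℝ} (hf : Continuous f) (hper : Function.Periodic f (2 * Real.pi)) {r α : ℝ}
    (hr : ∀ θ, r ≤ f θ) (hα : ∀ θ ∈ Icc α (α + Real.pi), f θ ≠ r) :
    ∃ t : ℝ, ∃ b > r, ∀ θ, b ≤ f θ - t * Real.cos (α + Real.pi / 2 - θ) := by
  have hpi := Real.pi_pos
  obtain ⟨x, hx, hmin⟩ := (isCompact_Icc (a := α) (b := α + Real.pi)).exists_isMinOn
    ⟨α, by constructor <;> linarith⟩ hf.continuousOn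
  have hm : r < f x := lt_of_le_of_ne (hr x) (Ne.symm (hα x hx))
  have hp2 : Function.Periodic (fun θ => f θ - (f x - r) / 2 * Real.cos (α + Real.pi / 2 - θ)) (2 * Real.pi) := by
    intro θ
    simp only
    rw [hper θ, show α + Real.pi / 2 - (θ + 2 * Real.pi) = (α + Real.pi / 2 - θ) - 2 * Real.pi by ring,
      Real.cos_sub_two_pi]
  refine ⟨(f x - r) / 2, periodic_gap (by fun_prop) hp2 fun θ => ?_⟩
  obtain ⟨y, hy, hy'⟩ := hp2.exists_mem_Ico (by positivity) θ α
  rw [hy']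
  rcases le_or_gt y (α + Real.pi) with h | h
  · have h1 : f x ≤ f y := hmin (show y ∈ Icc α (α + Real.pi) from ⟨hy.1, h⟩)
    have h2 := Real.cos_le_one (α + Real.pi / 2 - y)
    nlinarith
  · have h2 : Real.cos (α + Real.pi / 2 - y) < 0 := by
      rw [← Real.cos_neg]
      apply Real.cos_neg_of_pi_div_two_lt_of_lt
      · linarith
      · linarith [hy.2]
    have h1 := hr y
    nlinarith

theorem three_zeros {f : ℝ → ℝ} (hf : Continuous f) {ρ : ℝ}
    (h : ∀ α, ∃ θ ∈ Icc α (α + Real.pi), f θ = ρ) :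
    ∃ a0 a1 a2 : ℝ, f a0 = ρ ∧ f a1 = ρ ∧ f a2 = ρ ∧ a0 ≤ a1 ∧ a1 ≤ a2 ∧ a2 ≤ a0 + 2 * Real.pi ∧
      a1 ≤ a0 + Real.pi ∧ a2 ≤ a1 + Real.pi ∧ a0 + 2 * Real.pi ≤ a2 + Real.pi := by
  have hpi := Real.pi_pos
  obtain ⟨a0, -, h0⟩ := h 0
  have hZ : IsClosed {x | f x = ρ} := isClosed_eq hf continuous_const
  obtain ⟨a1, ⟨h1, h1'⟩, hmax⟩ := ((isCompact_Icc (a := a0) (b := a0 + Real.pi)).inter_right hZ).exists_isGreatest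
    ⟨a0, ⟨by constructor <;> linarith, h0⟩⟩
  obtain ⟨a2, ⟨h2, h2'⟩, hmin⟩ := ((isCompact_Icc (a := a0 + Real.pi) (b := a0 + Real.pi + Real.pi)).inter_right hZ).exists_isLeast
    (by obtain ⟨x, hx, hx'⟩ := h (a0 + Real.pi); exact ⟨x, hx, hx'⟩)
  refine ⟨a0, a1, a2, h0, h1', h2', h1.1, by linarith [h1.2, h2.1], by linarith [h2.2], h1.2, ?_, by linarith [h2.1]⟩
  by_contra hc
  push Not at hc
  obtain ⟨x, hx, hx'⟩ := h ((a1 + (a2 - Real.pi)) / 2)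
  have hx1 : a1 < x := by linarith [hx.1]
  have hx2 : x < a2 := by linarith [hx.2]
  rcases le_or_gt x (a0 + Real.pi) with h3 | h3
  · have := hmax ⟨⟨by linarith [h1.1], h3⟩, hx'⟩
    linarith
  · have := hmin ⟨⟨h3.le, by linarith [h2.2]⟩, hx'⟩
    linarith

section
variable {K : Set (EuclideanSpace ℝ (Fin 2))}

theorem ball_subset_of_le_hs (hK : IsCompact K) (hconv : Convex ℝ K) (hne : K.Nonempty) {c : EuclideanSpace ℝ (Fin 2)}
    {ρ : ℝ} (h : ∀ θ, ρ ≤ hs K c θ) : Metric.closedBall c ρ ⊆ K := by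
  intro y hy
  by_contra hyK
  obtain ⟨f, u, h1, h2⟩ := geometric_hahn_banach_closed_point hconv hK.isClosed hyK
  set v := (InnerProductSpace.toDual ℝ (EuclideanSpace ℝ (Fin 2))).symm f with hv
  have hfv : ∀ x, f x = v 0 * x 0 + v 1 * x 1 := by
    intro x
    have : f x = inner ℝ v x := by rw [hv, InnerProductSpace.toDual_symm_apply]
    rw [this, PiLp.inner_apply]
    simp [mul_comm]
  obtain ⟨α, hα⟩ := ip_polar v
  have hv0 : v 0 = ‖v‖ * Real.cos α := by
    have := hα 0
    simpa [ip] using this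
  have hv1 : v 1 = ‖v‖ * Real.sin α := by
    have := hα (Real.pi / 2)
    simpa [ip, Real.cos_pi_div_two_sub] using this
  have hf : ∀ x, f x = ‖v‖ * ip x α := by
    intro x
    rw [hfv, hv0, hv1, ip]; ring
  obtain ⟨p, hp, hp'⟩ := hs_attained hK hne c α
  have h3 : f p < f y := (h1 p hp).trans h2
  rw [hf, hf] at h3
  have h4 := lt_of_mul_lt_mul_left h3 (norm_nonneg v)
  have h5 := h α
  have h6 := ip_le (y - c) α
  rw [Metric.mem_closedBall, dist_eq_norm] at hy
  rw [hp', ip_sub] at h5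
  rw [ip_sub] at h6
  linarith

theorem subset_ball_of_hs_le (hK : IsCompact K) {c : EuclideanSpace ℝ (Fin 2)}
    {ρ : ℝ} (h : ∀ θ, hs K c θ ≤ ρ) : K ⊆ Metric.closedBall c ρ := by
  intro x hx
  rw [Metric.mem_closedBall, dist_eq_norm]
  obtain ⟨α, hα⟩ := ip_polar (x - c)
  have h1 := (le_hs hK c hx α).trans (h α)
  rw [hα, sub_self, Real.cos_zero, mul_one] at h1
  exact h1

theorem hs_shift (hK : IsCompact K) (hne : K.Nonempty) (c w : EuclideanSpace ℝ (Fin 2)) (θ : ℝ) :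
    hs K (c + w) θ = hs K c θ - ip w θ := by
  obtain ⟨p, hp, hp'⟩ := hs_attained hK hne c θ
  obtain ⟨q, hq, hq'⟩ := hs_attained hK hne (c + w) θ
  have h1 := le_hs hK c hq θ
  have h2 := le_hs hK (c + w) hp θ
  rw [hp'] at h1 ⊢
  rw [hq'] at h2 ⊢
  simp only [ip_sub, ip_add] at h1 h2 ⊢
  linarith

theorem contact_in (hK : IsCompact K) (hconv : Convex ℝ K) (hint : (interior K).Nonempty) :
    ∃ c, (∀ θ, 0 ≤ hs K c θ) ∧ ∀ α, ∃ θ ∈ Icc α (α + Real.pi), hs K c θ = inradius K := by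
  have hne : K.Nonempty := hint.mono interior_subset
  have hcne : (Kᶜ).Nonempty := by
    rw [nonempty_compl]; exact hK.ne_univ
  obtain ⟨c, hc, hmax⟩ := hK.exists_isMaxOn hne (Metric.continuous_infDist_pt Kᶜ).continuousOn
  set r := Metric.infDist c Kᶜ with hr
  have hle : ∀ ρ c', 0 ≤ ρ → Metric.closedBall c' ρ ⊆ K → ρ ≤ r := by
    intro ρ c' hρ hsub
    have hc' : c' ∈ K := hsub (Metric.mem_closedBall_self hρ)
    refine le_trans ?_ (hmax hc')
    rw [Metric.le_infDist hcne]
    intro y hy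
    by_contra hlt
    push Not at hlt
    exact hy (hsub (by rw [Metric.mem_closedBall, dist_comm]; exact hlt.le))
  have hr0 : 0 < r := by
    obtain ⟨z, hz⟩ := hint
    obtain ⟨ε, hε, hb⟩ := Metric.mem_nhds_iff.1 (mem_interior_iff_mem_nhds.1 hz)
    have := hle (ε / 2) z (by positivity) ((Metric.closedBall_subset_ball (by linarith)).trans hb)
    linarith
  have hball : Metric.closedBall c r ⊆ K := by
    rw [← closure_ball c hr0.ne']
    exact closure_minimal Metric.ball_infDist_compl_subset hK.isClosed
  have hin : inradius K = r := by
    apply IsGreatest.csSup_eq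
    refine ⟨⟨hr0.le, c, hball⟩, ?_⟩
    rintro ρ ⟨hρ, c', h⟩
    exact hle ρ c' hρ h
  have hge : ∀ θ, r ≤ hs K c θ := by
    intro θ
    have hm : c + r • uv θ ∈ K := by
      apply hball
      rw [Metric.mem_closedBall, dist_eq_norm, add_sub_cancel_left, norm_smul, norm_uv, Real.norm_eq_abs,
        abs_of_pos hr0, mul_one]
    have := le_hs hK c hm θ
    rwa [add_sub_cancel_left, ip_smul, ip_uv, sub_self, Real.cos_zero, mul_one] at this
  refine ⟨c, fun θ => hr0.le.trans (hge θ), ?_⟩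
  rw [hin]
  by_contra hcon
  push Not at hcon
  obtain ⟨α, hα⟩ := hcon
  obtain ⟨t, b, hb, hbt⟩ := shift_gap (hs_continuous hK hne c) (hs_periodic c) hge hα
  have := hle b (c + t • uv (α + Real.pi / 2)) (by linarith) (ball_subset_of_le_hs hK hconv hne (fun θ => by
    rw [hs_shift hK hne, ip_smul, ip_uv]; exact hbt θ))
  linarith

theorem contact_out (hK : IsCompact K) (hne : K.Nonempty) :
    ∃ c, (∀ θ, 0 ≤ hs K c θ) ∧ ∀ α, ∃ θ ∈ Icc α (α + Real.pi), hs K c θ = circumradius K := by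
  let F : EuclideanSpace ℝ (Fin 2) → ℝ := fun c => sSup ((fun x => dist x c) '' K)
  have hFc : Continuous F := by
    apply IsCompact.continuous_sSup hK (f := fun c x => dist x c)
    exact continuous_snd.dist continuous_fst
  have hFle : ∀ c, ∀ x ∈ K, dist x c ≤ F c := by
    intro c x hx
    exact le_csSup (hK.image (continuous_id.dist continuous_const)).bddAbove ⟨x, hx, rfl⟩
  obtain ⟨x0, hx0⟩ := id hne
  have hlim : Filter.Tendsto F (Filter.cocompact _) Filter.atTop := by
    refine Filter.tendsto_atTop_mono (fun c => hFle c x0 hx0) ?_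
    exact tendsto_dist_left_cocompact_atTop x0
  obtain ⟨c, hc⟩ := hFc.exists_forall_le hlim
  set R := F c with hR
  have hle : ∀ ρ c', K ⊆ Metric.closedBall c' ρ → R ≤ ρ := by
    intro ρ c' h
    refine (hc c').trans (csSup_le (hne.image _) ?_)
    rintro _ ⟨x, hx, rfl⟩
    exact h hx
  have hR0 : 0 ≤ R := dist_nonneg.trans (hFle c x0 hx0)
  have hball : K ⊆ Metric.closedBall c R := fun x hx => hFle c x hx
  have hout : circumradius K = R := by
    apply IsLeast.csInf_eq
    refine ⟨⟨hR0, c, hball⟩, ?_⟩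
    rintro ρ ⟨-, c', h⟩
    exact hle ρ c' h
  have hge : ∀ θ, hs K c θ ≤ R := by
    intro θ
    obtain ⟨p, hp, hp'⟩ := hs_attained hK hne c θ
    rw [hp']
    have := hball hp
    rw [Metric.mem_closedBall, dist_eq_norm] at this
    exact (ip_le _ _).trans this
  have hcontact : ∀ α, ∃ θ ∈ Icc α (α + Real.pi), hs K c θ = R := by
    by_contra hcon
    push Not at hcon
    obtain ⟨α, hα⟩ := hcon
    obtain ⟨t, b, hb, hbt⟩ := shift_gap (f := fun θ => - hs K c θ) (hs_continuous hK hne c).neg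
      (fun θ => by simp only [hs_periodic c θ]) (r := -R) (α := α) (fun θ => neg_le_neg (hge θ)) (fun θ hθ h => hα θ hθ (neg_inj.1 h))
    have := hle (-b) (c + (-t) • uv (α + Real.pi / 2)) (subset_ball_of_hs_le hK (fun θ => by
      rw [hs_shift hK hne, ip_smul, ip_uv]; linarith [hbt θ]))
    linarith
  refine ⟨c, ?_, by rw [hout]; exact hcontact⟩
  intro θ
  obtain ⟨φ, hφ, hφ'⟩ := hcontact (θ - Real.pi / 2)
  obtain ⟨p, hp, hp'⟩ := hs_attained hK hne c φ
  have h1 := hball hp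
  rw [Metric.mem_closedBall, dist_eq_norm] at h1
  have h2 : ip (p - c) φ = R := by rw [← hp', hφ']
  have h3 := norm_sq_two (p - c)
  have h4 : ‖p - c‖ ^ 2 ≤ R ^ 2 := by gcongr
  set v := p - c with hv
  have h5 : (v 0 - R * Real.cos φ) ^ 2 + (v 1 - R * Real.sin φ) ^ 2 ≤ 0 := by
    have : (v 0 - R * Real.cos φ) ^ 2 + (v 1 - R * Real.sin φ) ^ 2 = ‖v‖ ^ 2 - R ^ 2 := by
      rw [h3]; unfold ip at h2
      linear_combination R ^ 2 * Real.sin_sq_add_cos_sq φ - 2 * R * h2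
    linarith
  have h6 : v 0 = R * Real.cos φ := by
    have := sq_nonneg (v 1 - R * Real.sin φ)
    have h : (v 0 - R * Real.cos φ) ^ 2 = 0 := le_antisymm (by linarith) (sq_nonneg _)
    exact sub_eq_zero.1 (pow_eq_zero_iff (two_ne_zero) |>.1 h)
  have h7 : v 1 = R * Real.sin φ := by
    have := sq_nonneg (v 0 - R * Real.cos φ)
    have h : (v 1 - R * Real.sin φ) ^ 2 = 0 := le_antisymm (by linarith) (sq_nonneg _)
    exact sub_eq_zero.1 (pow_eq_zero_iff (two_ne_zero) |>.1 h)
  refine le_trans ?_ (le_hs hK c hp θ)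
  rw [← hv, ip, h6, h7]
  have : R * Real.cos φ * Real.cos θ + R * Real.sin φ * Real.sin θ = R * Real.cos (φ - θ) := by
    rw [Real.cos_sub]; ring
  rw [this]
  apply mul_nonneg hR0
  apply Real.cos_nonneg_of_mem_Icc
  constructor <;> linarith [hφ.1, hφ.2]
end

/-- `∫ (f² - f'²)` for the sinusoid `f` on an interval of length `δ` with end values `a`, `b`. -/
def qf (δ a b : ℝ) : ℝ := (2 * a * b - (a ^ 2 + b ^ 2) * Real.cos δ) / Real.sin δ

theorem qf_le {φ δ a b : ℝ} (h1 : 0 < Real.sin φ) (h2 : 0 < Real.sin δ) (h3 : 0 < Real.sin (φ + δ)) :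
    qf δ a b ≤ a ^ 2 * (Real.cos φ / Real.sin φ) - b ^ 2 * (Real.cos (φ + δ) / Real.sin (φ + δ)) := by
  have key : a ^ 2 * (Real.cos φ / Real.sin φ) - b ^ 2 * (Real.cos (φ + δ) / Real.sin (φ + δ)) - qf δ a b
      = (a * Real.sin (φ + δ) - b * Real.sin φ) ^ 2 / (Real.sin φ * Real.sin δ * Real.sin (φ + δ)) := by
    have hd : Real.sin φ = Real.sin (φ + δ) * Real.cos δ - Real.cos (φ + δ) * Real.sin δ := by
      rw [← Real.sin_sub]; ring_nf
    have hc : Real.sin (φ + δ) = Real.sin φ * Real.cos δ + Real.cos φ * Real.sin δ := Real.sin_add _ _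
    unfold qf
    rw [eq_div_iff (by positivity)]
    set s := Real.sin φ
    set s' := Real.sin (φ + δ)
    set k := Real.cos φ
    set k' := Real.cos (φ + δ)
    set σ := Real.sin δ
    set κ := Real.cos δ
    have : (a ^ 2 * (k / s) - b ^ 2 * (k' / s') - (2 * a * b - (a ^ 2 + b ^ 2) * κ) / σ) * (s * σ * s')
        = a ^ 2 * k * σ * s' - b ^ 2 * k' * s * σ - (2 * a * b - (a ^ 2 + b ^ 2) * κ) * s * s' := by
      field_simp
    rw [this]
    linear_combination (-(a ^ 2 * s')) * hc - b ^ 2 * s * hd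
  have : 0 ≤ (a * Real.sin (φ + δ) - b * Real.sin φ) ^ 2 / (Real.sin φ * Real.sin δ * Real.sin (φ + δ)) := by
    positivity
  linarith

theorem discrete_wirtinger (g : ℕ → ℝ) (n : ℕ) (hn : 2 ≤ n) (δ : ℝ) (hδ : 0 < δ) (hπ : n * δ ≤ Real.pi)
    (h0 : g 0 = 0) (h1 : g n = 0) : ∑ j ∈ Finset.range n, qf δ (g j) (g (j + 1)) ≤ 0 := by
  have key : ∀ j : ℕ, ((j + 1 : ℕ) : ℝ) * δ < Real.pi → ∑ i ∈ Finset.range (j + 1), qf δ (g i) (g (i + 1)) ≤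
      - (g (j + 1) ^ 2 * (Real.cos ((j + 1 : ℕ) * δ) / Real.sin ((j + 1 : ℕ) * δ))) := by
    intro j
    induction j with
    | zero =>
      intro _
      simp [h0, qf]
      apply le_of_eq; ring
    | succ j ih =>
      intro hj
      have hlt : ((j + 1 : ℕ) : ℝ) * δ < Real.pi := by
        refine lt_of_le_of_lt ?_ hj
        gcongr; omega
      rw [Finset.sum_range_succ]
      have hpos : 0 < ((j + 1 : ℕ) : ℝ) * δ := by positivity
      have e : ((j + 1 + 1 : ℕ) : ℝ) * δ = ((j + 1 : ℕ) : ℝ) * δ + δ := by push_cast; ring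
      rw [e] at hj ⊢
      have := qf_le (a := g (j + 1)) (b := g (j + 1 + 1)) (Real.sin_pos_of_pos_of_lt_pi hpos hlt) (Real.sin_pos_of_pos_of_lt_pi hδ (by linarith))
        (Real.sin_pos_of_pos_of_lt_pi (by linarith) hj)
      linarith [ih hlt]
  obtain ⟨m, rfl⟩ : ∃ m, n = m + 1 + 1 := ⟨n - 2, by omega⟩
  rcases lt_or_eq_of_le hπ with h | h
  · have := key (m + 1) h
    rw [h1] at this
    simpa using this
  · have e : ((m + 1 : ℕ) : ℝ) * δ = Real.pi - δ := by rw [← h]; push_cast; ring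
    have := key m (by rw [e]; linarith)
    rw [Finset.sum_range_succ, h1]
    rw [e, Real.cos_pi_sub, Real.sin_pi_sub] at this
    have e2 : qf δ (g (m + 1)) 0 = - (g (m + 1) ^ 2 * (Real.cos δ / Real.sin δ)) := by
      unfold qf; ring
    rw [e2]
    have e3 : - (g (m + 1) ^ 2 * (-Real.cos δ / Real.sin δ)) = (g (m + 1) ^ 2 * (Real.cos δ / Real.sin δ)) := by ring
    linarith

theorem half_tan_bounds {δ : ℝ} (h0 : 0 < δ) (h1 : δ ≤ 1) :
    |(1 - Real.cos δ) / Real.sin δ - δ / 2| ≤ δ ^ 2 / 4 := by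
  obtain ⟨x, rfl⟩ : ∃ x, δ = 2 * x := ⟨δ / 2, by ring⟩
  have hx : 0 < x := by linarith
  have hpi := Real.pi_gt_three
  have hc : 0 < Real.cos x := Real.cos_pos_of_mem_Ioo ⟨by linarith, by linarith⟩
  have hs : 0 < Real.sin x := Real.sin_pos_of_pos_of_lt_pi hx (by linarith)
  have e : (1 - Real.cos (2 * x)) / Real.sin (2 * x) = Real.tan x := by
    rw [Real.cos_two_mul, Real.sin_two_mul, Real.tan_eq_sin_div_cos]
    field_simp
    linear_combination (-2) * Real.sin_sq_add_cos_sq x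
  have hlow := Real.lt_tan hx (by linarith)
  have hup : Real.tan x ≤ x + x ^ 2 := by
    rw [Real.tan_eq_sin_div_cos, div_le_iff₀ hc]
    have h3 := Real.one_sub_sq_div_two_le_cos (x := x)
    have h4 := Real.sin_lt hx
    nlinarith [mul_pos hx hx, mul_pos hx (mul_pos hx hx)]
  rw [e, abs_le]
  constructor <;> nlinarith

theorem piece_bound {h : ℝ → ℝ} {M ρ ε : ℝ} (hM : 0 < M) (hb : ∀ θ, |h θ| ≤ M)
    (hl : ∀ θ φ, |h θ - h φ| ≤ M * |θ - φ|) (hc : Continuous h) (hρ : 0 ≤ ρ) (hε : 0 < ε) :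
    ∃ η > 0, ∀ x δ, 0 < δ → δ < η →
      1 / 2 * qf δ (h x) (h (x + δ)) ≤ 1 / 2 * qf δ (h x - ρ) (h (x + δ) - ρ) +
        (ρ * ∫ t in x..(x + δ), h t) - ρ ^ 2 * δ / 2 + ε * δ := by
  set C := 2 * ρ * M + ρ ^ 2 with hC
  have hC0 : 0 ≤ C := by positivity
  refine ⟨min 1 (ε / (C / 4 + ρ * M + 1)), by positivity, fun x δ hδ hlt => ?_⟩
  have hδ1 : δ ≤ 1 := hlt.le.trans (min_le_left _ _)
  have hδ2 : δ * (C / 4 + ρ * M + 1) ≤ ε := by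
    rw [← le_div_iff₀ (by positivity)]
    exact hlt.le.trans (min_le_right _ _)
  have hT := half_tan_bounds hδ hδ1
  set T := (1 - Real.cos δ) / Real.sin δ with hTd
  have hid : qf δ (h x) (h (x + δ)) = qf δ (h x - ρ) (h (x + δ) - ρ) + 2 * (ρ * (h x + h (x + δ)) - ρ ^ 2) * T := by
    rw [hTd]; unfold qf; ring
  have hX : |ρ * (h x + h (x + δ)) - ρ ^ 2| ≤ C := by
    have h1 := abs_le.1 (hb x)
    have h2 := abs_le.1 (hb (x + δ))
    rw [abs_le, hC]
    constructor <;> nlinarith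
  set X := ρ * (h x + h (x + δ)) - ρ ^ 2 with hXd
  have hXT : X * T ≤ X * (δ / 2) + C * (δ ^ 2 / 4) := by
    have : |X * (T - δ / 2)| ≤ C * (δ ^ 2 / 4) := by
      rw [abs_mul]; exact mul_le_mul hX hT (abs_nonneg _) hC0
    have := (le_abs_self _).trans this
    linarith
  have hint : ((h x + h (x + δ)) / 2 - M * δ) * δ ≤ ∫ t in x..(x + δ), h t := by
    have : ∫ t in x..(x + δ), ((h x + h (x + δ)) / 2 - M * δ) ≤ ∫ t in x..(x + δ), h t := by
      apply intervalIntegral.integral_mono_on (by linarith) (by simp) (hc.intervalIntegrable _ _)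
      intro t ht
      have h1 := (abs_le.1 (hl x t)).2
      have h2 := (abs_le.1 (hl (x + δ) t)).2
      rw [abs_of_nonpos (by linarith [ht.1])] at h1
      rw [abs_of_nonneg (by linarith [ht.2])] at h2
      nlinarith [ht.1, ht.2]
    rw [intervalIntegral.integral_const, smul_eq_mul] at this
    linarith
  have hint2 := mul_le_mul_of_nonneg_left hint hρ
  have hδ3 := mul_le_mul_of_nonneg_right hδ2 hδ.le
  rw [hid]
  nlinarith

/-- A partition of `[a, b]` with mesh `< η` along which the area functional is controlled. -/
def Chain (h : ℝ → ℝ) (ρ ε η a b : ℝ) : Prop :=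
  ∃ (N : ℕ) (θ : ℕ → ℝ), θ 0 = a ∧ θ N = b ∧ (∀ j < N, 0 < θ (j + 1) - θ j ∧ θ (j + 1) - θ j < η) ∧
    ∑ j ∈ Finset.range N, 1 / 2 * qf (θ (j + 1) - θ j) (h (θ j)) (h (θ (j + 1))) ≤
      (ρ * ∫ t in a..b, h t) - ρ ^ 2 * (b - a) / 2 + ε * (b - a)

theorem chain_refl (h : ℝ → ℝ) (ρ ε η a : ℝ) : Chain h ρ ε η a a :=
  ⟨0, fun _ => a, rfl, rfl, by simp, by simp⟩

theorem chain_trans {h : ℝ → ℝ} (hc : Continuous h) {ρ ε η a b c : ℝ} (h1 : Chain h ρ ε η a b)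
    (h2 : Chain h ρ ε η b c) : Chain h ρ ε η a c := by
  obtain ⟨N, θ, h10, h11, h12, h13⟩ := h1
  obtain ⟨N', θ', h20, h21, h22, h23⟩ := h2
  have e1 : ∀ j ≤ N, (if j ≤ N then θ j else θ' (j - N)) = θ j := fun j hj => if_pos hj
  have e2 : ∀ j, (if N + j ≤ N then θ (N + j) else θ' (N + j - N)) = θ' j := by
    intro j
    rcases Nat.eq_zero_or_pos j with rfl | hj
    · simp [h11, h20]
    · rw [if_neg (by omega), Nat.add_sub_cancel_left]
  refine ⟨N + N', fun j => if j ≤ N then θ j else θ' (j - N), ?_, ?_, ?_, ?_⟩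
  · beta_reduce; rw [e1 0 (by omega)]; exact h10
  · beta_reduce; rw [e2]; exact h21
  · intro j hj
    beta_reduce
    rcases lt_or_ge j N with hlt | hge
    · rw [e1 j hlt.le, e1 (j + 1) hlt]; exact h12 j hlt
    · obtain ⟨k, rfl⟩ := Nat.exists_eq_add_of_le hge
      rw [add_assoc, e2, e2]; exact h22 k (by omega)
  · rw [Finset.sum_range_add, ← intervalIntegral.integral_add_adjacent_intervals
      (hc.intervalIntegrable a b) (hc.intervalIntegrable b c)]
    have s1 : ∀ j ∈ Finset.range N, 1 / 2 * qf ((if j + 1 ≤ N then θ (j + 1) else θ' (j + 1 - N)) - (if j ≤ N then θ j else θ' (j - N)))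
        (h (if j ≤ N then θ j else θ' (j - N))) (h (if j + 1 ≤ N then θ (j + 1) else θ' (j + 1 - N))) =
        1 / 2 * qf (θ (j + 1) - θ j) (h (θ j)) (h (θ (j + 1))) := by
      intro j hj
      rw [Finset.mem_range] at hj
      rw [e1 j hj.le, e1 (j + 1) hj]
    rw [Finset.sum_congr rfl s1]
    simp only [add_assoc, e2]
    linarith

theorem chain_arc {h : ℝ → ℝ} {M ρ ε η a b : ℝ} (hM : 0 < M) (hb : ∀ θ, |h θ| ≤ M)
    (hl : ∀ θ φ, |h θ - h φ| ≤ M * |θ - φ|) (hc : Continuous h) (hρ : 0 ≤ ρ) (hε : 0 < ε) (hη : 0 < η)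
    (hab : a ≤ b) (hba : b ≤ a + Real.pi) (ha : h a = ρ) (hb' : h b = ρ) : Chain h ρ ε η a b := by
  rcases eq_or_lt_of_le hab with rfl | hlt
  · exact chain_refl _ _ _ _ _
  obtain ⟨η', hη', hp⟩ := piece_bound hM hb hl hc hρ hε
  obtain ⟨m, hm⟩ := exists_nat_one_div_lt (show 0 < min η η' / (b - a) from div_pos (lt_min hη hη') (by linarith))
  set n : ℕ := m + 2 with hn
  have hba0 : 0 < b - a := by linarith
  have hn0 : (0:ℝ) < n := by rw [hn]; positivity
  set δ := (b - a) / n with hδ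
  have hδ0 : 0 < δ := div_pos hba0 hn0
  have hnδ : n * δ = b - a := by rw [hδ]; field_simp
  have hδlt : δ < min η η' := by
    rw [lt_div_iff₀ hba0] at hm
    refine lt_of_le_of_lt ?_ hm
    rw [hδ, div_mul_eq_mul_div, one_mul]
    apply div_le_div_of_nonneg_left hba0.le (by positivity)
    rw [hn]; push_cast; linarith
  let θ : ℕ → ℝ := fun j => a + j * δ
  have hstep : ∀ j, θ (j + 1) = θ j + δ := by intro j; simp only [θ]; push_cast; ring
  have h0 : θ 0 = a := by simp [θ]
  have hN : θ n = b := by simp only [θ, hnδ]; ring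
  refine ⟨n, θ, h0, hN, ?_, ?_⟩
  · intro j _
    rw [hstep, add_sub_cancel_left]
    exact ⟨hδ0, hδlt.trans_le (min_le_left _ _)⟩
  · have hw := discrete_wirtinger (fun j => h (θ j) - ρ) n (by omega) δ hδ0 (by rw [hnδ]; linarith)
      (by simp only [h0, ha, sub_self]) (by simp only [hN, hb', sub_self])
    have hi : ∑ j ∈ Finset.range n, ∫ t in (θ j)..(θ (j + 1)), h t = ∫ t in a..b, h t := by
      rw [intervalIntegral.sum_integral_adjacent_intervals (fun k _ => hc.intervalIntegrable _ _), h0, hN]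
    have hs : ∀ j ∈ Finset.range n, 1 / 2 * qf (θ (j + 1) - θ j) (h (θ j)) (h (θ (j + 1))) ≤
        1 / 2 * qf δ (h (θ j) - ρ) (h (θ (j + 1)) - ρ) + (ρ * ∫ t in (θ j)..(θ (j + 1)), h t) - ρ ^ 2 * δ / 2 + ε * δ := by
      intro j _
      rw [hstep, add_sub_cancel_left]
      exact hp _ _ hδ0 (hδlt.trans_le (min_le_right _ _))
    refine (Finset.sum_le_sum hs).trans ?_
    rw [Finset.sum_add_distrib, Finset.sum_sub_distrib, Finset.sum_add_distrib, ← Finset.mul_sum, ← Finset.mul_sum, hi]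
    simp only [Finset.sum_const, Finset.card_range, nsmul_eq_mul]
    have e1 : (n:ℝ) * (ρ ^ 2 * δ / 2) = ρ ^ 2 * (b - a) / 2 := by rw [← hnδ]; ring
    have e2 : (n:ℝ) * (ε * δ) = ε * (b - a) := by rw [← hnδ]; ring
    rw [e1, e2]
    linarith

/-- Standard triangle. -/
def triS (s t : ℝ) : Set (EuclideanSpace ℝ (Fin 2)) :=
  {x | 0 ≤ x 0 ∧ x 0 ≤ 1 ∧ s * x 0 ≤ x 1 ∧ x 1 ≤ t * x 0}

theorem volume_triS {s t : ℝ} (hst : s ≤ t) : volume (triS s t) = ENNReal.ofReal ((t - s) / 2) := by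
  let S : Set (ℝ × ℝ) := {x | 0 ≤ x.1 ∧ x.1 ≤ 1 ∧ s * x.1 ≤ x.2 ∧ x.2 ≤ t * x.1}
  have hS : MeasurableSet S := by
    have c1 : IsClosed {x : ℝ × ℝ | 0 ≤ x.1} := isClosed_le continuous_const continuous_fst
    have c2 : IsClosed {x : ℝ × ℝ | x.1 ≤ 1} := isClosed_le continuous_fst continuous_const
    have c3 : IsClosed {x : ℝ × ℝ | s * x.1 ≤ x.2} := isClosed_le (by fun_prop) (by fun_prop)
    have c4 : IsClosed {x : ℝ × ℝ | x.2 ≤ t * x.1} := isClosed_le (by fun_prop) (by fun_prop)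
    exact (c1.inter (c2.inter (c3.inter c4))).measurableSet
  have hmp := (volume_preserving_finTwoArrow ℝ).comp (PiLp.volume_preserving_ofLp (Fin 2))
  have e : triS s t = ((MeasurableEquiv.finTwoArrow (α := ℝ)) ∘ WithLp.ofLp) ⁻¹' S := by
    ext x; simp [triS, S, MeasurableEquiv.finTwoArrow]
  rw [e, hmp.measure_preimage hS.nullMeasurableSet, Measure.volume_eq_prod, Measure.prod_apply hS]
  have e2 : ∀ x : ℝ, volume (Prod.mk x ⁻¹' S) = (Icc (0:ℝ) 1).indicator (fun x => ENNReal.ofReal ((t - s) * x)) x := by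
    intro x
    by_cases hx : x ∈ Icc (0:ℝ) 1
    · rw [indicator_of_mem hx]
      have : Prod.mk x ⁻¹' S = Icc (s * x) (t * x) := by
        ext y; simp [S, hx.1, hx.2]
      rw [this, Real.volume_Icc]; ring_nf
    · rw [indicator_of_notMem hx]
      have : Prod.mk x ⁻¹' S = ∅ := by
        ext y
        simp only [S, mem_preimage, mem_setOf_eq, mem_empty_iff_false, iff_false]
        exact fun h => hx ⟨h.1, h.2.1⟩
      rw [this, measure_empty]
  simp_rw [e2]
  rw [lintegral_indicator measurableSet_Icc, ← ofReal_integral_eq_lintegral_ofReal]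
  · rw [integral_Icc_eq_integral_Ioc, ← intervalIntegral.integral_of_le zero_le_one, intervalIntegral.integral_const_mul,
      integral_id]
    norm_num
    ring_nf
  · exact (Continuous.continuousOn (by fun_prop)).integrableOn_compact isCompact_Icc
  · filter_upwards [ae_restrict_mem measurableSet_Icc] with x hx
    exact mul_nonneg (by linarith) hx.1

/-- Linear map sending the standard triangle to a triangle with base at distance `H` in
direction `φ`. -/
def triF (φ H : ℝ) : EuclideanSpace ℝ (Fin 2) →ₗ[ℝ] EuclideanSpace ℝ (Fin 2) :=
  Matrix.toLpLin 2 2 !![H * Real.cos φ, -Real.sin φ; H * Real.sin φ, Real.cos φ]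

theorem triF_det (φ H : ℝ) : LinearMap.det (triF φ H) = H := by
  rw [triF, Matrix.toLpLin_eq_toLin, LinearMap.det_toLin, Matrix.det_fin_two]
  simp
  linear_combination H * Real.sin_sq_add_cos_sq φ

theorem triF_apply (φ H : ℝ) (x) :
    triF φ H x = !₂[H * Real.cos φ * x 0 - Real.sin φ * x 1, H * Real.sin φ * x 0 + Real.cos φ * x 1] := by
  rw [triF, Matrix.toLpLin_apply]
  ext i
  fin_cases i <;> simp [Matrix.mulVec, dotProduct] <;> ring

theorem mem_tri {v : EuclideanSpace ℝ (Fin 2)} {φ δ₀ δ₁ H H₀ H₁ m : ℝ} (hm0 : 0 ≤ m) (hm1 : m ≤ 1)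
    (h0 : 0 < Real.sin δ₀) (h1 : 0 < Real.sin δ₁) (hv : ip v φ = m * H)
    (hv1 : ip v (φ + δ₁) ≤ m * H₁) (hv0 : ip v (φ - δ₀) ≤ m * H₀) :
    v ∈ triF φ H '' triS (-((H₀ - H * Real.cos δ₀) / Real.sin δ₀)) ((H₁ - H * Real.cos δ₁) / Real.sin δ₁) := by
  refine ⟨!₂[m, - v 0 * Real.sin φ + v 1 * Real.cos φ], ⟨by simpa using hm0, by simpa using hm1, ?_, ?_⟩, ?_⟩
  · simp only [ip, Real.cos_sub, Real.sin_sub] at hv hv0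
    simp only [Fin.isValue, PiLp.toLp_apply, Matrix.cons_val_zero, Matrix.cons_val_one]
    rw [neg_mul, neg_le, div_mul_eq_mul_div, le_div_iff₀ h0]
    linear_combination hv0 - Real.cos δ₀ * hv
  · simp only [ip, Real.cos_add, Real.sin_add] at hv hv1
    simp only [Fin.isValue, PiLp.toLp_apply, Matrix.cons_val_zero, Matrix.cons_val_one]
    rw [div_mul_eq_mul_div, le_div_iff₀ h1]
    linear_combination hv1 - Real.cos δ₁ * hv
  · rw [triF_apply]
    simp only [ip] at hv
    have := Real.sin_sq_add_cos_sq φ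
    ext i
    fin_cases i
    · simp
      linear_combination -Real.cos φ * hv + v 0 * this
    · simp
      linear_combination -Real.sin φ * hv + v 1 * this

theorem eq_zero_of_ip {v : EuclideanSpace ℝ (Fin 2)} {φ δ₀ δ₁ : ℝ}
    (h0 : 0 < Real.sin δ₀) (h1 : 0 < Real.sin δ₁) (hv : ip v φ ≤ 0)
    (hv1 : ip v (φ + δ₁) ≤ ip v φ) (hv0 : ip v (φ - δ₀) ≤ ip v φ) : v = 0 := by
  have c0 : Real.cos δ₀ < 1 := by nlinarith [Real.sin_sq_add_cos_sq δ₀, Real.cos_le_one δ₀]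
  have c1 : Real.cos δ₁ < 1 := by nlinarith [Real.sin_sq_add_cos_sq δ₁, Real.cos_le_one δ₁]
  set p := ip v φ with hp
  set s := ip v (φ + Real.pi / 2) with hs
  have e1 : ip v (φ + δ₁) = p * Real.cos δ₁ + s * Real.sin δ₁ := by
    rw [hp, hs]; simp only [ip, Real.cos_add, Real.sin_add, Real.cos_pi_div_two, Real.sin_pi_div_two]; ring
  have e0 : ip v (φ - δ₀) = p * Real.cos δ₀ - s * Real.sin δ₀ := by
    rw [hp, hs]; simp only [ip, Real.cos_add, Real.sin_add, Real.cos_sub, Real.sin_sub, Real.cos_pi_div_two, Real.sin_pi_div_two]; ring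
  rw [e1] at hv1
  rw [e0] at hv0
  have hs1 : s ≤ 0 := by
    by_contra h
    push Not at h
    nlinarith [mul_pos h h1]
  have hs0 : 0 ≤ s := by
    by_contra h
    push Not at h
    nlinarith [mul_pos (neg_pos.2 h) h0]
  have hs2 : s = 0 := le_antisymm hs1 hs0
  have hp0 : p = 0 := by
    rw [hs2] at hv1
    nlinarith
  apply eq_of_ip_eq (θ := φ)
  · rw [← hp, hp0]; simp [ip]
  · rw [← hs, hs2]; simp [ip]

theorem volume_tri {φ H s t : ℝ} (hH : 0 ≤ H) (hst : s ≤ t) :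
    volume (triF φ H '' triS s t) = ENNReal.ofReal (H * ((t - s) / 2)) := by
  rw [Measure.addHaar_image_linearMap, triF_det, volume_triS hst, abs_of_nonneg hH, ENNReal.ofReal_mul hH]

theorem area_le {K : Set (EuclideanSpace ℝ (Fin 2))} (hK : IsCompact K) (hne : K.Nonempty)
    (c : EuclideanSpace ℝ (Fin 2)) (hpos : ∀ θ, 0 ≤ hs K c θ) (N : ℕ) (θ : ℕ → ℝ)
    (hθ : θ N = θ 0 + 2 * Real.pi) (hδ : ∀ j < N, 0 < θ (j + 1) - θ j ∧ θ (j + 1) - θ j < Real.pi) :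
    (volume K).toReal ≤ ∑ j ∈ Finset.range N, 1 / 2 * qf (θ (j + 1) - θ j) (hs K c (θ j)) (hs K c (θ (j + 1))) := by
  have hpi := Real.pi_pos
  have hN : 0 < N := by
    rcases Nat.eq_zero_or_pos N with rfl | h
    · linarith
    · exact h
  -- extend by one step
  obtain ⟨τ, hτ, hτN⟩ : ∃ τ : ℕ → ℝ, (∀ k ≤ N, τ k = θ k) ∧ τ (N + 1) = θ 1 + 2 * Real.pi :=
    ⟨fun k => if k ≤ N then θ k else θ 1 + 2 * Real.pi, fun k hk => if_pos hk, if_neg (by omega)⟩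
  have hper := hs_periodic (K := K) c
  have hipper : ∀ v φ, ip v (φ + 2 * Real.pi) = ip v φ := by intro v φ; simp [ip]
  have τ0 : τ N = τ 0 + 2 * Real.pi := by rw [hτ N le_rfl, hτ 0 hN.le, hθ]
  have τ1 : τ (N + 1) = τ 1 + 2 * Real.pi := by rw [hτN, hτ 1 hN]
  set D : ℕ → ℝ := fun k => τ (k + 1) - τ k with hD
  have hDN : D N = D 0 := by simp only [hD, zero_add, τ0, τ1]; ring
  have hDpos : ∀ k ≤ N, 0 < Real.sin (D k) := by
    intro k hk
    have key : ∀ k < N, 0 < Real.sin (D k) := by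
      intro k hk
      have := hδ k hk
      simp only [hD]
      rw [hτ k hk.le, hτ (k + 1) hk]
      exact Real.sin_pos_of_pos_of_lt_pi this.1 this.2
    rcases lt_or_eq_of_le hk with h | rfl
    · exact key k h
    · rw [hDN]; exact key 0 hN
  set H : ℕ → ℝ := fun k => hs K c (τ k) with hH
  have HN : H N = H 0 := by simp only [hH, τ0]; exact hper _
  have HN1 : H (N + 1) = H 1 := by simp only [hH, τ1]; exact hper _
  set sp : ℕ → ℝ := fun k => (H (k + 1) - H k * Real.cos (D k)) / Real.sin (D k) with hsp
  set sm : ℕ → ℝ := fun k => (H k - H (k + 1) * Real.cos (D k)) / Real.sin (D k) with hsm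
  have hnext : ∀ k, τ k + D k = τ (k + 1) := by intro k; simp only [hD]; ring
  have hprev : ∀ k, τ (k + 1) - D k = τ k := by intro k; simp only [hD]; ring
  let T : ℕ → Set (EuclideanSpace ℝ (Fin 2)) := fun j => triF (τ (j + 1)) (H (j + 1)) '' triS (-(sm j)) (sp (j + 1))
  have hTst : ∀ j < N, -(sm j) ≤ sp (j + 1) := by
    intro j hj
    obtain ⟨p, hp, hp'⟩ := hs_attained hK hne c (τ (j + 1))
    obtain ⟨y, hy, -⟩ := mem_tri (v := p - c) (φ := τ (j + 1)) (δ₀ := D j) (δ₁ := D (j + 1)) (H := H (j + 1))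
      (H₀ := H j) (H₁ := H (j + 1 + 1)) zero_le_one le_rfl (hDpos j hj.le) (hDpos (j + 1) hj)
      (by rw [one_mul]; exact hp'.symm) (by rw [hnext, one_mul]; exact le_hs hK c hp _)
      (by rw [hprev, one_mul]; exact le_hs hK c hp _)
    -- the point has first coordinate determined; use bounds directly
    have h1 := le_hs hK c hp (τ (j + 1 + 1))
    have h0 := le_hs hK c hp (τ j)
    rw [← hnext (j + 1)] at h1
    rw [← hprev j] at h0
    have hp2 : ip (p - c) (τ (j + 1)) = H (j + 1) := hp'.symm
    set s := ip (p - c) (τ (j + 1) + Real.pi / 2) with hs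
    have e1 : ip (p - c) (τ (j + 1) + D (j + 1)) = H (j + 1) * Real.cos (D (j + 1)) + s * Real.sin (D (j + 1)) := by
      rw [← hp2, hs]; simp only [ip, Real.cos_add, Real.sin_add, Real.cos_pi_div_two, Real.sin_pi_div_two]; ring
    have e0 : ip (p - c) (τ (j + 1) - D j) = H (j + 1) * Real.cos (D j) - s * Real.sin (D j) := by
      rw [← hp2, hs]; simp only [ip, Real.cos_add, Real.sin_add, Real.cos_sub, Real.sin_sub, Real.cos_pi_div_two, Real.sin_pi_div_two]; ring
    rw [e1, hnext] at h1
    rw [e0, hprev] at h0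
    have g1 : s ≤ sp (j + 1) := by
      simp only [hsp]
      rw [le_div_iff₀ (hDpos (j + 1) hj)]
      linarith
    have g0 : -(sm j) ≤ s := by
      simp only [hsm]
      rw [neg_le, le_div_iff₀ (hDpos j hj.le)]
      linarith
    linarith
  have hcover : K ⊆ ⋃ j ∈ Finset.range N, (fun v => c + v) '' T j := by
    intro x hx
    set v := x - c with hv
    have hxv : c + v = x := by rw [hv]; abel
    suffices ∃ j < N, v ∈ T j by
      obtain ⟨j, hj, hj'⟩ := this
      simp only [mem_iUnion, Finset.mem_range]
      exact ⟨j, hj, v, hj', hxv⟩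
    have hvH : ∀ k, ip v (τ k) ≤ H k := fun k => le_hs hK c hx _
    have hrne : (Finset.range N).Nonempty := ⟨0, Finset.mem_range.2 hN⟩
    -- transfer of cyclic inequalities
    have cyc : ∀ m : ℝ, (∀ j < N, ip v (τ (j + 1)) ≤ m * H (j + 1)) → ∀ k ≤ N + 1, ip v (τ k) ≤ m * H k := by
      intro m h k hk
      rcases Nat.eq_zero_or_pos k with rfl | hk0
      · have := h (N - 1) (by omega)
        rw [Nat.sub_add_cancel hN, HN, τ0, hipper] at this
        exact this
      · rcases lt_or_eq_of_le hk with hlt | rfl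
        · have := h (k - 1) (by omega)
          rwa [Nat.sub_add_cancel hk0] at this
        · have := h 0 hN
          rw [HN1, τ1, hipper]
          exact this
    by_cases hall : ∀ j < N, ip v (τ (j + 1)) ≤ 0
    · obtain ⟨j, hj, hmax⟩ := Finset.exists_max_image (Finset.range N) (fun j => ip v (τ (j + 1))) hrne
      rw [Finset.mem_range] at hj
      have hmax' : ∀ i < N, ip v (τ (i + 1)) ≤ ip v (τ (j + 1)) := fun i hi => hmax i (Finset.mem_range.2 hi)
      have cyc2 : ∀ k ≤ N + 1, ip v (τ k) ≤ ip v (τ (j + 1)) := by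
        intro k hk
        rcases Nat.eq_zero_or_pos k with rfl | hk0
        · have := hmax' (N - 1) (by omega)
          rwa [Nat.sub_add_cancel hN, τ0, hipper] at this
        · rcases lt_or_eq_of_le hk with hlt | rfl
          · have := hmax' (k - 1) (by omega)
            rwa [Nat.sub_add_cancel hk0] at this
          · have := hmax' 0 hN
            rw [τ1, hipper]
            exact this
      have hv0 : v = 0 := by
        apply eq_zero_of_ip (φ := τ (j + 1)) (hDpos j hj.le) (hDpos (j + 1) hj) (hall j hj)
        · rw [hnext]; exact cyc2 _ (by omega)
        · rw [hprev]; exact cyc2 _ (by omega)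
      refine ⟨j, hj, 0, ?_, by rw [map_zero, hv0]⟩
      simp [triS]
    · push Not at hall
      obtain ⟨i, hi, hi'⟩ := hall
      obtain ⟨j, hj, hmax⟩ := Finset.exists_max_image (Finset.range N) (fun j => ip v (τ (j + 1)) / H (j + 1)) hrne
      rw [Finset.mem_range] at hj
      set m := ip v (τ (j + 1)) / H (j + 1) with hm
      have hHi : 0 < H (i + 1) := hi'.trans_le (hvH _)
      have hm0 : 0 < m := lt_of_lt_of_le (div_pos hi' hHi) (hmax i (Finset.mem_range.2 hi))
      have hHj : 0 < H (j + 1) := by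
        rcases (hpos (τ (j + 1))).lt_or_eq with h | h
        · exact h
        · exfalso
          have h' : H (j + 1) = 0 := h.symm
          rw [hm, h', div_zero] at hm0
          exact lt_irrefl _ hm0
      have hm1 : m ≤ 1 := by
        rw [hm, div_le_one hHj]; exact hvH _
      have hmall : ∀ l < N, ip v (τ (l + 1)) ≤ m * H (l + 1) := by
        intro l hl
        rcases (hpos (τ (l + 1))).lt_or_eq with h | h
        · have := hmax l (Finset.mem_range.2 hl)
          exact (div_le_iff₀ h).1 this
        · have h' : H (l + 1) = 0 := h.symm
          have := hvH (l + 1)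
          rw [h'] at this ⊢
          simpa using this
      have hc := cyc m hmall
      refine ⟨j, hj, mem_tri hm0.le hm1 (hDpos j hj.le) (hDpos (j + 1) hj) ?_ ?_ ?_⟩
      · rw [hm, div_mul_cancel₀ _ hHj.ne']
      · rw [hnext]; exact hc _ (by omega)
      · rw [hprev]; exact hc _ (by omega)
  have hHpos : ∀ k, 0 ≤ H k := fun k => hpos _
  have hterm : ∀ j ∈ Finset.range N, 0 ≤ H (j + 1) * ((sp (j + 1) - -(sm j)) / 2) := by
    intro j hj
    have := hTst j (Finset.mem_range.1 hj)
    exact mul_nonneg (hHpos _) (by linarith)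
  have hvol : volume K ≤ ENNReal.ofReal (∑ j ∈ Finset.range N, H (j + 1) * ((sp (j + 1) - -(sm j)) / 2)) := by
    refine (measure_mono hcover).trans ((measure_biUnion_finset_le _ _).trans ?_)
    rw [ENNReal.ofReal_sum_of_nonneg hterm]
    apply Finset.sum_le_sum
    intro j hj
    rw [image_add_left, measure_preimage_add, volume_tri (hHpos _) (hTst j (Finset.mem_range.1 hj))]
  refine (ENNReal.toReal_mono ENNReal.ofReal_ne_top hvol).trans ?_
  rw [ENNReal.toReal_ofReal (Finset.sum_nonneg hterm)]
  apply le_of_eq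
  have hq : ∀ j ∈ Finset.range N, 1 / 2 * qf (θ (j + 1) - θ j) (hs K c (θ j)) (hs K c (θ (j + 1))) =
      H j * sp j / 2 + H (j + 1) * sm j / 2 := by
    intro j hj
    rw [Finset.mem_range] at hj
    rw [← hτ j hj.le, ← hτ (j + 1) hj]
    change 1 / 2 * qf (D j) (H j) (H (j + 1)) = _
    simp only [hsp, hsm, qf]
    ring
  rw [Finset.sum_congr rfl hq, Finset.sum_add_distrib]
  have hshift : ∑ j ∈ Finset.range N, H (j + 1) * sp (j + 1) / 2 = ∑ j ∈ Finset.range N, H j * sp j / 2 := by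
    have h1 := Finset.sum_range_succ (fun j => H j * sp j / 2) N
    have h2 := Finset.sum_range_succ' (fun j => H j * sp j / 2) N
    have h3 : H N * sp N / 2 = H 0 * sp 0 / 2 := by
      simp only [hsp, HN, HN1, hDN, zero_add]
    linarith
  rw [← hshift, ← Finset.sum_add_distrib]
  apply Finset.sum_congr rfl
  intro j _
  ring

theorem area_le_support {K : Set (EuclideanSpace ℝ (Fin 2))} (hK : IsCompact K) (hne : K.Nonempty)
    (c : EuclideanSpace ℝ (Fin 2)) (hpos : ∀ θ, 0 ≤ hs K c θ) (ρ : ℝ)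
    (hcontact : ∀ α, ∃ θ ∈ Icc α (α + Real.pi), hs K c θ = ρ) :
    (volume K).toReal ≤ (ρ * ∫ θ in (0:ℝ)..(2 * Real.pi), hs K c θ) - Real.pi * ρ ^ 2 := by
  have hpi := Real.pi_pos
  have hc := hs_continuous hK hne c
  obtain ⟨M, hM, hb, hl⟩ := hs_bound hK hne c
  obtain ⟨a0, a1, a2, h0, h1, h2, h01, h12, h23, g1, g2, g3⟩ := three_zeros hc hcontact
  have hρ : 0 ≤ ρ := h0 ▸ hpos a0
  have h3 : hs K c (a0 + 2 * Real.pi) = ρ := by rw [hs_periodic c a0, h0]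
  have key : ∀ ε > 0, (volume K).toReal ≤ (ρ * ∫ θ in (0:ℝ)..(2 * Real.pi), hs K c θ) - Real.pi * ρ ^ 2 + ε * (2 * Real.pi) := by
    intro ε hε
    obtain ⟨N, θ, e0, eN, hδ, hsum⟩ := chain_trans hc (chain_trans hc
      (chain_arc hM hb hl hc hρ hε hpi h01 g1 h0 h1) (chain_arc hM hb hl hc hρ hε hpi h12 g2 h1 h2))
      (chain_arc hM hb hl hc hρ hε hpi h23 g3 h2 h3)
    have := area_le hK hne c hpos N θ (by rw [e0, eN]) hδ
    have e := (hs_periodic (K := K) c).intervalIntegral_add_eq a0 0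
    rw [zero_add] at e
    rw [e, add_sub_cancel_left] at hsum
    linarith
  apply le_of_forall_pos_le_add
  intro ε hε
  have := key (ε / (2 * Real.pi)) (by positivity)
  rwa [div_mul_cancel₀ _ (by positivity)] at this

theorem bonnesen_inequality (K : Set (EuclideanSpace ℝ (Fin 2)))
    (hcomp : IsCompact K) (hconv : Convex ℝ K) (hint : (interior K).Nonempty)
    (γ : ℝ → EuclideanSpace ℝ (Fin 2))
    (hγcont : ContinuousOn γ (Set.Icc 0 1))
    (hγclosed : γ 0 = γ 1)
    (hγinj : Set.InjOn γ (Set.Ico 0 1))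
    (hγimg : γ '' Set.Icc 0 1 = frontier K)
    (L : ℝ) (hL : L = (eVariationOn γ (Set.Icc 0 1)).toReal) :
    Real.pi ^ 2 * (circumradius K - inradius K) ^ 2 ≤
      L ^ 2 - 4 * Real.pi * (volume K).toReal := by
  have hpi := Real.pi_pos
  have hne : K.Nonempty := hint.mono interior_subset
  have hfin := var_ne_top hcomp hconv hint γ hγcont hγinj hγimg
  have main : ∀ ρ : ℝ, (∃ c, (∀ θ, 0 ≤ hs K c θ) ∧ ∀ α, ∃ θ ∈ Icc α (α + Real.pi), hs K c θ = ρ) →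
      (2 * Real.pi * ρ - L) ^ 2 ≤ L ^ 2 - 4 * Real.pi * (volume K).toReal := by
    rintro ρ ⟨c, hpos, hcon⟩
    have h1 := area_le_support hcomp hne c hpos ρ hcon
    have h2 := length_ge hcomp hne γ hγcont hγclosed hγimg hfin c
    rw [← hL] at h2
    have hρ : 0 ≤ ρ := by
      obtain ⟨θ, -, h⟩ := hcon 0
      exact h ▸ hpos θ
    have h3 := mul_le_mul_of_nonneg_left h2 hρ
    have h4 : (volume K).toReal ≤ ρ * L - Real.pi * ρ ^ 2 := by linarith
    have h5 := mul_le_mul_of_nonneg_left h4 hpi.le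
    nlinarith
  have h1 := main _ (contact_in hcomp hconv hint)
  have h2 := main _ (contact_out hcomp hne)
  nlinarith [sq_nonneg ((2 * Real.pi * circumradius K - L) + (2 * Real.pi * inradius K - L))]
end
end

section
/- Let K ⊆ ℝ² be a compact convex set with nonempty interior, with area A, boundary length L, circumradius R and inradius r. Then the Bonnesen-type inequality L² − 4πA ≥ A²·(1/r − 1/R)² holds. -/
open Set MeasureTheory

noncomputable section

lemma sector_integral (ρ β : ℝ) (hβ : 0 < β) (hβ2 : β ≤ Real.pi / 2)
    (H : ℝ → ℝ) (hH : Continuous H) :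
    ∫ φ in (-β)..β, ρ * (H φ - ρ * Real.sin φ ^ 2
        - ρ * |Real.sin φ| * (Real.cos β / Real.sin β) * Real.cos φ)
      = ρ * (∫ φ in (-β)..β, H φ) - ρ ^ 2 * β := by
  have hs : 0 < Real.sin β := Real.sin_pos_of_pos_of_lt_pi hβ (by linarith [Real.pi_pos])
  have habs : ∫ φ in (-β)..β, |Real.sin φ| * Real.cos φ = Real.sin β ^ 2 := by
    have hc : Continuous fun φ : ℝ => |Real.sin φ| * Real.cos φ := by fun_prop
    rw [← intervalIntegral.integral_add_adjacent_intervals (b := 0)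
      (hc.intervalIntegrable _ _) (hc.intervalIntegrable _ _)]
    have e1 : ∫ φ in (-β)..0, |Real.sin φ| * Real.cos φ
        = ∫ φ in (-β)..0, -(Real.sin φ * Real.cos φ) := by
      apply intervalIntegral.integral_congr
      intro x hx
      rw [uIcc_of_le (by linarith)] at hx
      have : Real.sin x ≤ 0 :=
        Real.sin_nonpos_of_nonpos_of_neg_pi_le hx.2 (by linarith [hx.1, Real.pi_pos])
      simp only [abs_of_nonpos this]; ring
    have e2 : ∫ φ in (0)..β, |Real.sin φ| * Real.cos φ
        = ∫ φ in (0)..β, (Real.sin φ * Real.cos φ) := by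
      apply intervalIntegral.integral_congr
      intro x hx
      rw [uIcc_of_le (by linarith)] at hx
      have : 0 ≤ Real.sin x :=
        Real.sin_nonneg_of_nonneg_of_le_pi hx.1 (by linarith [hx.2, Real.pi_pos])
      simp only [abs_of_nonneg this]
    rw [e1, e2, intervalIntegral.integral_neg, integral_sin_mul_cos₁, integral_sin_mul_cos₁]
    simp; ring
  have hc1 : Continuous fun φ : ℝ => Real.sin φ ^ 2 := by fun_prop
  have hc2 : Continuous fun φ : ℝ => |Real.sin φ| * Real.cos φ := by fun_prop
  have : ∀ φ : ℝ, ρ * (H φ - ρ * Real.sin φ ^ 2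
        - ρ * |Real.sin φ| * (Real.cos β / Real.sin β) * Real.cos φ)
      = (ρ * H φ - ρ ^ 2 * Real.sin φ ^ 2)
        - (ρ ^ 2 * (Real.cos β / Real.sin β)) * (|Real.sin φ| * Real.cos φ) := by
    intro φ; ring
  simp only [this]
  rw [intervalIntegral.integral_sub, intervalIntegral.integral_sub,
    intervalIntegral.integral_const_mul, intervalIntegral.integral_const_mul,
    intervalIntegral.integral_const_mul, habs, integral_sin_sq]
  · simp only [Real.sin_neg, Real.cos_neg]
    field_simp
    ring
  all_goals apply Continuous.intervalIntegrable; fun_prop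

lemma sector_bound (M : Set ℂ) (hM : IsCompact M) (h0 : (0:ℂ) ∈ M) (ρ β : ℝ)
    (hρ : 0 < ρ) (hβ : 0 < β) (hβ2 : β ≤ Real.pi / 2)
    (hp : (⟨ρ * Real.cos β, ρ * Real.sin β⟩ : ℂ) ∈ M)
    (hm : (⟨ρ * Real.cos β, -(ρ * Real.sin β)⟩ : ℂ) ∈ M)
    (h1 : ∀ q ∈ M, q.re * Real.cos β + q.im * Real.sin β ≤ ρ)
    (h2 : ∀ q ∈ M, q.re * Real.cos β - q.im * Real.sin β ≤ ρ)
    (H : ℝ → ℝ) (hH : Continuous H)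
    (hHb : ∀ φ, ∀ q ∈ M, q.re * Real.cos φ + q.im * Real.sin φ ≤ H φ) :
    0 ≤ ρ * (∫ φ in (-β)..β, H φ) - ρ ^ 2 * β ∧
    volume (M ∩ {q : ℂ | |q.im| * Real.cos β ≤ q.re * Real.sin β}) ≤
      ENNReal.ofReal (ρ * (∫ φ in (-β)..β, H φ) - ρ ^ 2 * β) := by
  have hs : 0 < Real.sin β := Real.sin_pos_of_pos_of_lt_pi hβ (by linarith [Real.pi_pos])
  have hcb : 0 ≤ Real.cos β := Real.cos_nonneg_of_neg_pi_div_two_le_of_le (by linarith) hβ2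
  have hsc := Real.sin_sq_add_cos_sq β
  set S : Set ℂ := M ∩ {q : ℂ | |q.im| * Real.cos β ≤ q.re * Real.sin β} with hS
  have hSm : MeasurableSet S := by
    apply (hM.isClosed.inter _).measurableSet
    apply isClosed_le <;> fun_prop
  set c := Real.cos β / Real.sin β with hc
  have hc0 : 0 ≤ c := by positivity
  set G : ℝ → ℝ := fun φ => ρ * (H φ - ρ * Real.sin φ ^ 2
        - ρ * |Real.sin φ| * c * Real.cos φ) with hG
  have hGc : Continuous G := by fun_prop
  -- slicing
  set m : ℝ → ENNReal := fun x => volume {y : ℝ | (⟨y, x⟩ : ℂ) ∈ S} with hm_def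
  have hvol : volume S = ∫⁻ x, m x := by
    have e := Complex.volume_preserving_equiv_real_prod.symm.measure_preimage_equiv S
    rw [← e, Measure.volume_eq_prod, Measure.prod_apply_symm]
    · rfl
    · exact Complex.measurableEquivRealProd.symm.measurable hSm
  have hmx : ∀ x, x ∉ (fun φ => ρ * Real.sin φ) '' Icc (-β) β → m x = 0 := by
    intro x hx
    have : {y : ℝ | (⟨y, x⟩ : ℂ) ∈ S} = ∅ := by
      rw [Set.eq_empty_iff_forall_notMem]
      rintro y ⟨hy, hy2⟩
      simp only [mem_ofPred_eq] at hy2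
      have k1 := h1 _ hy
      have k2 := h2 _ hy
      simp only at k1 k2
      have k3 : y * Real.cos β + |x| * Real.sin β ≤ ρ := by
        rcases abs_cases x with h | h <;> rw [h.1] <;> linarith
      have k4 : |x| ≤ ρ * Real.sin β := by
        have : |x| * Real.cos β * Real.cos β + |x| * Real.sin β * Real.sin β
          ≤ ρ * Real.sin β := by nlinarith
        nlinarith
      obtain ⟨k5, k6⟩ := abs_le.1 k4
      apply hx
      refine ⟨Real.arcsin (x / ρ), ⟨?_, ?_⟩, ?_⟩
      · rw [← Real.arcsin_sin (x := -β) (by linarith) (by linarith)]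
        apply Real.monotone_arcsin
        rw [Real.sin_neg, le_div_iff₀ hρ]
        linarith
      · rw [← Real.arcsin_sin (x := β) (by linarith) (by linarith)]
        apply Real.monotone_arcsin
        rw [div_le_iff₀ hρ]
        linarith
      · have : Real.sin β ≤ 1 := Real.sin_le_one β
        simp only
        rw [Real.sin_arcsin]
        · field_simp
        · rw [le_div_iff₀ hρ]; nlinarith
        · rw [div_le_iff₀ hρ]; nlinarith
    simp only [hm_def, this, measure_empty]
  have hinj : InjOn (fun φ => ρ * Real.sin φ) (Icc (-β) β) := by
    intro a ha b hb hab
    apply Real.injOn_sin ⟨by linarith [ha.1], by linarith [ha.2]⟩ ⟨by linarith [hb.1], by linarith [hb.2]⟩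
    exact mul_left_cancel₀ hρ.ne' hab
  have hvol2 : volume S = ∫⁻ φ in Icc (-β) β, ENNReal.ofReal |ρ * Real.cos φ| * m (ρ * Real.sin φ) := by
    rw [hvol, ← lintegral_image_eq_lintegral_abs_deriv_mul (f := fun φ => ρ * Real.sin φ) (f' := fun φ => ρ * Real.cos φ) measurableSet_Icc _ hinj]
    · rw [setLIntegral_eq_of_support_subset]
      intro x hx
      by_contra h
      exact hx (hmx x h)
    · intro x _
      exact ((Real.hasDerivAt_sin x).const_mul ρ).hasDerivWithinAt
  have key : ∀ φ ∈ Icc (-β) β, 0 ≤ G φ ∧ ENNReal.ofReal |ρ * Real.cos φ| * m (ρ * Real.sin φ) ≤ ENNReal.ofReal (G φ) := by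
    intro φ hφ
    have hcφ : 0 ≤ Real.cos φ := Real.cos_nonneg_of_neg_pi_div_two_le_of_le (by linarith [hφ.1]) (by linarith [hφ.2])
    constructor
    · apply mul_nonneg hρ.le
      have hsin : |Real.sin φ| ≤ Real.sin β := by
        rw [abs_le, ← Real.sin_neg]
        exact ⟨Real.sin_le_sin_of_le_of_le_pi_div_two (by linarith) (by linarith [hφ.2]) hφ.1,
          Real.sin_le_sin_of_le_of_le_pi_div_two (by linarith [hφ.1]) (by linarith) hφ.2⟩
      have a0 := hHb φ _ h0
      have a1 := hHb φ _ hp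
      have a2 := hHb φ _ hm
      simp at a0 a1 a2
      have a3 : ρ * Real.cos β * Real.cos φ + ρ * Real.sin β * |Real.sin φ| ≤ H φ := by
        rcases abs_cases (Real.sin φ) with h | h <;> rw [h.1] <;> linarith
      have a4 : |Real.sin φ| * (ρ * Real.cos β * Real.cos φ + ρ * Real.sin β * |Real.sin φ|) ≤ Real.sin β * H φ := by
        calc _ ≤ |Real.sin φ| * H φ := by gcongr
          _ ≤ _ := by gcongr
      have a5 : (ρ * Real.sin φ ^ 2 + ρ * |Real.sin φ| * c * Real.cos φ) * Real.sin β ≤ Real.sin β * H φ := by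
        refine le_trans (le_of_eq ?_) a4
        rw [← sq_abs (Real.sin φ), hc]
        field_simp
        ring
      nlinarith
    · rcases hcφ.eq_or_lt with h | h
      · simp [← h]
      rw [abs_of_pos (by positivity)]
      have hsub : {y : ℝ | (⟨y, ρ * Real.sin φ⟩ : ℂ) ∈ S} ⊆
          Icc (ρ * |Real.sin φ| * c) ((H φ - ρ * Real.sin φ ^ 2) / Real.cos φ) := by
        rintro y ⟨hy, hy2⟩
        simp only [mem_ofPred_eq] at hy2
        have k1 := hHb φ _ hy
        simp only at k1
        rw [abs_mul, abs_of_pos hρ] at hy2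
        constructor
        · rw [hc, mul_div_assoc', div_le_iff₀ hs]; exact hy2
        · rw [le_div_iff₀ h]; linarith
      calc _ ≤ ENNReal.ofReal (ρ * Real.cos φ) * volume (Icc (ρ * |Real.sin φ| * c) ((H φ - ρ * Real.sin φ ^ 2) / Real.cos φ)) := by
            gcongr
            exact measure_mono hsub
        _ = ENNReal.ofReal (G φ) := by
            rw [Real.volume_Icc, ← ENNReal.ofReal_mul (by positivity)]
            congr 1
            simp only [hG]
            field_simp
  rw [hvol2, ← sector_integral ρ β hβ hβ2 H hH]
  refine ⟨intervalIntegral.integral_nonneg (by linarith) (fun φ hφ => (key φ hφ).1), ?_⟩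
  calc _ ≤ ∫⁻ φ in Icc (-β) β, ENNReal.ofReal (G φ) :=
        setLIntegral_mono (by fun_prop) (fun φ hφ => (key φ hφ).2)
    _ = ENNReal.ofReal (∫ φ in Icc (-β) β, G φ) := by
        rw [ofReal_integral_eq_lintegral_ofReal]
        · exact hGc.integrableOn_Icc
        · exact (ae_restrict_iff' measurableSet_Icc).2 (Filter.Eventually.of_forall (fun φ hφ => (key φ hφ).1))
    _ = _ := by
        rw [intervalIntegral.integral_of_le (by linarith), integral_Icc_eq_integral_Ioc]

/-- Support function of a planar set. -/
def suppFn (K : Set ℂ) (θ : ℝ) : ℝ :=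
  sSup ((fun p : ℂ => p.re * Real.cos θ + p.im * Real.sin θ) '' K)

lemma suppFn_continuous (K : Set ℂ) (hK : IsCompact K) : Continuous (suppFn K) := by
  apply IsCompact.continuous_sSup (f := fun (θ : ℝ) (p : ℂ) => p.re * Real.cos θ + p.im * Real.sin θ) hK
  simp only [Function.HasUncurry.uncurry]
  unfold id
  fun_prop

lemma suppFn_periodic (K : Set ℂ) : Function.Periodic (suppFn K) (2 * Real.pi) := by
  intro θ
  simp [suppFn]

lemma le_suppFn (K : Set ℂ) (hK : IsCompact K) (θ : ℝ) (p : ℂ) (hp : p ∈ K) :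
    p.re * Real.cos θ + p.im * Real.sin θ ≤ suppFn K θ := by
  apply le_csSup
  · apply (hK.image _).bddAbove
    fun_prop
  · exact mem_image_of_mem _ hp

lemma suppFn_attained (K : Set ℂ) (hK : IsCompact K) (hne : K.Nonempty) (θ : ℝ) :
    ∃ p ∈ K, p.re * Real.cos θ + p.im * Real.sin θ = suppFn K θ := by
  have hc : IsCompact ((fun p : ℂ => p.re * Real.cos θ + p.im * Real.sin θ) '' K) := by
    apply hK.image; fun_prop
  exact hc.sSup_mem (hne.image _)

/-- Directions in which the circle of radius `ρ` about the origin touches `K`. -/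
def Touch (K : Set ℂ) (ρ θ : ℝ) : Prop :=
  (⟨ρ * Real.cos θ, ρ * Real.sin θ⟩ : ℂ) ∈ K ∧
    ∀ p ∈ K, p.re * Real.cos θ + p.im * Real.sin θ ≤ ρ

lemma sector_rot (K : Set ℂ) (hK : IsCompact K) (h0 : (0:ℂ) ∈ K) (ρ a b : ℝ)
    (hρ : 0 < ρ) (hab : a ≤ b) (hab2 : b - a ≤ Real.pi) (ha : Touch K ρ a) (hb : Touch K ρ b) :
    0 ≤ ρ * (∫ θ in a..b, suppFn K θ) - ρ ^ 2 * ((b - a) / 2) ∧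
    volume (K ∩ {p : ℂ | ∃ s : ℝ, 0 ≤ s ∧ ∃ θ ∈ Ico a b, p = ⟨s * Real.cos θ, s * Real.sin θ⟩}) ≤
      ENNReal.ofReal (ρ * (∫ θ in a..b, suppFn K θ) - ρ ^ 2 * ((b - a) / 2)) := by
  rcases hab.eq_or_lt with h | h
  · subst h; simp
  set ψ := (a + b) / 2 with hψ
  set β := (b - a) / 2 with hβ
  have hbe : b = ψ + β := by rw [hψ, hβ]; ring
  have hae : a = ψ - β := by rw [hψ, hβ]; ring
  set R := rotation (Circle.exp ψ) with hR
  have hRq : ∀ q : ℂ, R q = ⟨q.re * Real.cos ψ - q.im * Real.sin ψ, q.re * Real.sin ψ + q.im * Real.cos ψ⟩ := by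
    intro q
    rw [hR, rotation_apply, Circle.coe_exp, Complex.exp_mul_I, ← Complex.ofReal_cos, ← Complex.ofReal_sin]
    apply Complex.ext <;> simp [-Complex.ofReal_cos, -Complex.ofReal_sin] <;> ring
  have hMc : IsCompact (R ⁻¹' K) := R.toHomeomorph.isCompact_preimage.2 hK
  have htr : ∀ (q : ℂ) (φ : ℝ), (R q).re * Real.cos (ψ + φ) + (R q).im * Real.sin (ψ + φ)
      = q.re * Real.cos φ + q.im * Real.sin φ := by
    intro q φ
    rw [hRq, Real.cos_add, Real.sin_add]
    have := Real.sin_sq_add_cos_sq ψ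
    simp only
    linear_combination (q.re * Real.cos φ + q.im * Real.sin φ) * this
  have := sector_bound (R ⁻¹' K) hMc (by simpa using h0) ρ β hρ (by rw [hβ]; linarith)
    (by rw [hβ]; linarith) ?_ ?_ ?_ ?_ (fun φ => suppFn K (ψ + φ))
    ((suppFn_continuous K hK).comp (by fun_prop)) ?_
  · rw [intervalIntegral.integral_comp_add_left (suppFn K) ψ, ← sub_eq_add_neg, ← hbe, ← hae] at this
    refine ⟨this.1, le_trans ?_ this.2⟩
    rw [← (R.measurePreserving).measure_preimage_emb R.toHomeomorph.measurableEmbedding]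
    apply measure_mono
    rintro q ⟨hq, s, hs, θ, hθ, e⟩
    refine ⟨hq, ?_⟩
    have e1 := htr q 0
    have e2 := htr q (Real.pi / 2)
    simp only [e, Real.cos_add_pi_div_two, Real.sin_add_pi_div_two, add_zero, Real.cos_zero, Real.sin_zero, mul_one, mul_zero, Real.cos_pi_div_two, Real.sin_pi_div_two, zero_add] at e1 e2
    have e1' : q.re = s * Real.cos (θ - ψ) := by rw [Real.cos_sub]; linarith
    have e2' : q.im = s * Real.sin (θ - ψ) := by rw [Real.sin_sub]; linarith
    simp only [mem_ofPred_eq, e1', e2']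
    rw [abs_mul, abs_of_nonneg hs, mul_assoc, mul_assoc]
    apply mul_le_mul_of_nonneg_left _ hs
    have t1 := hθ.1
    have t2 := hθ.2
    have p1 : 0 ≤ Real.sin (β - (θ - ψ)) := Real.sin_nonneg_of_nonneg_of_le_pi (by linarith) (by linarith)
    have p2 : 0 ≤ Real.sin (β + (θ - ψ)) := Real.sin_nonneg_of_nonneg_of_le_pi (by linarith) (by linarith)
    rw [Real.sin_sub] at p1
    rw [Real.sin_add] at p2
    rcases abs_cases (Real.sin (θ - ψ)) with h | h <;> rw [h.1] <;> linarith
  · have := hb.1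
    rw [mem_preimage, hRq]
    rw [hbe, Real.cos_add, Real.sin_add] at this
    convert this using 2 <;> ring
  · have := ha.1
    rw [mem_preimage, hRq]
    rw [hae, Real.cos_sub, Real.sin_sub] at this
    convert this using 2 <;> ring
  · intro q hq
    have := hb.2 _ hq
    rw [hbe, htr] at this
    exact this
  · intro q hq
    have := ha.2 _ hq
    rw [hae, sub_eq_add_neg, htr, Real.cos_neg, Real.sin_neg] at this
    linarith
  · intro φ q hq
    rw [← htr]
    exact le_suppFn K hK _ _ hq

lemma touch_closed (K : Set ℂ) (hK : IsCompact K) (ρ : ℝ) : IsClosed {θ | Touch K ρ θ} := by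
  have : {θ | Touch K ρ θ} = (fun θ : ℝ => (((ρ * Real.cos θ : ℝ) : ℂ) + ((ρ * Real.sin θ : ℝ) : ℂ) * Complex.I)) ⁻¹' K ∩
      ⋂ p ∈ K, {θ : ℝ | p.re * Real.cos θ + p.im * Real.sin θ ≤ ρ} := by
    ext θ
    simp only [Touch, mem_ofPred_eq, mem_inter_iff, mem_preimage, mem_iInter, Complex.mk_eq_add_mul_I]
  rw [this]
  apply IsClosed.inter
  · apply hK.isClosed.preimage; fun_prop
  · apply isClosed_biInter
    intro p _
    apply isClosed_le <;> fun_prop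

lemma touch_triple (T : Set ℝ) (hT : IsClosed T) (hgap : ∀ θ, ∃ t ∈ T, t ∈ Icc θ (θ + Real.pi)) :
    ∃ a ∈ T, ∃ b ∈ T, ∃ c ∈ T, a ≤ b ∧ b ≤ c ∧ c ≤ a + 2 * Real.pi ∧ b - a ≤ Real.pi ∧
      c - b ≤ Real.pi ∧ a + 2 * Real.pi - c ≤ Real.pi := by
  obtain ⟨a, ha, -⟩ := hgap 0
  have hpi := Real.pi_pos
  have hc1 : IsCompact (T ∩ Icc a (a + Real.pi)) := isCompact_Icc.inter_left hT
  obtain ⟨b, hb, hbmax⟩ := hc1.exists_isGreatest ⟨a, ha, le_refl _, by linarith⟩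
  have hex : ∃ c ∈ T, c ∈ Icc (a + Real.pi) (b + Real.pi) := by
    by_cases hba : b = a + Real.pi
    · exact ⟨b, hb.1, by linarith, by linarith⟩
    by_contra hcon
    push Not at hcon
    have hblt : b < a + Real.pi := lt_of_le_of_ne hb.2.2 hba
    have hnb : b + Real.pi ∉ T := fun h => hcon _ h ⟨by linarith [hb.2.1], le_refl _⟩
    obtain ⟨ε, hε, hball⟩ := Metric.isOpen_iff.1 hT.isOpen_compl _ hnb
    obtain ⟨t, htT, ht1, ht2⟩ := hgap (b + ε / 2)
    have h1 : a + Real.pi < t := by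
      by_contra h
      push Not at h
      have := hbmax ⟨htT, by linarith [hb.2.1], h⟩
      linarith
    have h2 : b + Real.pi < t := by
      by_contra h
      push Not at h
      exact hcon t htT ⟨h1.le, h⟩
    refine hball ?_ htT
    rw [Metric.mem_ball, Real.dist_eq, abs_lt]
    constructor <;> linarith
  obtain ⟨c, hcT, hc⟩ := hex
  refine ⟨a, ha, b, hb.1, c, hcT, hb.2.1, ?_, ?_, ?_, ?_, ?_⟩ <;> linarith [hb.2.1, hb.2.2, hc.1, hc.2]

lemma clm_eq (f : ℂ →L[ℝ] ℝ) (p : ℂ) : f p = p.re * f 1 + p.im * f Complex.I := by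
  conv_lhs => rw [← Complex.re_add_im p]
  have h1 : (p.re : ℂ) = p.re • (1:ℂ) := by simp
  have h2 : (p.im : ℂ) * Complex.I = p.im • Complex.I := by simp
  rw [map_add, h2, h1, map_smul, map_smul]; simp

lemma exists_polar (z : ℂ) : ∃ θ : ℝ, z = ⟨‖z‖ * Real.cos θ, ‖z‖ * Real.sin θ⟩ := by
  refine ⟨z.arg, ?_⟩
  rw [Complex.norm_mul_cos_arg, Complex.norm_mul_sin_arg]

lemma exists_polar_Ico (z : ℂ) (a : ℝ) : ∃ θ ∈ Ico a (a + 2 * Real.pi),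
    z = ⟨‖z‖ * Real.cos θ, ‖z‖ * Real.sin θ⟩ := by
  obtain ⟨θ, hθ⟩ := exists_polar z
  refine ⟨toIcoMod Real.two_pi_pos a θ, toIcoMod_mem_Ico _ _ _, ?_⟩
  have : toIcoMod Real.two_pi_pos a θ = θ - toIcoDiv Real.two_pi_pos a θ * (2 * Real.pi) := by
    rw [toIcoMod, zsmul_eq_mul]
  rw [this, Real.cos_sub_int_mul_two_pi, Real.sin_sub_int_mul_two_pi]
  exact hθ

theorem bonnesen_core (K : Set ℂ) (hK : IsCompact K) (hconv : Convex ℝ K) (ρ : ℝ) (hρ : 0 < ρ)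
    (hgap : ∀ θ, ∃ t, Touch K ρ t ∧ t ∈ Icc θ (θ + Real.pi)) :
    (volume K).toReal + Real.pi * ρ ^ 2 ≤ ρ * ∫ θ in (0)..(2 * Real.pi), suppFn K θ := by
  have h0 : (0:ℂ) ∈ K := by
    by_contra h
    obtain ⟨f, u, hu, hf⟩ := geometric_hahn_banach_point_closed hconv hK.isClosed h
    rw [map_zero] at hu
    obtain ⟨θ, hθ⟩ := exists_polar ⟨f 1, f Complex.I⟩
    set n := ‖(⟨f 1, f Complex.I⟩ : ℂ)‖
    obtain ⟨t, ht, ht1, ht2⟩ := hgap (θ + Real.pi / 2)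
    have h1 := hf _ ht.1
    rw [clm_eq] at h1
    have e1 : f 1 = n * Real.cos θ := congrArg Complex.re hθ
    have e2 : f Complex.I = n * Real.sin θ := congrArg Complex.im hθ
    rw [e1, e2] at h1
    simp only at h1
    have h2 : ρ * n * Real.cos (t - θ) > 0 := by
      rw [Real.cos_sub]
      linarith
    have h3 : Real.cos (t - θ) ≤ 0 := Real.cos_nonpos_of_pi_div_two_le_of_le (by linarith) (by linarith)
    have h4 : 0 ≤ n := norm_nonneg _
    have : 0 ≤ ρ * n := by positivity
    nlinarith
  obtain ⟨a, ha, b, hb, c, hc, hab, hbc, hca, g1, g2, g3⟩ := touch_triple {θ | Touch K ρ θ}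
    (touch_closed K hK ρ) hgap
  have ha' : Touch K ρ (a + 2 * Real.pi) := by
    simpa [Touch] using ha
  obtain ⟨n1, s1⟩ := sector_rot K hK h0 ρ a b hρ hab g1 ha hb
  obtain ⟨n2, s2⟩ := sector_rot K hK h0 ρ b c hρ hbc g2 hb hc
  obtain ⟨n3, s3⟩ := sector_rot K hK h0 ρ c (a + 2 * Real.pi) hρ hca g3 hc ha'
  have hcont := suppFn_continuous K hK
  have hint : (∫ θ in a..b, suppFn K θ) + (∫ θ in b..c, suppFn K θ) + (∫ θ in c..(a + 2 * Real.pi), suppFn K θ)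
      = ∫ θ in (0)..(2 * Real.pi), suppFn K θ := by
    rw [intervalIntegral.integral_add_adjacent_intervals, intervalIntegral.integral_add_adjacent_intervals]
    · have := (suppFn_periodic K).intervalIntegral_add_eq a 0
      rw [zero_add] at this
      exact this
    all_goals exact hcont.intervalIntegrable _ _
  have hvol : volume K ≤ ENNReal.ofReal (ρ * (∫ θ in (0)..(2 * Real.pi), suppFn K θ) - Real.pi * ρ ^ 2) := by
    have hsum : ρ * (∫ θ in (0)..(2 * Real.pi), suppFn K θ) - Real.pi * ρ ^ 2
      = (ρ * (∫ θ in a..b, suppFn K θ) - ρ ^ 2 * ((b - a) / 2)) +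
        (ρ * (∫ θ in b..c, suppFn K θ) - ρ ^ 2 * ((c - b) / 2)) +
        (ρ * (∫ θ in c..(a + 2 * Real.pi), suppFn K θ) - ρ ^ 2 * ((a + 2 * Real.pi - c) / 2)) := by
      rw [← hint]; ring
    rw [hsum, ENNReal.ofReal_add (by positivity) n3, ENNReal.ofReal_add n1 n2]
    refine le_trans ?_ (add_le_add (add_le_add s1 s2) s3)
    refine le_trans (measure_mono ?_) ((measure_union_le _ _).trans (add_le_add_left (measure_union_le _ _) _))
    intro z hz
    obtain ⟨θ, hθ, e⟩ := exists_polar_Ico z a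
    rcases lt_or_ge θ b with h | h
    · exact Or.inl (Or.inl ⟨hz, ‖z‖, norm_nonneg _, θ, ⟨hθ.1, h⟩, e⟩)
    rcases lt_or_ge θ c with h' | h'
    · exact Or.inl (Or.inr ⟨hz, ‖z‖, norm_nonneg _, θ, ⟨h, h'⟩, e⟩)
    · exact Or.inr ⟨hz, ‖z‖, norm_nonneg _, θ, ⟨h', hθ.2⟩, e⟩
  have hnn : 0 ≤ ρ * (∫ θ in (0)..(2 * Real.pi), suppFn K θ) - Real.pi * ρ ^ 2 := by
    rw [← hint]; linarith
  have := ENNReal.toReal_le_of_le_ofReal hnn hvol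
  linarith

lemma angle_of_cos_nonneg (θ φ : ℝ) (h1 : θ - Real.pi / 2 ≤ φ) (h2 : φ ≤ θ - Real.pi / 2 + 2 * Real.pi)
    (hc : 0 ≤ Real.cos (φ - (θ + Real.pi / 2))) : φ ∈ Icc θ (θ + Real.pi) := by
  have hpi := Real.pi_pos
  constructor
  · by_contra h
    push Not at h
    have := Real.cos_neg_of_pi_div_two_lt_of_lt (x := -(φ - (θ + Real.pi / 2))) (by linarith) (by linarith)
    rw [Real.cos_neg] at this
    linarith
  · by_contra h
    push Not at h
    have := Real.cos_neg_of_pi_div_two_lt_of_lt (x := (φ - (θ + Real.pi / 2))) (by linarith) (by linarith)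
    linarith

lemma dot_le_norm (z : ℂ) (φ : ℝ) : z.re * Real.cos φ + z.im * Real.sin φ ≤ ‖z‖ := by
  have h := Complex.sq_norm z
  rw [Complex.normSq_apply] at h
  have hs := Real.sin_sq_add_cos_sq φ
  apply abs_le_of_sq_le_sq' _ (norm_nonneg z) |>.2
  rw [h]
  nlinarith [sq_nonneg (z.re * Real.sin φ - z.im * Real.cos φ), sq_nonneg z.re, sq_nonneg z.im]

lemma tendsto_inv_succ : Filter.Tendsto (fun n : ℕ => 1 / ((n : ℝ) + 1)) Filter.atTop (nhds 0) :=
  tendsto_one_div_add_atTop_nhds_zero_nat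

lemma in_touch (K : Set ℂ) (hK : IsCompact K) (hconv : Convex ℝ K) (r : ℝ) (hr : 0 < r)
    (hball : Metric.closedBall 0 r ⊆ K)
    (hmax : ∀ c r', Metric.closedBall c r' ⊆ K → r' ≤ r) (θ : ℝ) :
    ∃ t, Touch K r t ∧ t ∈ Icc θ (θ + Real.pi) := by
  set v : ℂ := ⟨Real.cos (θ + Real.pi / 2), Real.sin (θ + Real.pi / 2)⟩ with hv
  have hcirc : ∀ φ : ℝ, (⟨r * Real.cos φ, r * Real.sin φ⟩ : ℂ) ∈ K := by
    intro φ
    apply hball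
    rw [mem_closedBall_zero_iff]
    apply abs_le_of_sq_le_sq' _ hr.le |>.2
    rw [Complex.sq_norm, Complex.normSq_apply]
    have hs := Real.sin_sq_add_cos_sq φ
    simp only
    nlinarith
  have hsupr : ∀ φ, r ≤ suppFn K φ := by
    intro φ
    have := le_suppFn K hK φ _ (hcirc φ)
    have hs := Real.sin_sq_add_cos_sq φ
    simp only at this
    nlinarith
  have step : ∀ n : ℕ, ∃ φ ∈ Icc (θ - Real.pi / 2) (θ - Real.pi / 2 + 2 * Real.pi),
      suppFn K φ ≤ r + (1 / ((n : ℝ) + 1)) * Real.cos (φ - (θ + Real.pi / 2)) + (1 / ((n : ℝ) + 1)) ^ 2 := by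
    intro n
    set t : ℝ := 1 / ((n : ℝ) + 1) with ht
    have htpos : 0 < t := by positivity
    have hnot : ¬ Metric.closedBall ((t : ℂ) * v) (r + t ^ 2) ⊆ K := by
      intro h
      have := hmax _ _ h
      nlinarith
    obtain ⟨z, hz, hzK⟩ := not_subset.1 hnot
    obtain ⟨f, u, hu, hf⟩ := geometric_hahn_banach_closed_point hconv hK.isClosed hzK
    obtain ⟨φ, hφ, e⟩ := exists_polar_Ico ⟨f 1, f Complex.I⟩ (θ - Real.pi / 2)
    set m := ‖(⟨f 1, f Complex.I⟩ : ℂ)‖ with hm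
    have e1 : f 1 = m * Real.cos φ := congrArg Complex.re e
    have e2 : f Complex.I = m * Real.sin φ := congrArg Complex.im e
    have hfe : ∀ p : ℂ, f p = m * (p.re * Real.cos φ + p.im * Real.sin φ) := by
      intro p
      rw [clm_eq, e1, e2]; ring
    have hmp : 0 < m := by
      rcases (norm_nonneg (⟨f 1, f Complex.I⟩ : ℂ)).eq_or_lt with h | h
      · exfalso
        rw [← hm] at h
        have := hu _ (hcirc 0)
        rw [hfe] at this hf
        rw [← h] at this hf
        linarith
      · exact h
    obtain ⟨p, hp, hpe⟩ := suppFn_attained K hK ⟨_, hcirc 0⟩ φ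
    have h1 : suppFn K φ < z.re * Real.cos φ + z.im * Real.sin φ := by
      have h2 : f p < f z := (hu p hp).trans hf
      rw [hfe, hfe] at h2
      rw [← hpe]
      exact lt_of_mul_lt_mul_left h2 hmp.le
    have h3 := dot_le_norm (z - t * v) φ
    rw [Metric.mem_closedBall, Complex.dist_eq] at hz
    simp [hv] at h3
    refine ⟨φ, ⟨hφ.1, hφ.2.le⟩, ?_⟩
    rw [Real.cos_sub]
    simp [hv] at hz
    linarith [h3.trans hz]
  choose φ hφ1 hφ2 using step
  obtain ⟨ψ, hψ, σ, hσ, hlim⟩ := isCompact_Icc.tendsto_subseq hφ1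
  have ht0 : Filter.Tendsto (fun n : ℕ => 1 / ((σ n : ℝ) + 1)) Filter.atTop (nhds 0) :=
    tendsto_inv_succ.comp hσ.tendsto_atTop
  have hcosl : Filter.Tendsto (fun n => Real.cos (φ (σ n) - (θ + Real.pi / 2))) Filter.atTop
      (nhds (Real.cos (ψ - (θ + Real.pi / 2)))) :=
    (Real.continuous_cos.tendsto _).comp (hlim.sub_const _)
  have hsl : Filter.Tendsto (fun n => suppFn K (φ (σ n))) Filter.atTop (nhds (suppFn K ψ)) :=
    ((suppFn_continuous K hK).tendsto _).comp hlim
  have l1 : suppFn K ψ ≤ r := by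
    have := le_of_tendsto_of_tendsto' hsl ((tendsto_const_nhds (x := r)).add (ht0.mul hcosl) |>.add (ht0.pow 2))
      (fun n => hφ2 (σ n))
    simpa using this
  have l2 : 0 ≤ Real.cos (ψ - (θ + Real.pi / 2)) := by
    have := ge_of_tendsto' (hcosl.add ht0) (b := 0) (fun n => by
      have h1 := hφ2 (σ n)
      have h2 := hsupr (φ (σ n))
      have h3 : 0 < 1 / ((σ n : ℝ) + 1) := by positivity
      have h4 : 0 ≤ (1 / ((σ n : ℝ) + 1)) * (Real.cos (φ (σ n) - (θ + Real.pi / 2)) + 1 / ((σ n : ℝ) + 1)) := by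
        nlinarith
      exact nonneg_of_mul_nonneg_right h4 h3)
    simpa using this
  exact ⟨ψ, ⟨hcirc ψ, fun p hp => (le_suppFn K hK ψ p hp).trans l1⟩,
    angle_of_cos_nonneg θ ψ hψ.1 hψ.2 l2⟩

lemma circ_touch (K : Set ℂ) (hK : IsCompact K) (R : ℝ) (hR : 0 < R)
    (hball : K ⊆ Metric.closedBall 0 R)
    (hmin : ∀ c R', 0 ≤ R' → K ⊆ Metric.closedBall c R' → R ≤ R') (θ : ℝ) :
    ∃ t, Touch K R t ∧ t ∈ Icc θ (θ + Real.pi) := by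
  set v : ℂ := ⟨Real.cos (θ + Real.pi / 2), Real.sin (θ + Real.pi / 2)⟩ with hv
  have hvn : ‖v‖ ^ 2 = 1 := by
    rw [Complex.sq_norm, Complex.normSq_apply]
    have hs := Real.sin_sq_add_cos_sq (θ + Real.pi / 2)
    simp only [hv]
    nlinarith
  have hKn : ∀ p ∈ K, ‖p‖ ≤ R := fun p hp => by simpa using hball hp
  have step : ∀ n : ℕ, ∃ p ∈ K,
      -((1 + 2 * R ^ 2) * (1 / ((n : ℝ) + 1))) ≤ 2 * (p.re * v.re + p.im * v.im) ∧
      R * (1 - (1 / ((n : ℝ) + 1)) ^ 2) - (1 / ((n : ℝ) + 1)) ≤ ‖p‖ := by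
    intro n
    set t : ℝ := 1 / ((n : ℝ) + 1) with ht
    have htpos : 0 < t := by positivity
    have ht1 : t ≤ 1 := by
      rw [ht, div_le_one (by positivity)]; linarith [(Nat.cast_nonneg n : (0:ℝ) ≤ n)]
    have hR' : 0 ≤ R * (1 - t ^ 2) := by
      apply mul_nonneg hR.le; nlinarith
    have hnot : ¬ K ⊆ Metric.closedBall (-((t : ℂ) * v)) (R * (1 - t ^ 2)) := by
      intro h
      have := hmin _ _ hR' h
      nlinarith [mul_pos hR (pow_pos htpos 2)]
    obtain ⟨p, hp, hpb⟩ := not_subset.1 hnot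
    rw [Metric.mem_closedBall, Complex.dist_eq, not_le, sub_neg_eq_add] at hpb
    refine ⟨p, hp, ?_, ?_⟩
    · have h1 : (R * (1 - t ^ 2)) ^ 2 < ‖p + t * v‖ ^ 2 := by gcongr
      have h2 : ‖p + t * v‖ ^ 2 = ‖p‖ ^ 2 + 2 * t * (p.re * v.re + p.im * v.im) + t ^ 2 * ‖v‖ ^ 2 := by
        simp only [Complex.sq_norm, Complex.normSq_apply]
        simp
        ring
      have h3 : ‖p‖ ^ 2 ≤ R ^ 2 := by gcongr; exact hKn p hp
      rw [h2, hvn] at h1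
      have h4 : 0 ≤ t * (2 * (p.re * v.re + p.im * v.im) + (1 + 2 * R ^ 2) * t) := by
        nlinarith [sq_nonneg (R * t ^ 2)]
      have := nonneg_of_mul_nonneg_right h4 htpos
      linarith
    · have h1 : ‖p + t * v‖ ≤ ‖p‖ + t := by
        refine (norm_add_le _ _).trans ?_
        have : ‖v‖ = 1 := (pow_eq_one_iff_of_nonneg (norm_nonneg v) two_ne_zero).1 hvn
        rw [norm_mul, this, Complex.norm_real, Real.norm_eq_abs, abs_of_pos htpos, mul_one]
      linarith
  choose p hpK hp1 hp2 using step
  obtain ⟨q, hq, σ, hσ, hlim⟩ := hK.tendsto_subseq hpK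
  have ht0 : Filter.Tendsto (fun n : ℕ => 1 / ((σ n : ℝ) + 1)) Filter.atTop (nhds 0) :=
    tendsto_inv_succ.comp hσ.tendsto_atTop
  have l1 : R ≤ ‖q‖ := by
    have hl : Filter.Tendsto (fun n : ℕ => R * (1 - (1 / ((σ n : ℝ) + 1)) ^ 2) - (1 / ((σ n : ℝ) + 1)))
      Filter.atTop (nhds (R * (1 - 0 ^ 2) - 0)) := (((ht0.pow 2).const_sub 1).const_mul R).sub ht0
    have := le_of_tendsto_of_tendsto' hl hlim.norm (fun n => hp2 (σ n))
    simpa using this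
  have l2 : 0 ≤ q.re * v.re + q.im * v.im := by
    have hc : Continuous fun z : ℂ => 2 * (z.re * v.re + z.im * v.im) := by fun_prop
    have hl := (hc.tendsto q).comp hlim
    have := le_of_tendsto_of_tendsto' (ht0.const_mul (1 + 2 * R ^ 2)).neg hl (fun n => hp1 (σ n))
    simp at this
    linarith
  have hqR : ‖q‖ = R := le_antisymm (hKn q hq) l1
  obtain ⟨ψ, hψ, e⟩ := exists_polar_Ico q (θ - Real.pi / 2)
  rw [hqR] at e
  refine ⟨ψ, ⟨e ▸ hq, fun z hz => (dot_le_norm z ψ).trans (hKn z hz)⟩,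
    angle_of_cos_nonneg θ ψ hψ.1 hψ.2.le ?_⟩
  have l3 : 0 ≤ R * Real.cos (ψ - (θ + Real.pi / 2)) := by
    rw [e, hv] at l2
    simp only at l2
    rw [Real.cos_sub]
    linarith
  exact nonneg_of_mul_nonneg_right l3 hR

lemma integral_abs_dot (d : ℂ) :
    ∫ θ in (0)..(2 * Real.pi), |d.re * Real.cos θ + d.im * Real.sin θ| = 4 * ‖d‖ := by
  obtain ⟨ψ, hψ⟩ := exists_polar d
  have hpi := Real.pi_pos
  have e1 : d.re = ‖d‖ * Real.cos ψ := congrArg Complex.re hψ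
  have e2 : d.im = ‖d‖ * Real.sin ψ := congrArg Complex.im hψ
  have e3 : ∀ θ, |d.re * Real.cos θ + d.im * Real.sin θ| = ‖d‖ * |Real.cos (θ - ψ)| := by
    intro θ
    have e4 : d.re * Real.cos θ + d.im * Real.sin θ = ‖d‖ * Real.cos (θ - ψ) := by
      rw [Real.cos_sub]
      linear_combination Real.cos θ * e1 + Real.sin θ * e2
    rw [e4, abs_mul, abs_of_nonneg (norm_nonneg d)]
  simp only [e3]
  rw [intervalIntegral.integral_const_mul,
    intervalIntegral.integral_comp_sub_right (fun x => |Real.cos x|) ψ]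
  have hper : Function.Periodic (fun x => |Real.cos x|) (2 * Real.pi) := by
    intro x; simp
  have h1 := hper.intervalIntegral_add_eq (0 - ψ) (-(Real.pi / 2))
  rw [show 0 - ψ + 2 * Real.pi = 2 * Real.pi - ψ by ring] at h1
  have hc : Continuous fun x => |Real.cos x| := by fun_prop
  rw [h1, ← intervalIntegral.integral_add_adjacent_intervals (b := Real.pi / 2)
      (hc.intervalIntegrable _ _) (hc.intervalIntegrable _ _)]
  have i1 : ∫ x in (-(Real.pi / 2))..(Real.pi / 2), |Real.cos x|
      = ∫ x in (-(Real.pi / 2))..(Real.pi / 2), Real.cos x := by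
    apply intervalIntegral.integral_congr
    intro x hx
    rw [uIcc_of_le (by linarith)] at hx
    exact abs_of_nonneg (Real.cos_nonneg_of_neg_pi_div_two_le_of_le hx.1 hx.2)
  have i2 : ∫ x in (Real.pi / 2)..(-(Real.pi / 2) + 2 * Real.pi), |Real.cos x|
      = ∫ x in (Real.pi / 2)..(-(Real.pi / 2) + 2 * Real.pi), -Real.cos x := by
    apply intervalIntegral.integral_congr
    intro x hx
    rw [uIcc_of_le (by linarith)] at hx
    exact abs_of_nonpos (Real.cos_nonpos_of_pi_div_two_le_of_le hx.1 (by linarith [hx.2]))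
  rw [i1, i2, intervalIntegral.integral_neg, integral_cos, integral_cos]
  simp
  ring

lemma sum_abs_ge (f : ℕ → ℝ) (n : ℕ) (h : f 0 = f n) (i j : ℕ) (hi : i ≤ n) (hj : j ≤ n) :
    2 * (f i - f j) ≤ ∑ k ∈ Finset.range n, |f (k + 1) - f k| := by
  have key : ∀ a b : ℕ, a ≤ b → b ≤ n → 2 * |f a - f b| ≤ ∑ k ∈ Finset.range n, |f (k + 1) - f k| := by
    intro a b hab hb
    have e : ∀ p q, p ≤ q → |f p - f q| ≤ ∑ k ∈ Finset.Ico p q, |f (k + 1) - f k| := by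
      intro p q hpq
      have := dist_le_Ico_sum_dist f hpq
      simp only [Real.dist_eq] at this
      simpa [abs_sub_comm] using this
    have h1 := e 0 a (Nat.zero_le _)
    have h2 := e a b hab
    have h3 := e b n hb
    have h4 : ∑ k ∈ Finset.range n, |f (k + 1) - f k| =
        ∑ k ∈ Finset.Ico 0 a, |f (k + 1) - f k| + ∑ k ∈ Finset.Ico a b, |f (k + 1) - f k|
        + ∑ k ∈ Finset.Ico b n, |f (k + 1) - f k| := by
      rw [Finset.sum_Ico_consecutive _ (Nat.zero_le _) hab, Finset.sum_Ico_consecutive _ (Nat.zero_le _) hb,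
        Finset.range_eq_Ico]
    have h5 : |f a - f b| ≤ |f 0 - f a| + |f b - f n| := by
      rw [h, abs_sub_comm (f n), abs_sub_comm (f b)]
      have := abs_sub_le (f a) (f n) (f b)
      exact this
    linarith
  rcases le_total i j with hij | hij
  · have := key i j hij hj
    linarith [le_abs_self (f i - f j)]
  · have := key j i hij hi
    rw [abs_sub_comm] at this
    linarith [le_abs_self (f i - f j)]

lemma suppFn_attained_frontier (K : Set ℂ) (hK : IsCompact K) (hne : K.Nonempty) (θ : ℝ) :
    ∃ p ∈ frontier K, p.re * Real.cos θ + p.im * Real.sin θ = suppFn K θ := by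
  obtain ⟨p, hp, e⟩ := suppFn_attained K hK hne θ
  refine ⟨p, ⟨subset_closure hp, ?_⟩, e⟩
  intro hint
  obtain ⟨ε, hε, hball⟩ := Metric.isOpen_iff.1 isOpen_interior p hint
  have hs := Real.sin_sq_add_cos_sq θ
  set w : ℂ := ⟨ε / 2 * Real.cos θ, ε / 2 * Real.sin θ⟩ with hw
  have hwn : ‖w‖ ≤ ε / 2 := by
    apply abs_le_of_sq_le_sq' _ (by positivity) |>.2
    rw [Complex.sq_norm, Complex.normSq_apply]
    simp only [hw]
    nlinarith
  have h1 : p + w ∈ K := by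
    apply interior_subset
    apply hball
    rw [Metric.mem_ball, Complex.dist_eq, add_sub_cancel_left]
    linarith
  have h2 := le_suppFn K hK θ _ h1
  rw [← e] at h2
  simp [hw] at h2
  nlinarith

lemma length_bound (M : Set ℂ) (hM : IsCompact M) (hne : M.Nonempty) (γ : ℝ → ℂ)
    (hc : ContinuousOn γ (Icc 0 1)) (hcl : γ 0 = γ 1) (himg : frontier M ⊆ γ '' Icc 0 1)
    (hfin : eVariationOn γ (Icc 0 1) ≠ ⊤) :
    ∫ θ in (0)..(2 * Real.pi), suppFn M θ ≤ (eVariationOn γ (Icc 0 1)).toReal := by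
  set V := (eVariationOn γ (Icc 0 1)).toReal with hV
  have hpi := Real.pi_pos
  have main : ∀ ε > 0, ∫ θ in (0)..(2 * Real.pi), suppFn M θ ≤ V + 2 * Real.pi * ε := by
    intro ε hε
    obtain ⟨δ, hδ, huc⟩ := Metric.uniformContinuousOn_iff.1
      (isCompact_Icc.uniformContinuousOn_of_continuous hc) ε hε
    obtain ⟨n0, hn0⟩ := exists_nat_one_div_lt hδ
    set n := n0 + 1 with hn
    have hnpos : (0:ℝ) < n := by rw [hn]; positivity
    have hnδ : 1 / (n:ℝ) < δ := by rw [hn]; exact_mod_cast hn0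
    set u : ℕ → ℝ := fun k => min ((k:ℝ) / n) 1 with hu
    have humono : Monotone u := by
      intro a b hab
      simp only [hu]
      gcongr
    have hmem : ∀ k, u k ∈ Icc (0:ℝ) 1 := fun k => ⟨le_min (by positivity) zero_le_one, min_le_right _ _⟩
    have hu0 : u 0 = 0 := by simp [hu]
    have hun : u n = 1 := by simp [hu, hnpos.ne']
    have hnear : ∀ t ∈ Icc (0:ℝ) 1, ∃ k ≤ n, dist (γ (u k)) (γ t) < ε := by
      intro t ht
      have htn : 0 ≤ t * n := mul_nonneg ht.1 hnpos.le
      have f1 := Nat.floor_le htn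
      have f2 := Nat.lt_floor_add_one (t * n)
      have f3 : (⌊t * n⌋₊ : ℝ) ≤ n := f1.trans (by nlinarith [ht.2])
      refine ⟨⌊t * n⌋₊, by exact_mod_cast f3, huc _ (hmem _) _ ht ?_⟩
      have : u ⌊t * n⌋₊ = (⌊t * n⌋₊ : ℝ) / n := by
        simp only [hu]
        apply min_eq_left
        rw [div_le_one hnpos]; exact f3
      rw [this, Real.dist_eq, abs_lt]
      have g1 : (⌊t * n⌋₊ : ℝ) / n ≤ t := by rw [div_le_iff₀ hnpos]; exact f1
      have g2 : t < (⌊t * n⌋₊ : ℝ) / n + 1 / n := by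
        rw [← add_div, lt_div_iff₀ hnpos]; exact f2
      constructor <;> linarith
    have hpt : ∀ θ, 2 * (suppFn M θ + suppFn M (θ + Real.pi)) - 4 * ε ≤
        ∑ k ∈ Finset.range n, |(γ (u (k + 1)) - γ (u k)).re * Real.cos θ + (γ (u (k + 1)) - γ (u k)).im * Real.sin θ| := by
      intro θ
      have hatt : ∀ φ, ∃ k ≤ n, suppFn M φ - ε ≤ (γ (u k)).re * Real.cos φ + (γ (u k)).im * Real.sin φ := by
        intro φ
        obtain ⟨p, hp, e⟩ := suppFn_attained_frontier M hM hne φ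
        obtain ⟨t, ht, rfl⟩ := himg hp
        obtain ⟨k, hk, hd⟩ := hnear t ht
        refine ⟨k, hk, ?_⟩
        have := dot_le_norm (γ t - γ (u k)) φ
        rw [dist_comm, Complex.dist_eq] at hd
        simp at this
        linarith
      obtain ⟨i, hi, hi2⟩ := hatt θ
      obtain ⟨j, hj, hj2⟩ := hatt (θ + Real.pi)
      rw [Real.cos_add_pi, Real.sin_add_pi] at hj2
      have := sum_abs_ge (fun k => (γ (u k)).re * Real.cos θ + (γ (u k)).im * Real.sin θ) n
        (by simp only [hu0, hun, hcl]) i j hi hj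
      refine le_trans (by linarith) (this.trans (le_of_eq ?_))
      apply Finset.sum_congr rfl
      intro k _
      congr 1
      simp; ring
    have hsc := suppFn_continuous M hM
    have hsc2 : Continuous fun θ => suppFn M (θ + Real.pi) := hsc.comp (by fun_prop)
    have hint := intervalIntegral.integral_mono_on (μ := volume) (a := 0) (b := 2 * Real.pi) (by positivity)
      (Continuous.intervalIntegrable (by fun_prop) _ _)
      (Continuous.intervalIntegrable (by fun_prop) _ _) (fun θ _ => hpt θ)
    have hshift : ∫ θ in (0)..(2 * Real.pi), suppFn M (θ + Real.pi) = ∫ θ in (0)..(2 * Real.pi), suppFn M θ := by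
      rw [intervalIntegral.integral_comp_add_right (suppFn M) Real.pi]
      have := (suppFn_periodic M).intervalIntegral_add_eq Real.pi 0
      rw [zero_add] at this
      rw [← this]
      congr 1 <;> ring
    rw [intervalIntegral.integral_sub, intervalIntegral.integral_const_mul, intervalIntegral.integral_add,
      hshift, intervalIntegral.integral_const, intervalIntegral.integral_finsetSum] at hint
    · simp only [integral_abs_dot] at hint
      have hsum : ∑ k ∈ Finset.range n, ‖γ (u (k + 1)) - γ (u k)‖ ≤ V := by
        have h := eVariationOn.sum_le (f := γ) (n := n) humono hmem
        rw [hV, ← ENNReal.ofReal_le_iff_le_toReal hfin, ENNReal.ofReal_sum_of_nonneg (fun _ _ => norm_nonneg _)]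
        refine le_trans (le_of_eq ?_) h
        apply Finset.sum_congr rfl
        intro k _
        rw [edist_dist, Complex.dist_eq]
      rw [← Finset.mul_sum] at hint
      simp only [smul_eq_mul] at hint
      nlinarith
    · intro i _
      exact Continuous.intervalIntegrable (by fun_prop) _ _
    all_goals exact Continuous.intervalIntegrable (by fun_prop) _ _
  apply le_of_forall_pos_le_add
  intro ε hε
  have := main (ε / (2 * Real.pi)) (by positivity)
  rwa [mul_div_cancel₀ _ (by positivity)] at this

lemma variation_le_of_fibers (f : ℝ → ℝ) (hf : ContinuousOn f (Icc 0 1)) (m M : ℝ)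
    (hb : ∀ t ∈ Icc (0:ℝ) 1, f t ∈ Icc m M)
    (hfib : ∀ c ∈ Ioo m M, ∃ S : Finset ℝ, S.card ≤ 3 ∧ ∀ t ∈ Icc (0:ℝ) 1, f t = c → t ∈ S) :
    eVariationOn f (Icc 0 1) ≤ 3 * ENNReal.ofReal (M - m) := by
  unfold eVariationOn
  apply iSup_le
  rintro ⟨n, u, hu, hmem⟩
  simp only
  classical
  have h1 : ∀ i, edist (f (u (i + 1))) (f (u i)) =
      ∫⁻ c, (uIoo (f (u i)) (f (u (i + 1)))).indicator (fun _ => (1 : ENNReal)) c := by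
    intro i
    rw [lintegral_indicator (show MeasurableSet (uIoo (f (u i)) (f (u (i + 1)))) from measurableSet_Ioo), setLIntegral_one, Real.volume_uIoo, edist_dist, Real.dist_eq]
  have h2 : ∑ i ∈ Finset.range n, edist (f (u (i + 1))) (f (u i)) =
      ∫⁻ c, ∑ i ∈ Finset.range n, (uIoo (f (u i)) (f (u (i + 1)))).indicator (fun _ => (1 : ENNReal)) c := by
    rw [lintegral_finsetSum]
    · exact Finset.sum_congr rfl (fun i _ => h1 i)
    · intro i _
      exact measurable_const.indicator measurableSet_Ioo
  rw [h2]
  have h3 : ∫⁻ c, (Ioo m M).indicator (fun _ => (3 : ENNReal)) c = 3 * ENNReal.ofReal (M - m) := by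
    rw [lintegral_indicator measurableSet_Ioo, setLIntegral_const, Real.volume_Ioo]
  rw [← h3]
  apply lintegral_mono
  intro c
  simp only
  by_cases hc : c ∈ Ioo m M
  · obtain ⟨S, hS, hS2⟩ := hfib c hc
    rw [indicator_of_mem hc]
    have hsum : ∑ i ∈ Finset.range n, (uIoo (f (u i)) (f (u (i + 1)))).indicator (fun _ => (1 : ENNReal)) c
        = (((Finset.range n).filter (fun i => c ∈ uIoo (f (u i)) (f (u (i + 1))))).card : ENNReal) := by
      rw [Finset.card_filter]
      push_cast
      apply Finset.sum_congr rfl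
      intro i _
      simp [indicator_apply]
    rw [hsum]
    have hex : ∀ i, c ∈ uIoo (f (u i)) (f (u (i + 1))) → ∃ t ∈ Ioo (u i) (u (i + 1)), f t = c := by
      intro i hi
      have hle : u i ≤ u (i + 1) := hu (Nat.le_succ i)
      have hsub : uIcc (u i) (u (i + 1)) ⊆ Icc 0 1 := by
        rw [uIcc_of_le hle]
        exact Icc_subset_Icc (hmem i).1 (hmem (i + 1)).2
      obtain ⟨t, ht, hft⟩ := intermediate_value_uIcc (hf.mono hsub) (uIoo_subset_uIcc_self hi)
      rw [uIcc_of_le hle] at ht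
      refine ⟨t, ⟨lt_of_le_of_ne ht.1 ?_, lt_of_le_of_ne ht.2 ?_⟩, hft⟩
      · rintro rfl
        rw [← hft] at hi
        simp [uIoo] at hi
        linarith [hi.1, hi.2]
      · rintro rfl
        rw [← hft] at hi
        simp [uIoo] at hi
        linarith [hi.1, hi.2]
    have hcard : ((Finset.range n).filter (fun i => c ∈ uIoo (f (u i)) (f (u (i + 1))))).card ≤ S.card := by
      choose! τ hτ1 hτ2 using hex
      apply Finset.card_le_card_of_injOn τ
      · intro i hi
        have hi' := (Finset.mem_filter.1 hi).2
        have h := hτ1 i hi'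
        exact hS2 _ ⟨(hmem i).1.trans h.1.le, h.2.le.trans (hmem (i + 1)).2⟩ (hτ2 i hi')
      · intro i hi j hj hij
        have hi' := hτ1 i (Finset.mem_filter.1 hi).2
        have hj' := hτ1 j (Finset.mem_filter.1 hj).2
        rcases lt_trichotomy i j with h | h | h
        · have := hu (show i + 1 ≤ j from h)
          rw [hij] at hi'
          linarith [hi'.2, hj'.1]
        · exact h
        · have := hu (show j + 1 ≤ i from h)
          rw [hij] at hi'
          linarith [hi'.1, hj'.2]
    exact_mod_cast hcard.trans hS
  · rw [Finset.sum_eq_zero]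
    · exact zero_le
    · intro i _
      apply indicator_of_notMem
      intro h
      apply hc
      have a1 := hb _ (hmem i)
      have a2 := hb _ (hmem (i + 1))
      rw [uIoo] at h
      exact ⟨(le_inf a1.1 a2.1).trans_lt h.1, h.2.trans_le (sup_le a1.2 a2.2)⟩

lemma line_frontier (M : Set ℂ) (hM : IsCompact M) (hconv : Convex ℝ M) (hint : (interior M).Nonempty)
    (c : ℝ) (x y : ℂ) (hx : x ∈ M) (hy : y ∈ M) (hxc : x.re < c) (hyc : c < y.re) :
    ∃ a b : ℂ, ∀ p ∈ frontier M, p.re = c → p = a ∨ p = b := by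
  by_cases hne : (M ∩ {p : ℂ | p.re = c}).Nonempty
  swap
  · refine ⟨0, 0, fun p hp hpc => ?_⟩
    exact absurd ⟨p, hM.isClosed.frontier_subset hp, hpc⟩ hne
  have hcl : IsClosed {p : ℂ | p.re = c} := isClosed_eq Complex.continuous_re continuous_const
  have hN : IsCompact (M ∩ {p : ℂ | p.re = c}) := hM.inter_right hcl
  obtain ⟨a, ⟨haM, hac⟩, ha⟩ := hN.exists_isMinOn hne Complex.continuous_im.continuousOn
  obtain ⟨b, ⟨hbM, hbc⟩, hb⟩ := hN.exists_isMaxOn hne Complex.continuous_im.continuousOn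
  refine ⟨a, b, fun p hp hpc => ?_⟩
  by_contra hcon
  push Not at hcon
  have hpM := hM.isClosed.frontier_subset hp
  have h1 : a.im < p.im := lt_of_le_of_ne (ha ⟨hpM, hpc⟩)
    (fun h => hcon.1 (Complex.ext (hpc.trans hac.symm) h.symm))
  have h2 : p.im < b.im := lt_of_le_of_ne (hb ⟨hpM, hpc⟩)
    (fun h => hcon.2 (Complex.ext (hpc.trans hbc.symm) h))
  have hpi : p ∉ interior M := hp.2
  obtain ⟨f, hf⟩ := geometric_hahn_banach_open_point hconv.interior isOpen_interior hpi
  have hle : ∀ z ∈ M, f z ≤ f p := by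
    intro z hz
    have hz2 : z ∈ closure (interior M) := by
      rw [hconv.closure_interior_eq_closure_of_nonempty_interior hint]
      exact subset_closure hz
    have : closure (interior M) ⊆ {z | f z ≤ f p} := by
      apply closure_minimal
      · exact fun w hw => (hf w hw).le
      · exact isClosed_le f.continuous continuous_const
    exact this hz2
  have la := hle a haM
  have lb := hle b hbM
  have lx := hle x hx
  have ly := hle y hy
  simp only [mem_ofPred_eq] at hac hbc
  rw [clm_eq f p, clm_eq f a, hpc, hac] at la
  rw [clm_eq f p, clm_eq f b, hpc, hbc] at lb
  have fI : f Complex.I = 0 := by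
    apply le_antisymm <;> nlinarith
  rw [clm_eq f p, clm_eq f x, hpc, fI] at lx
  rw [clm_eq f p, clm_eq f y, hpc, fI] at ly
  have f1 : f 1 = 0 := by
    apply le_antisymm <;> nlinarith
  obtain ⟨w, hw⟩ := hint
  have := hf w hw
  rw [clm_eq f p, clm_eq f w, f1, fI] at this
  simp at this

lemma re_variation_finite (M : Set ℂ) (hM : IsCompact M) (hconv : Convex ℝ M)
    (hint : (interior M).Nonempty) (γ : ℝ → ℂ) (hc : ContinuousOn γ (Icc 0 1))
    (hinj : InjOn γ (Ico 0 1)) (himg : γ '' Icc 0 1 = frontier M) :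
    eVariationOn (fun t => (γ t).re) (Icc 0 1) ≠ ⊤ := by
  have hne : M.Nonempty := hint.mono interior_subset
  obtain ⟨x, hx, hxm⟩ := hM.exists_isMinOn hne Complex.continuous_re.continuousOn
  obtain ⟨y, hy, hym⟩ := hM.exists_isMaxOn hne Complex.continuous_re.continuousOn
  have := variation_le_of_fibers (fun t => (γ t).re) (Complex.continuous_re.comp_continuousOn hc) x.re y.re ?_ ?_
  · exact ne_top_of_le_ne_top (ENNReal.mul_ne_top (by simp) ENNReal.ofReal_ne_top) this
  · intro t ht
    have : γ t ∈ M := hM.isClosed.frontier_subset (himg ▸ mem_image_of_mem γ ht)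
    exact ⟨hxm this, hym this⟩
  · intro c hcc
    obtain ⟨a, b, hab⟩ := line_frontier M hM hconv hint c x y hx hy hcc.1 hcc.2
    have hpre : ∀ z : ℂ, ∃ τ : ℝ, ∀ t ∈ Ico (0:ℝ) 1, γ t = z → t = τ := by
      intro z
      by_cases h : ∃ τ ∈ Ico (0:ℝ) 1, γ τ = z
      · obtain ⟨τ, h1, h2⟩ := h
        exact ⟨τ, fun t ht e => hinj ht h1 (e.trans h2.symm)⟩
      · exact ⟨0, fun t ht e => absurd ⟨t, ht, e⟩ h⟩
    obtain ⟨ta, hta⟩ := hpre a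
    obtain ⟨tb, htb⟩ := hpre b
    refine ⟨{ta, tb, 1}, Finset.card_le_three, ?_⟩
    intro t ht htc
    have hfr : γ t ∈ frontier M := himg ▸ mem_image_of_mem γ ht
    simp only [Finset.mem_insert, Finset.mem_singleton]
    rcases ht.2.eq_or_lt with h | h
    · exact Or.inr (Or.inr h)
    · rcases hab _ hfr htc with h' | h'
      · exact Or.inl (hta t ⟨ht.1, h⟩ h')
      · exact Or.inr (Or.inl (htb t ⟨ht.1, h⟩ h'))

lemma variation_le_re_im (γ : ℝ → ℂ) (s : Set ℝ) :
    eVariationOn γ s ≤ eVariationOn (fun t => (γ t).re) s + eVariationOn (fun t => (γ t).im) s := by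
  conv_lhs => unfold eVariationOn
  apply iSup_le
  rintro ⟨n, u, hu, hmem⟩
  refine le_trans ?_ (add_le_add (eVariationOn.sum_le (n := n) hu hmem) (eVariationOn.sum_le (n := n) hu hmem))
  rw [← Finset.sum_add_distrib]
  apply Finset.sum_le_sum
  intro i _
  rw [edist_dist, edist_dist, edist_dist, ← ENNReal.ofReal_add dist_nonneg dist_nonneg]
  apply ENNReal.ofReal_le_ofReal
  rw [Complex.dist_eq, Real.dist_eq, Real.dist_eq]
  have := Complex.norm_le_abs_re_add_abs_im (γ (u (i + 1)) - γ (u i))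
  simpa using this

lemma variation_finite (M : Set ℂ) (hM : IsCompact M) (hconv : Convex ℝ M)
    (hint : (interior M).Nonempty) (γ : ℝ → ℂ) (hc : ContinuousOn γ (Icc 0 1))
    (hinj : InjOn γ (Ico 0 1)) (himg : γ '' Icc 0 1 = frontier M) :
    eVariationOn γ (Icc 0 1) ≠ ⊤ := by
  have h1 := re_variation_finite M hM hconv hint γ hc hinj himg
  set R : ℂ ≃ₗᵢ[ℝ] ℂ := rotation (Circle.exp (-(Real.pi / 2))) with hR
  have hRz : ∀ z, (R z).re = z.im := by
    intro z
    rw [hR, rotation_apply, Circle.coe_exp, Complex.exp_mul_I, ← Complex.ofReal_cos, ← Complex.ofReal_sin]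
    simp [-Complex.ofReal_cos, -Complex.ofReal_sin]
  have hfr : R '' frontier M = frontier (R '' M) := R.toHomeomorph.image_frontier M
  have hin : R '' interior M = interior (R '' M) := R.toHomeomorph.image_interior M
  have h2 := re_variation_finite (R '' M) (hM.image R.continuous)
    (hconv.linear_image R.toLinearEquiv.toLinearMap) (hin ▸ hint.image R) (fun t => R (γ t))
    (R.continuous.comp_continuousOn hc) (R.injective.comp_injOn hinj)
    (by rw [← hfr, ← himg, image_image])
  simp only [hRz] at h2
  exact ne_top_of_le_ne_top (ENNReal.add_ne_top.2 ⟨h1, h2⟩) (variation_le_re_im γ _)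

/-- The plane as used in the statement. -/
abbrev Pl := EuclideanSpace ℝ (Fin 2)

lemma pl_unit : ‖(EuclideanSpace.single 0 1 : Pl)‖ = 1 := by simp

lemma inradius_spec (K : Set Pl) (hcomp : IsCompact K) (hint : (interior K).Nonempty) :
    0 < inradius K ∧ (∃ c, Metric.closedBall c (inradius K) ⊆ K) ∧
      ∀ c r', Metric.closedBall c r' ⊆ K → r' ≤ inradius K := by
  set S := { ρ : ℝ | 0 ≤ ρ ∧ ∃ c : Pl, Metric.closedBall c ρ ⊆ K } with hS
  have hin : inradius K = sSup S := rfl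
  obtain ⟨D, hD⟩ := hcomp.isBounded.exists_norm_le
  have hbdd : BddAbove S := by
    refine ⟨D, ?_⟩
    rintro ρ ⟨h0, c, hc⟩
    set e : Pl := EuclideanSpace.single 0 1 with he
    have hen : ‖e‖ = 1 := pl_unit
    have h1 : c + ρ • e ∈ K := hc (by
      rw [mem_closedBall_iff_norm, add_sub_cancel_left, norm_smul, hen, Real.norm_eq_abs, abs_of_nonneg h0, mul_one])
    have h2 : c - ρ • e ∈ K := hc (by
      rw [mem_closedBall_iff_norm, sub_sub_cancel_left, norm_neg, norm_smul, hen, Real.norm_eq_abs, abs_of_nonneg h0, mul_one])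
    have h3 : ‖(c + ρ • e) - (c - ρ • e)‖ = 2 * ρ := by
      rw [show (c + ρ • e) - (c - ρ • e) = (2 * ρ) • e by module, norm_smul, hen, Real.norm_eq_abs,
        abs_of_nonneg (by positivity), mul_one]
    have h4 := norm_sub_le (c + ρ • e) (c - ρ • e)
    linarith [hD _ h1, hD _ h2]
  obtain ⟨x, hx⟩ := hint
  obtain ⟨ε, hε, hball⟩ := Metric.isOpen_iff.1 isOpen_interior x hx
  have hεS : ε / 2 ∈ S := ⟨by positivity, x, (Metric.closedBall_subset_ball (by linarith)).trans (hball.trans interior_subset)⟩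
  have hpos : 0 < inradius K := by
    have := le_csSup hbdd hεS
    rw [hin]; linarith
  refine ⟨hpos, ?_, ?_⟩
  · have step : ∀ n : ℕ, ∃ c : Pl, ∃ ρ, inradius K - 1 / ((n : ℝ) + 1) < ρ ∧ 0 ≤ ρ ∧ Metric.closedBall c ρ ⊆ K := by
      intro n
      have h : inradius K - 1 / ((n : ℝ) + 1) < sSup S := by
        rw [← hin]
        have : 0 < 1 / ((n : ℝ) + 1) := by positivity
        linarith
      obtain ⟨ρ, ⟨h0, c, hc⟩, hlt⟩ := exists_lt_of_lt_csSup ⟨_, hεS⟩ h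
      exact ⟨c, ρ, hlt, h0, hc⟩
    choose c ρ h1 h2 h3 using step
    obtain ⟨a, -, σ, hσ, hlim⟩ := hcomp.tendsto_subseq (fun n => h3 n (Metric.mem_closedBall_self (h2 n)))
    refine ⟨a, ?_⟩
    have hsub : Metric.ball a (inradius K) ⊆ K := by
      intro z hz
      rw [Metric.mem_ball] at hz
      have ht0 : Filter.Tendsto (fun n : ℕ => 1 / ((σ n : ℝ) + 1)) Filter.atTop (nhds 0) :=
        tendsto_inv_succ.comp hσ.tendsto_atTop
      have hd : Filter.Tendsto (fun n => dist z (c (σ n)) + 1 / ((σ n : ℝ) + 1)) Filter.atTop (nhds (dist z a + 0)) :=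
        ((tendsto_const_nhds (x := z)).dist hlim).add ht0
      rw [add_zero] at hd
      obtain ⟨n, hn⟩ := (hd.eventually (gt_mem_nhds hz)).exists
      apply h3 (σ n)
      rw [Metric.mem_closedBall]
      linarith [h1 (σ n)]
    rw [← closure_ball a hpos.ne']
    exact closure_minimal hsub hcomp.isClosed
  · intro c r' h
    rcases lt_or_ge r' 0 with h' | h'
    · linarith
    · exact le_csSup hbdd ⟨h', c, h⟩

lemma circumradius_spec (K : Set Pl) (hcomp : IsCompact K) (hint : (interior K).Nonempty) :
    0 < circumradius K ∧ (∃ c, K ⊆ Metric.closedBall c (circumradius K)) ∧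
      ∀ c R', 0 ≤ R' → K ⊆ Metric.closedBall c R' → circumradius K ≤ R' := by
  set S := { ρ : ℝ | 0 ≤ ρ ∧ ∃ c : Pl, K ⊆ Metric.closedBall c ρ } with hS
  have hin : circumradius K = sInf S := rfl
  have hbdd : BddBelow S := ⟨0, fun ρ h => h.1⟩
  obtain ⟨D, hD⟩ := hcomp.isBounded.exists_norm_le
  obtain ⟨x, hx⟩ := hint
  have hxK := interior_subset hx
  have hDS : D ∈ S := ⟨(norm_nonneg _).trans (hD x hxK), 0, fun z hz => by simpa using hD z hz⟩
  have h0 : 0 ≤ circumradius K := le_csInf ⟨_, hDS⟩ (fun ρ h => h.1)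
  have hatt : ∃ c, K ⊆ Metric.closedBall c (circumradius K) := by
    have step : ∀ n : ℕ, ∃ c : Pl, ∃ ρ, ρ < circumradius K + 1 / ((n : ℝ) + 1) ∧ K ⊆ Metric.closedBall c ρ := by
      intro n
      have h : sInf S < circumradius K + 1 / ((n : ℝ) + 1) := by
        rw [← hin]
        have : 0 < 1 / ((n : ℝ) + 1) := by positivity
        linarith
      obtain ⟨ρ, ⟨h0, c, hc⟩, hlt⟩ := exists_lt_of_csInf_lt ⟨_, hDS⟩ h
      exact ⟨c, ρ, hlt, hc⟩
    choose c ρ h1 h3 using step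
    have hcb : ∀ n, c n ∈ Metric.closedBall x (circumradius K + 1) := by
      intro n
      have a1 := h3 n hxK
      rw [Metric.mem_closedBall] at a1 ⊢
      rw [dist_comm]
      have : 1 / ((n : ℝ) + 1) ≤ 1 := by
        rw [div_le_one (by positivity)]; linarith [(Nat.cast_nonneg n : (0:ℝ) ≤ n)]
      linarith [h1 n]
    obtain ⟨a, -, σ, hσ, hlim⟩ := (isCompact_closedBall x (circumradius K + 1)).tendsto_subseq hcb
    refine ⟨a, fun z hz => ?_⟩
    rw [Metric.mem_closedBall]
    have ht0 : Filter.Tendsto (fun n : ℕ => 1 / ((σ n : ℝ) + 1)) Filter.atTop (nhds 0) :=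
      tendsto_inv_succ.comp hσ.tendsto_atTop
    have := le_of_tendsto_of_tendsto' ((tendsto_const_nhds (x := z)).dist hlim)
      ((tendsto_const_nhds (x := circumradius K)).add ht0) (fun n => by
        have := h3 (σ n) hz
        rw [Metric.mem_closedBall] at this
        exact this.trans (h1 (σ n)).le)
    simpa using this
  refine ⟨?_, hatt, fun c R' h h' => csInf_le hbdd ⟨h, c, h'⟩⟩
  rcases h0.eq_or_lt with h | h
  · exfalso
    obtain ⟨c, hc⟩ := hatt
    rw [← h, Metric.closedBall_zero] at hc
    obtain ⟨ε, hε, hball⟩ := Metric.isOpen_iff.1 isOpen_interior x hx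
    have h1 : x + (ε / 2) • (EuclideanSpace.single 0 1 : Pl) ∈ K := by
      apply interior_subset
      apply hball
      rw [mem_ball_iff_norm, add_sub_cancel_left, norm_smul, pl_unit, Real.norm_eq_abs, abs_of_pos (by positivity)]
      linarith
    have e1 := hc h1
    have e2 := hc hxK
    rw [mem_singleton_iff] at e1 e2
    rw [e2] at e1
    have h5 : (ε / 2) • (EuclideanSpace.single 0 1 : Pl) = 0 := by simpa using e1
    have h6 := congrArg norm h5
    rw [norm_smul, pl_unit, Real.norm_eq_abs, abs_of_pos (by positivity), norm_zero] at h6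
    linarith
  · exact h

/-- Isometry from the plane to `ℂ` moving `c` to the origin. -/
def toC (c : Pl) : Pl ≃ᵢ ℂ :=
  (IsometryEquiv.addLeft (-c)).trans (Complex.orthonormalBasisOneI.repr.symm).toIsometryEquiv

lemma toC_apply (c z : Pl) : toC c z = Complex.orthonormalBasisOneI.repr.symm (-c + z) := rfl

lemma toC_self (c : Pl) : toC c c = 0 := by simp [toC_apply]

lemma toC_volume (c : Pl) (K : Set Pl) : volume (toC c '' K) = volume K := by
  have h : MeasurePreserving (toC c) volume volume :=
    (Complex.orthonormalBasisOneI.repr.symm.measurePreserving).comp (measurePreserving_add_left volume (-c))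
  rw [← h.measure_preimage_emb (toC c).toHomeomorph.measurableEmbedding, preimage_image_eq _ (toC c).injective]

lemma toC_convex (c : Pl) (K : Set Pl) (hK : Convex ℝ K) : Convex ℝ (toC c '' K) := by
  have : toC c '' K = Complex.orthonormalBasisOneI.repr.symm.toLinearEquiv.toLinearMap '' ((fun z => -c + z) '' K) := by
    rw [image_image]; rfl
  rw [this]
  exact (hK.translate (-c)).linear_image _

lemma bonnesen_at (K : Set Pl)
    (hcomp : IsCompact K) (hconv : Convex ℝ K) (hint : (interior K).Nonempty)
    (γ : ℝ → Pl)
    (hγcont : ContinuousOn γ (Set.Icc 0 1))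
    (hγclosed : γ 0 = γ 1)
    (hγinj : Set.InjOn γ (Set.Ico 0 1))
    (hγimg : γ '' Set.Icc 0 1 = frontier K) (ρ : ℝ) (hρ : 0 < ρ) (c : Pl)
    (hgap : ∀ θ, ∃ t, Touch (toC c '' K) ρ t ∧ t ∈ Icc θ (θ + Real.pi)) :
    (volume K).toReal + Real.pi * ρ ^ 2 ≤ ρ * (eVariationOn γ (Set.Icc 0 1)).toReal := by
  have hMc : IsCompact (toC c '' K) := hcomp.image (toC c).continuous
  have hMv := toC_convex c K hconv
  have hfr : toC c '' frontier K = frontier (toC c '' K) := (toC c).toHomeomorph.image_frontier K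
  have hin : toC c '' interior K = interior (toC c '' K) := (toC c).toHomeomorph.image_interior K
  have hMi : (interior (toC c '' K)).Nonempty := hin ▸ hint.image _
  have hgc : ContinuousOn (fun t => toC c (γ t)) (Icc 0 1) := (toC c).continuous.comp_continuousOn hγcont
  have himg : (fun t => toC c (γ t)) '' Icc 0 1 = frontier (toC c '' K) := by
    rw [← hfr, ← hγimg, image_image]
  have hvar : eVariationOn (fun t => toC c (γ t)) (Icc 0 1) = eVariationOn γ (Icc 0 1) := by
    simp only [eVariationOn, (toC c).isometry.edist_eq]
  have hfin := variation_finite _ hMc hMv hMi _ hgc ((toC c).injective.comp_injOn hγinj) himg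
  have hlen := length_bound _ hMc (hMi.mono interior_subset) _ hgc (by simp only [hγclosed]) himg.symm.subset hfin
  have hcore := bonnesen_core _ hMc hMv ρ hρ hgap
  rw [toC_volume] at hcore
  rw [hvar] at hlen
  exact hcore.trans (mul_le_mul_of_nonneg_left hlen hρ.le)

/-- **A Bonnesen-type inequality.**  Let `K ⊆ ℝ²` be a compact convex set with nonempty
interior, of area `A`, boundary length `L`, circumradius `R` and inradius `r`; the
boundary length is the total variation of a continuous closed parametrization of the
topological boundary of `K`, injective on `[0,1)`.  Then `L² − 4πA ≥ A²(1/r − 1/R)²`. -/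
theorem bonnesen_type_inequality_inradius_circumradius (K : Set (EuclideanSpace ℝ (Fin 2)))
    (hcomp : IsCompact K) (hconv : Convex ℝ K) (hint : (interior K).Nonempty)
    (γ : ℝ → EuclideanSpace ℝ (Fin 2))
    (hγcont : ContinuousOn γ (Set.Icc 0 1))
    (hγclosed : γ 0 = γ 1)
    (hγinj : Set.InjOn γ (Set.Ico 0 1))
    (hγimg : γ '' Set.Icc 0 1 = frontier K)
    (L : ℝ) (hL : L = (eVariationOn γ (Set.Icc 0 1)).toReal) :
    (volume K).toReal ^ 2 * (1 / inradius K - 1 / circumradius K) ^ 2 ≤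
      L ^ 2 - 4 * Real.pi * (volume K).toReal := by
  obtain ⟨hr, ⟨c, hc⟩, hrmax⟩ := inradius_spec K hcomp hint
  obtain ⟨hR, ⟨d, hd⟩, hRmin⟩ := circumradius_spec K hcomp hint
  have h1 := bonnesen_at K hcomp hconv hint γ hγcont hγclosed hγinj hγimg (inradius K) hr c (by
    apply in_touch _ (hcomp.image (toC c).continuous) (toC_convex c K hconv) _ hr
    · rw [← toC_self c, ← (toC c).image_closedBall]
      exact image_mono hc
    · intro z r' hz
      apply hrmax ((toC c).symm z) r'
      rw [← (toC c).preimage_closedBall]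
      intro w hw
      obtain ⟨k, hk, e⟩ := hz hw
      exact (toC c).injective e ▸ hk)
  have h2 := bonnesen_at K hcomp hconv hint γ hγcont hγclosed hγinj hγimg (circumradius K) hR d (by
    apply circ_touch _ (hcomp.image (toC d).continuous) _ hR
    · rw [← toC_self d, ← (toC d).image_closedBall]
      exact image_mono hd
    · intro z r' h0 hz
      apply hRmin ((toC d).symm z) r' h0
      rw [← (toC d).preimage_closedBall]
      exact fun k hk => hz (mem_image_of_mem _ hk))
  rw [← hL] at h1 h2
  set A := (volume K).toReal with hA
  have hA0 : 0 ≤ A := ENNReal.toReal_nonneg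
  set r := inradius K
  set R := circumradius K
  set x := 1 / r with hx
  set y := 1 / R with hy
  have hx0 : 0 < x := by positivity
  have hy0 : 0 < y := by positivity
  have q1 : A * x ^ 2 - L * x + Real.pi ≤ 0 := by
    have : A * x ^ 2 - L * x + Real.pi = (A + Real.pi * r ^ 2 - r * L) * x ^ 2 := by
      rw [hx]; field_simp; ring
    rw [this]
    exact mul_nonpos_of_nonpos_of_nonneg (by linarith) (by positivity)
  have q2 : A * y ^ 2 - L * y + Real.pi ≤ 0 := by
    have : A * y ^ 2 - L * y + Real.pi = (A + Real.pi * R ^ 2 - R * L) * y ^ 2 := by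
      rw [hy]; field_simp; ring
    rw [this]
    exact mul_nonpos_of_nonpos_of_nonneg (by linarith) (by positivity)
  -- both numbers lie between the roots of the quadratic
  have Q1 : (2 * A * x - L) ^ 2 ≤ L ^ 2 - 4 * Real.pi * A := by nlinarith
  have Q2 : (2 * A * y - L) ^ 2 ≤ L ^ 2 - 4 * Real.pi * A := by nlinarith
  nlinarith [sq_nonneg ((2 * A * x - L) + (2 * A * y - L))]
end
end
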